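/- In the limiting case p = 1 the VSI theorem reduces to: a vector field ℓ on an n-dimensional Lorentzian spacetime (M, g) is VSI (all scalar polynomial invariants constructed from the 1-form ℓ_a and its covariant derivatives of arbitrary order vanish) if and only if ℓ is a Kundt null vector field which is affinely parameterized, and g is a degenerate Kundt metric with respect to ℓ. -/

import Mathlib

open scoped BigOperators

noncomputable section

namespace VSI

/-! ### Basic setup: tensor fields on an `n`-dimensional coordinate chart -/

/-- A point of an `n`-dimensional coordinate chart. -/
abbrev Pt (n : ℕ) := Fin n → ℝ

/-- A covariant tensor field of rank `k`, given by its components. -/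
abbrev TensorField (n k : ℕ) := Pt n → (Fin k → Fin n) → ℝ

/-- A vector field, given by its components. -/
abbrev VecField (n : ℕ) := Pt n → Fin n → ℝ

/-- A field of `n × n` matrices (e.g. a metric). -/
abbrev MetricField (n : ℕ) := Pt n → Matrix (Fin n) (Fin n) ℝ

/-- Partial derivative of a scalar function along the `a`-th coordinate. -/
def pd {n : ℕ} (f : Pt n → ℝ) (a : Fin n) (x : Pt n) : ℝ :=
  fderiv ℝ f x (Pi.single a 1)

/-- Partial derivative masked to the transverse directions (coordinates `≥ 2`). -/
def pdT {n : ℕ} (f : Pt n → ℝ) (a : Fin n) (x : Pt n) : ℝ :=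
  if 2 ≤ (a : ℕ) then pd f a x else 0

/-- A function on the chart is independent of the coordinate `r` (coordinate number 1). -/
def IndepOfR {n : ℕ} {α : Type*} (f : Pt n → α) : Prop :=
  ∀ x x' : Pt n, (∀ i : Fin n, (i : ℕ) ≠ 1 → x i = x' i) → f x = f x'

/-- A smooth symmetric metric of Lorentzian signature `(-,+,…,+)`. -/
def IsLorentzMetric {n : ℕ} (g : MetricField n) : Prop :=
  (∀ a b, ContDiff ℝ (⊤ : ℕ∞) fun x => g x a b) ∧ (∀ x, (g x).IsSymm) ∧
  (∀ x, ∃ P : Matrix (Fin n) (Fin n) ℝ, IsUnit P.det ∧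
    P.transpose * g x * P = Matrix.diagonal fun i : Fin n => if (i : ℕ) = 0 then (-1 : ℝ) else 1)

/-- Metric pairing of two vectors at a point. -/
def gdot {n : ℕ} (g : MetricField n) (x : Pt n) (X Y : Fin n → ℝ) : ℝ :=
  ∑ a, ∑ b, g x a b * X a * Y b

/-- Index lowering of a vector field. -/
def lower {n : ℕ} (g : MetricField n) (ℓ : VecField n) (x : Pt n) (a : Fin n) : ℝ :=
  ∑ b, g x a b * ℓ x b

/-- The 1-form (rank-1 covariant tensor field) associated with a vector field. -/
def lowerField {n : ℕ} (g : MetricField n) (ℓ : VecField n) : TensorField n 1 :=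
  fun x idx => lower g ℓ x (idx 0)

/-- Christoffel symbols `Γ^a_{bc}` of the Levi-Civita connection of `g`. -/
def christoffel {n : ℕ} (g : MetricField n) (x : Pt n) (a b c : Fin n) : ℝ :=
  (1/2) * ∑ d, (g x)⁻¹ a d *
    (pd (fun y => g y d c) b x + pd (fun y => g y b d) c x - pd (fun y => g y b c) d x)

/-- Covariant derivative of a covariant tensor field; the new (derivative) index is
the first index of the result. -/
def covD {n k : ℕ} (g : MetricField n) (T : TensorField n k) : TensorField n (k+1) :=
  fun x idx =>
    pd (fun y => T y fun m => idx m.succ) (idx 0) x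
    - ∑ m : Fin k, ∑ e : Fin n,
        christoffel g x e (idx 0) (idx m.succ) * T x (Function.update (fun m' => idx m'.succ) m e)

/-- Iterated covariant derivative. -/
def covDIter {n k : ℕ} (g : MetricField n) (T : TensorField n k) : (I : ℕ) → TensorField n (k + I)
  | 0 => T
  | I + 1 => covD g (covDIter g T I)

/-! ### Scalar polynomial invariants and tensor concomitants -/

/-- A scheme describing a polynomial concomitant of a rank-`k` tensor field: a full
metric contraction of a tensor product of covariant derivatives (of orders `ord j`)
of the field, with `r` free indices left over.  `m` is the number of contracted
index pairs; `slots` enumerates all index slots of the tensor product. -/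
structure ConcomScheme (k r : ℕ) where
  N : ℕ
  hN : 0 < N
  ord : Fin N → ℕ
  m : ℕ
  slots : ((Fin m × Bool) ⊕ Fin r) ≃ (Σ j : Fin N, Fin (k + ord j))

/-- The value of a concomitant scheme: all contracted index pairs are contracted with
the inverse metric. -/
def ConcomScheme.value {k r : ℕ} (S : ConcomScheme k r) {n : ℕ} (g : MetricField n)
    (T : TensorField n k) : TensorField n r := fun x free =>
  ∑ φ : Fin S.m × Bool → Fin n,
    (∏ i : Fin S.m, (g x)⁻¹ (φ (i, false)) (φ (i, true))) *
    ∏ j : Fin S.N, covDIter g T (S.ord j) x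
      (fun s => Sum.elim φ free (S.slots.symm ⟨j, s⟩))

/-- All scalar polynomial invariants constructed from `T` and its covariant
derivatives up to order `I` vanish. -/
def IsVSIUpTo {n k : ℕ} (g : MetricField n) (T : TensorField n k) (I : ℕ) : Prop :=
  ∀ S : ConcomScheme k 0, (∀ j, S.ord j ≤ I) → ∀ x v, S.value g T x v = 0

/-- All scalar polynomial invariants of arbitrary order vanish. -/
def IsVSI {n k : ℕ} (g : MetricField n) (T : TensorField n k) : Prop :=
  ∀ I : ℕ, IsVSIUpTo g T I

/-- All zeroth order scalar polynomial invariants of `T` vanish at the point `x`. -/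
def IsVSI0At {n k : ℕ} (g : MetricField n) (T : TensorField n k) (x : Pt n) : Prop :=
  ∀ S : ConcomScheme k 0, (∀ j, S.ord j = 0) → ∀ v, S.value g T x v = 0

/-- A rank-`r` tensor field `G` is (polynomially) constructed from `T`, its covariant
derivatives of arbitrary order and the metric. -/
def IsConstructedFrom {n k r : ℕ} (g : MetricField n) (T : TensorField n k)
    (G : TensorField n r) : Prop :=
  G ∈ Submodule.span ℝ {G' : TensorField n r | ∃ S : ConcomScheme k r, G' = S.value g T}

/-- A symmetric-2-tensor "correction" to the standard electromagnetic energy-momentum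
tensor: constructed from `T` and its covariant derivatives, where each monomial either
contains at least three factors of the field or at least one covariant derivative
(i.e. it comes from a non-Maxwellian term of a generalized electrodynamics). -/
def IsCorrectionTensor {n k : ℕ} (g : MetricField n) (T : TensorField n k)
    (Tc : TensorField n 2) : Prop :=
  Tc ∈ Submodule.span ℝ {G : TensorField n 2 |
    ∃ S : ConcomScheme k 2, (3 ≤ S.N ∨ ∃ j, 1 ≤ S.ord j) ∧ G = S.value g T}

/-! ### p-forms, type N, Lie derivative -/

def IsAlternating {n k : ℕ} (T : TensorField n k) : Prop :=
  ∀ (x : Pt n) (idx : Fin k → Fin n) (σ : Equiv.Perm (Fin k)),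
    T x (idx ∘ σ) = ((Equiv.Perm.sign σ : ℤ) : ℝ) * T x idx

def IsSmoothT {n k : ℕ} (T : TensorField n k) : Prop :=
  ∀ idx, ContDiff ℝ (⊤ : ℕ∞) fun x => T x idx

/-- A smooth differential form (totally antisymmetric covariant tensor field). -/
def IsFormField {n k : ℕ} (T : TensorField n k) : Prop :=
  IsSmoothT T ∧ IsAlternating T

def IsSmoothVec {n : ℕ} (ℓ : VecField n) : Prop :=
  ∀ a, ContDiff ℝ (⊤ : ℕ∞) fun x => ℓ x a

/-- A (nowhere vanishing, smooth) null vector field. -/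
def IsNullField {n : ℕ} (g : MetricField n) (ℓ : VecField n) : Prop :=
  IsSmoothVec ℓ ∧ (∀ x, ℓ x ≠ 0) ∧ ∀ x, gdot g x (ℓ x) (ℓ x) = 0

/-- `ℓ^a F_{a b₁ … b_{p-1}} = 0`. -/
def ContractsFirstZero {n p : ℕ} [NeZero p] (ℓ : VecField n) (F : TensorField n p) : Prop :=
  ∀ (x : Pt n) (v : Fin p → Fin n), (∑ a, ℓ x a * F x (Function.update v 0 a)) = 0

/-- `ℓ_{[a} F_{b₁ … b_p]} = 0`. -/
def WedgeWithZero {n p : ℕ} (g : MetricField n) (ℓ : VecField n) (F : TensorField n p) : Prop :=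
  ∀ (x : Pt n) (idx : Fin (p+1) → Fin n),
    (∑ σ : Equiv.Perm (Fin (p+1)), ((Equiv.Perm.sign σ : ℤ) : ℝ) *
      (lower g ℓ x (idx (σ 0)) * F x (fun m => idx (σ m.succ)))) = 0

/-- The `p`-form `F` is of type N with multiple null direction `ℓ`. -/
def IsTypeN {n p : ℕ} [NeZero p] (g : MetricField n) (F : TensorField n p)
    (ℓ : VecField n) : Prop :=
  IsNullField g ℓ ∧ ContractsFirstZero ℓ F ∧ WedgeWithZero g ℓ F

/-- Lie derivative of a covariant tensor field along a vector field. -/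
def lieD {n k : ℕ} (ℓ : VecField n) (T : TensorField n k) : TensorField n k :=
  fun x idx =>
    (∑ a, ℓ x a * pd (fun y => T y idx) a x)
    + ∑ m : Fin k, ∑ a, pd (fun y => ℓ y a) (idx m) x * T x (Function.update idx m a)

/-! ### Optical properties: geodesic, Kundt -/

/-- `∇_b ℓ_a` (first index is the derivative index). -/
def nablaLow {n : ℕ} (g : MetricField n) (ℓ : VecField n) (x : Pt n) (b a : Fin n) : ℝ :=
  covD g (lowerField g ℓ) x ![b, a]

/-- `ℓ` is geodesic: `ℓ^b ∇_b ℓ_a ∝ ℓ_a`. -/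
def IsGeodesicField {n : ℕ} (g : MetricField n) (ℓ : VecField n) : Prop :=
  ∀ x, ∃ c : ℝ, ∀ a, (∑ b, ℓ x b * nablaLow g ℓ x b a) = c * lower g ℓ x a

/-- `ℓ` is affinely parameterized: `ℓ^b ∇_b ℓ_a = 0`. -/
def IsAffinelyParam {n : ℕ} (g : MetricField n) (ℓ : VecField n) : Prop :=
  ∀ x a, (∑ b, ℓ x b * nablaLow g ℓ x b a) = 0

/-- `ℓ` is a Kundt null vector field: null, geodesic and with vanishing optical matrix
(expansion-free, shear-free and twist-free). -/
def IsKundt {n : ℕ} (g : MetricField n) (ℓ : VecField n) : Prop :=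
  IsNullField g ℓ ∧ IsGeodesicField g ℓ ∧
  ∀ (x : Pt n) (X Y : Fin n → ℝ), gdot g x X (ℓ x) = 0 → gdot g x Y (ℓ x) = 0 →
    (∑ a, ∑ b, X a * Y b * nablaLow g ℓ x b a) = 0

/-! ### Curvature -/

/-- Fully lowered Riemann tensor `R_{abcd}`. -/
def riemann {n : ℕ} (g : MetricField n) : TensorField n 4 := fun x idx =>
  ∑ e, g x (idx 0) e *
    (pd (fun y => christoffel g y e (idx 3) (idx 1)) (idx 2) x
     - pd (fun y => christoffel g y e (idx 2) (idx 1)) (idx 3) x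
     + ∑ f', (christoffel g x e (idx 2) f' * christoffel g x f' (idx 3) (idx 1)
            - christoffel g x e (idx 3) f' * christoffel g x f' (idx 2) (idx 1)))

def ricci {n : ℕ} (g : MetricField n) (x : Pt n) (b d : Fin n) : ℝ :=
  ∑ a, ∑ c, (g x)⁻¹ a c * riemann g x ![a, b, c, d]

def ricciScalar {n : ℕ} (g : MetricField n) (x : Pt n) : ℝ :=
  ∑ b, ∑ d, (g x)⁻¹ b d * ricci g x b d

def tracelessRicci {n : ℕ} (g : MetricField n) : TensorField n 2 := fun x idx =>
  ricci g x (idx 0) (idx 1) - ricciScalar g x / (n : ℝ) * g x (idx 0) (idx 1)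

/-- Weyl tensor `C_{abcd}` (for `n ≥ 3`). -/
def weyl {n : ℕ} (g : MetricField n) : TensorField n 4 := fun x idx =>
  riemann g x idx
  - (1 / ((n : ℝ) - 2)) *
      (g x (idx 0) (idx 2) * ricci g x (idx 3) (idx 1)
       - g x (idx 0) (idx 3) * ricci g x (idx 2) (idx 1)
       - g x (idx 1) (idx 2) * ricci g x (idx 3) (idx 0)
       + g x (idx 1) (idx 3) * ricci g x (idx 2) (idx 0))
  + (1 / (((n : ℝ) - 1) * ((n : ℝ) - 2))) * ricciScalar g x *
      (g x (idx 0) (idx 2) * g x (idx 3) (idx 1) - g x (idx 0) (idx 3) * g x (idx 2) (idx 1))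

/-! ### Null frames, boost weights, algebraic types -/

/-- A null frame at a point: two null vectors `e 0 = ℓ`, `e 1 = n` with `ℓ·n = 1`, and
orthonormal spacelike vectors `e i`, `i ≥ 2`, orthogonal to both. -/
structure NullFrameAt {n : ℕ} [NeZero n] (g : MetricField n) (x : Pt n) where
  e : Fin n → Fin n → ℝ
  h00 : gdot g x (e 0) (e 0) = 0
  h11 : gdot g x (e 1) (e 1) = 0
  h01 : gdot g x (e 0) (e 1) = 1
  h0i : ∀ i : Fin n, 2 ≤ (i : ℕ) → gdot g x (e 0) (e i) = 0
  h1i : ∀ i : Fin n, 2 ≤ (i : ℕ) → gdot g x (e 1) (e i) = 0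
  hij : ∀ i j : Fin n, 2 ≤ (i : ℕ) → 2 ≤ (j : ℕ) →
    gdot g x (e i) (e j) = (if i = j then 1 else 0)

/-- Boost weight of a frame multi-index: `+1` for each contraction with `ℓ = e 0`,
`-1` for each contraction with `n = e 1`. -/
def bw {n k : ℕ} (a : Fin k → Fin n) : ℤ :=
  ((Finset.univ.filter fun m => (a m : ℕ) = 0).card : ℤ)
  - ((Finset.univ.filter fun m => (a m : ℕ) = 1).card : ℤ)

/-- Frame components of a covariant tensor. -/
def frameComp {n k : ℕ} (T : TensorField n k) (e : Fin n → Fin n → ℝ) (x : Pt n)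
    (a : Fin k → Fin n) : ℝ :=
  ∑ idx : Fin k → Fin n, T x idx * ∏ m, e (a m) (idx m)

/-- The tensor field `T` has boost order at most `b` with respect to the null
direction `ℓ`: in any null frame containing `ℓ`, all frame components of boost
weight `> b` vanish.  `b = 0` is the aligned type II condition, `b = -1` type III. -/
def BoostOrderLE {n k : ℕ} [NeZero n] (g : MetricField n) (ℓ : VecField n)
    (T : TensorField n k) (b : ℤ) : Prop :=
  ∀ (x : Pt n) (fr : NullFrameAt g x), fr.e 0 = ℓ x →
    ∀ a : Fin k → Fin n, b < bw a → frameComp T fr.e x a = 0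

/-- `g` is a degenerate Kundt metric with Kundt null direction `ℓ`: `ℓ` is Kundt and
the Riemann tensor together with its covariant derivatives of all orders is of aligned
type II with respect to `ℓ`. -/
def IsDegenerateKundt {n : ℕ} [NeZero n] (g : MetricField n) (ℓ : VecField n) : Prop :=
  IsKundt g ℓ ∧ ∀ I : ℕ, BoostOrderLE g ℓ (covDIter g (riemann g) I) 0

/-! ### Exterior derivative, Hodge dual, Maxwell equations -/

/-- Exterior derivative (components, no normalization factor). -/
def extD {n k : ℕ} (F : TensorField n k) : TensorField n (k+1) := fun x idx =>
  ∑ m : Fin (k+1), (-1 : ℝ) ^ (m : ℕ) *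
    pd (fun y => F y fun i => idx (m.succAbove i)) (idx m) x

/-- Sign of a self-map of `Fin k` (0 if not bijective). -/
def permSign {k : ℕ} (f : Fin k → Fin k) : ℤ :=
  if h : Function.Bijective f then Equiv.Perm.sign (Equiv.ofBijective f h) else 0

/-- Raise all indices of a covariant tensor with the inverse metric. -/
def raiseAll {n k : ℕ} (g : MetricField n) (T : TensorField n k) : TensorField n k :=
  fun x idx => ∑ jdx : Fin k → Fin n, (∏ m, (g x)⁻¹ (idx m) (jdx m)) * T x jdx

/-- Hodge dual of a `p`-form (`p + q = n`), via the metric volume element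
`√|det g| ε_{a₁…aₙ}`. -/
def hodge {n p q : ℕ} (h : p + q = n) (g : MetricField n) (F : TensorField n p) :
    TensorField n q := fun x idx =>
  (1 / (Nat.factorial p : ℝ)) *
    ∑ a : Fin p → Fin n, raiseAll g F x a *
      (Real.sqrt |(g x).det| *
        ((permSign fun i => Fin.append a idx (Fin.cast h.symm i) : ℤ) : ℝ))

/-- Source-free Maxwell equations `dF = 0 = d*F` for a `p`-form (`p + q = n`). -/
def MaxwellEqs {n p q : ℕ} (h : p + q = n) (g : MetricField n) (F : TensorField n p) : Prop :=
  (∀ x idx, extD F x idx = 0) ∧ (∀ x idx, extD (hodge h g F) x idx = 0)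

/-! ### Wedge products -/

def wedgeP {n a b : ℕ} (F : TensorField n a) (G : TensorField n b) : TensorField n (a+b) :=
  fun x idx => ∑ σ : Equiv.Perm (Fin (a+b)), ((Equiv.Perm.sign σ : ℤ) : ℝ) *
    (F x fun i => idx (σ (Fin.castAdd b i))) * (G x fun j => idx (σ (Fin.natAdd a j)))

def wedgePow {n p : ℕ} (F : TensorField n p) : (k : ℕ) → TensorField n (p * k)
  | 0 => fun _ _ => 1
  | k + 1 => wedgeP (wedgePow F k) F

def castT {n a b : ℕ} (h : a = b) (T : TensorField n a) : TensorField n b :=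
  fun x idx => T x fun i => idx (Fin.cast h i)

/-! ### Degenerate Kundt metrics in adapted coordinates -/

/-- The Kundt metric `ds² = 2 du (dr + H du + W_α dx^α) + g_{αβ} dx^α dx^β` in
coordinates `(u, r, x^α) = (x⁰, x¹, x^{α≥2})`. -/
def kundtMetric {n : ℕ} (H : Pt n → ℝ) (W : Pt n → Fin n → ℝ) (hT : MetricField n) :
    MetricField n := fun x => Matrix.of fun a b =>
  if (a : ℕ) = 0 ∧ (b : ℕ) = 0 then 2 * H x
  else if ((a : ℕ) = 0 ∧ (b : ℕ) = 1) ∨ ((a : ℕ) = 1 ∧ (b : ℕ) = 0) then 1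
  else if (a : ℕ) = 0 then W x b
  else if (b : ℕ) = 0 then W x a
  else if (a : ℕ) = 1 ∨ (b : ℕ) = 1 then 0
  else hT x a b

/-- A transverse (Riemannian) metric `g_{αβ}(u,x)`, stored as an `n×n` matrix padded
by the identity on the coordinates `u, r`. -/
def IsTransverseMetric {n : ℕ} (hT : MetricField n) : Prop :=
  (∀ (x : Pt n) (a b : Fin n), ((a : ℕ) < 2 ∨ (b : ℕ) < 2) → hT x a b = (if a = b then 1 else 0)) ∧
  (∀ x, (hT x).IsSymm) ∧ (∀ a b, ContDiff ℝ (⊤ : ℕ∞) fun x => hT x a b) ∧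
  IndepOfR hT ∧ (∀ x, (hT x).PosDef)

/-- Data of a degenerate Kundt metric: `W_α = r W¹_α + W⁰_α`,
`H = r² H² + r H¹ + H⁰`, transverse metric `hT`. -/
structure DegKundtData (n : ℕ) where
  H2 : Pt n → ℝ
  H1 : Pt n → ℝ
  H0 : Pt n → ℝ
  W1 : Pt n → Fin n → ℝ
  W0 : Pt n → Fin n → ℝ
  hT : MetricField n

def DegKundtData.Hfun {n : ℕ} [NeZero n] (D : DegKundtData n) : Pt n → ℝ :=
  fun z => (z 1)^2 * D.H2 z + z 1 * D.H1 z + D.H0 z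

def DegKundtData.Wfun {n : ℕ} [NeZero n] (D : DegKundtData n) : Pt n → Fin n → ℝ :=
  fun z b => z 1 * D.W1 z b + D.W0 z b

/-- The degenerate Kundt metric built from the data. -/
def DegKundtData.metric {n : ℕ} [NeZero n] (D : DegKundtData n) : MetricField n :=
  kundtMetric D.Hfun D.Wfun D.hT

/-- Regularity and shape conditions on the degenerate Kundt data: the metric functions
depend only on `(u, x^α)` and are smooth, `W`'s are transverse. -/
def DegKundtData.Regular {n : ℕ} (D : DegKundtData n) : Prop :=
  IsTransverseMetric D.hT ∧
  IndepOfR D.H2 ∧ IndepOfR D.H1 ∧ IndepOfR D.H0 ∧ IndepOfR D.W1 ∧ IndepOfR D.W0 ∧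
  ContDiff ℝ (⊤ : ℕ∞) D.H2 ∧ ContDiff ℝ (⊤ : ℕ∞) D.H1 ∧ ContDiff ℝ (⊤ : ℕ∞) D.H0 ∧
  (∀ a, ContDiff ℝ (⊤ : ℕ∞) fun x => D.W1 x a) ∧ (∀ a, ContDiff ℝ (⊤ : ℕ∞) fun x => D.W0 x a) ∧
  (∀ (x : Pt n) (a : Fin n), (a : ℕ) < 2 → D.W1 x a = 0) ∧ (∀ (x : Pt n) (a : Fin n), (a : ℕ) < 2 → D.W0 x a = 0)

/-- The `(q+1)`-form `du ∧ f` built from a transverse `q`-form `f`. -/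
def duWedge {n q : ℕ} (f : TensorField n q) : TensorField n (q+1) := fun x idx =>
  ∑ m : Fin (q+1), (-1 : ℝ) ^ (m : ℕ) * (if (idx m : ℕ) = 0 then 1 else 0) *
    f x (fun i => idx (m.succAbove i))

/-- `f_{[α₂…α_p , α₁]} = 0`: `f` is closed in the transverse geometry. -/
def TransClosed {n q : ℕ} (f : TensorField n q) : Prop :=
  ∀ (x : Pt n) (v : Fin (q+1) → Fin n), (∀ i, 2 ≤ (v i : ℕ)) →
    (∑ m : Fin (q+1), (-1 : ℝ) ^ (m : ℕ) *
      pd (fun y => f y fun i => v (m.succAbove i)) (v m) x) = 0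

/-- `(√g̃ f^{β α₁…α_{p-2}})_{,β} = 0`: `f` is co-closed in the transverse geometry. -/
def TransCoclosed {n q : ℕ} [NeZero q] (hT : MetricField n) (f : TensorField n q) : Prop :=
  ∀ (x : Pt n) (v : Fin q → Fin n),
    (∑ b : Fin n, pd (fun y =>
      Real.sqrt (hT y).det * raiseAll hT f y (Function.update v 0 b)) b x) = 0

/-! ### Transverse curvature -/

def christoffelT {n : ℕ} (h : MetricField n) (x : Pt n) (a b c : Fin n) : ℝ :=
  (1/2) * ∑ d, (h x)⁻¹ a d *
    (pdT (fun y => h y d c) b x + pdT (fun y => h y b d) c x - pdT (fun y => h y b c) d x)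

def covDT {n k : ℕ} (h : MetricField n) (T : TensorField n k) : TensorField n (k+1) :=
  fun x idx =>
    pdT (fun y => T y fun m => idx m.succ) (idx 0) x
    - ∑ m : Fin k, ∑ e : Fin n,
        christoffelT h x e (idx 0) (idx m.succ) * T x (Function.update (fun m' => idx m'.succ) m e)

def riemannT {n : ℕ} (h : MetricField n) : TensorField n 4 := fun x idx =>
  ∑ e, h x (idx 0) e *
    (pdT (fun y => christoffelT h y e (idx 3) (idx 1)) (idx 2) x
     - pdT (fun y => christoffelT h y e (idx 2) (idx 1)) (idx 3) x
     + ∑ f', (christoffelT h x e (idx 2) f' * christoffelT h x f' (idx 3) (idx 1)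
            - christoffelT h x e (idx 3) f' * christoffelT h x f' (idx 2) (idx 1)))

def ricciT {n : ℕ} (h : MetricField n) (x : Pt n) (b d : Fin n) : ℝ :=
  ∑ a, ∑ c, (h x)⁻¹ a c * riemannT h x ![a, b, c, d]

def ricciScalarT {n : ℕ} (h : MetricField n) (x : Pt n) : ℝ :=
  ∑ b, ∑ d, (h x)⁻¹ b d * ricciT h x b d

/-- A covector field as a rank-1 tensor field. -/
def oneForm {n : ℕ} (W : Pt n → Fin n → ℝ) : TensorField n 1 := fun x idx => W x (idx 0)

/-- Transverse covariant derivative `∇̃_b V_a` (`= V_{a||b}`). -/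
def nablaT {n : ℕ} (h : MetricField n) (V : TensorField n 1) (x : Pt n) (b a : Fin n) : ℝ :=
  covDT h V x ![b, a]

/-- Second transverse covariant derivative `∇̃_c ∇̃_b V_a`. -/
def nablaT2 {n : ℕ} (h : MetricField n) (V : TensorField n 1) (x : Pt n) (c b a : Fin n) : ℝ :=
  covDT h (covDT h V) x ![c, b, a]

/-- Transverse divergence `V^{α}{}_{||α}`. -/
def divT {n : ℕ} (h : MetricField n) (V : TensorField n 1) (x : Pt n) : ℝ :=
  ∑ b, ∑ c, (h x)⁻¹ b c * nablaT h V x b c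

def gradT {n : ℕ} (f : Pt n → ℝ) : TensorField n 1 := fun x idx => pdT f (idx 0) x

/-- Transverse Laplacian. -/
def laplaceT {n : ℕ} (h : MetricField n) (f : Pt n → ℝ) (x : Pt n) : ℝ :=
  ∑ a, ∑ b, (h x)⁻¹ a b * covDT h (gradT f) x ![a, b]

def lnSqrtDet {n : ℕ} (h : MetricField n) (y : Pt n) : ℝ :=
  Real.log (Real.sqrt (h y).det)

/-! ### Electromagnetic energy-momentum tensor -/

/-- Standard energy-momentum tensor of a `(q+1)`-form Maxwell field:
`T_{ab} = (1/q!) (F_{a c⃗} F_b{}^{c⃗} - (1/(2(q+1))) g_{ab} F_{c⃗}F^{c⃗})`. -/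
def emTensor {n q : ℕ} (g : MetricField n) (F : TensorField n (q+1)) (x : Pt n)
    (a b : Fin n) : ℝ :=
  (1 / (Nat.factorial q : ℝ)) *
    ((∑ v : Fin q → Fin n, F x (Fin.cons a v) *
        ∑ w : Fin q → Fin n, (∏ i, (g x)⁻¹ (v i) (w i)) * F x (Fin.cons b w))
     - (1 / (2 * ((q : ℝ) + 1))) * g x a b *
        ∑ v : Fin (q+1) → Fin n, F x v * raiseAll g F x v)

/-! ### Coordinate transformations (for adapted coordinates) -/

/-- Jacobian `∂ψ^a/∂y^b` of a coordinate change. -/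
def jac {n : ℕ} (ψ : Pt n → Pt n) (y : Pt n) (a b : Fin n) : ℝ :=
  pd (fun z => ψ z a) b y

/-- Pullback of the metric along the coordinate change `ψ` (from new to old coords). -/
def pullMetric {n : ℕ} (g : MetricField n) (ψ : Pt n → Pt n) : MetricField n :=
  fun y => Matrix.of fun μ ν => ∑ a, ∑ b, jac ψ y a μ * jac ψ y b ν * g (ψ y) a b

/-- Pullback of a covariant tensor field along `ψ`. -/
def pullForm {n p : ℕ} (F : TensorField n p) (ψ : Pt n → Pt n) : TensorField n p :=
  fun y idx => ∑ jdx : Fin p → Fin n, (∏ m, jac ψ y (jdx m) (idx m)) * F (ψ y) jdx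

/-! ### Parallelly transported adapted frames -/

/-- A null frame field containing `ℓ`, parallelly transported along `ℓ` and adapted
(`M^i_{jk} = 0`). -/
structure AdaptedPTFrame {n : ℕ} [NeZero n] (g : MetricField n) (ℓ : VecField n) where
  fr : ∀ x : Pt n, NullFrameAt g x
  aligned : ∀ x, (fr x).e 0 = ℓ x
  parallel : ∀ (x : Pt n) (a c : Fin n),
    (∑ b, ℓ x b * (pd (fun y => (fr y).e a c) b x
      + ∑ d, christoffel g x c b d * (fr x).e a d)) = 0
  adapted : ∀ (x : Pt n) (i j k : Fin n), 2 ≤ (i : ℕ) → 2 ≤ (j : ℕ) → 2 ≤ (k : ℕ) →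
    (∑ a, ∑ b, covD g (lowerField g fun z => (fr z).e j) x ![b, a]
      * (fr x).e i a * (fr x).e k b) = 0

/-! ### Explicit Petrov type III solutions -/

/-- The type III vacuum metric of Petrov,
`ds² = 2 du (dr + ½(xr − x eˣ) du) + eˣ(dx² + e^{2u} dy²)`, in coordinates
`(u,r,x,y)`. -/
def petrovG : MetricField 4 := fun z => Matrix.of fun a b =>
  if a = 0 ∧ b = 0 then z 2 * z 1 - z 2 * Real.exp (z 2)
  else if (a = 0 ∧ b = 1) ∨ (a = 1 ∧ b = 0) then 1
  else if a = 2 ∧ b = 2 then Real.exp (z 2)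
  else if a = 3 ∧ b = 3 then Real.exp (z 2 + 2 * z 0)
  else 0

/-- The same metric with the electromagnetic backreaction term
`−2κ₀ eˣ c(u)²` included in `2H`. -/
def petrovEM (κ₀ : ℝ) (c : ℝ → ℝ) : MetricField 4 := fun z => Matrix.of fun a b =>
  if a = 0 ∧ b = 0 then z 2 * z 1 - z 2 * Real.exp (z 2) - 2 * κ₀ * Real.exp (z 2) * (c (z 0))^2
  else if (a = 0 ∧ b = 1) ∨ (a = 1 ∧ b = 0) then 1
  else if a = 2 ∧ b = 2 then Real.exp (z 2)
  else if a = 3 ∧ b = 3 then Real.exp (z 2 + 2 * z 0)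
  else 0

/-- The null direction `ℓ = ∂_r`. -/
def ellR : VecField 4 := fun _ a => if a = 1 then 1 else 0

/-- The transverse covector of the VSI Maxwell field (4). -/
def petrovA (c : ℝ → ℝ) (z : Pt 4) : Fin 4 → ℝ := fun a =>
  if a = 2 then -(Real.exp (z 2 / 2) * c (z 0) * Real.cos (z 3 * Real.exp (z 0) / 2))
  else if a = 3 then Real.exp (z 2 / 2) * c (z 0) * Real.exp (z 0) * Real.sin (z 3 * Real.exp (z 0) / 2)
  else 0

/-- The Maxwell 2-form
`F = e^{x/2} c(u) du ∧ (−cos(y eᵘ/2) dx + eᵘ sin(y eᵘ/2) dy)`. -/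
def petrovF (c : ℝ → ℝ) : TensorField 4 2 := fun z idx =>
  (if idx 0 = 0 then petrovA c z (idx 1) else 0)
  - (if idx 1 = 0 then petrovA c z (idx 0) else 0)

/-!
In a null frame whose first vector is `ℓ`, every complete contraction is a sum of products of frame
components of total boost weight zero, so the invariants of a tensor field all of whose derivatives
have boost order at most `-1` vanish. The covector field `ℓ♭` has boost order `-1`, and `ℓ` is
Kundt and affinely parameterized exactly if `∇ℓ♭` has boost order at most `-1`. Differentiation can
raise the boost order only through the derivative in the direction of `ℓ`. This derivative is
controlled by the commutator of `∇_ℓ` with `∇`, which involves only `∇ℓ♭` and the curvature, and by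
the Riccati equation for `∇_ℓ ∇ℓ♭`; hence the bound on the curvature propagates to all `∇^I ℓ♭`.

Conversely, a frame component of `∇^i ℓ♭` is killed by contracting two copies of the tensor in such
a way that the components already known to vanish leave only a sum of squares; for the acceleration
of `ℓ` the contraction is quartic. For `i ≤ 3` this gives that `ℓ` is Kundt and affinely
parameterized, that `∇_ℓ ∇ℓ♭` has boost order at most `-2` and that `∇_ℓ ∇_ℓ ∇ℓ♭ = 0`. The Ricci
identity and the second Bianchi identity turn this into bounds on the curvature and on its
derivatives along `ℓ`, and the same commutator argument carries them to all derivatives.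
-/

open scoped ContDiff Matrix

/-! ### Partial derivatives -/

section PartialDeriv

variable {n : ℕ} {f h : Pt n → ℝ} {x : Pt n}

@[fun_prop]
lemma contDiff_pd (hf : ContDiff ℝ ∞ f) (a : Fin n) : ContDiff ℝ ∞ (pd f a) := by
  unfold pd
  fun_prop (disch := simp)

lemma pd_const (c : ℝ) (a : Fin n) (x : Pt n) : pd (fun _ => c) a x = 0 := by
  simp [pd]

lemma pd_neg (f : Pt n → ℝ) (a : Fin n) (x : Pt n) : pd (fun y => -f y) a x = -pd f a x := by
  simp [pd, fderiv_fun_neg]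

lemma pd_add (hf : DifferentiableAt ℝ f x) (hh : DifferentiableAt ℝ h x) (a : Fin n) :
    pd (fun y => f y + h y) a x = pd f a x + pd h a x := by
  simp [pd, fderiv_fun_add hf hh]

lemma pd_sub (hf : DifferentiableAt ℝ f x) (hh : DifferentiableAt ℝ h x) (a : Fin n) :
    pd (fun y => f y - h y) a x = pd f a x - pd h a x := by
  simp [pd, fderiv_fun_sub hf hh]

lemma pd_mul (hf : DifferentiableAt ℝ f x) (hh : DifferentiableAt ℝ h x) (a : Fin n) :
    pd (fun y => f y * h y) a x = pd f a x * h x + f x * pd h a x := by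
  simp [pd, fderiv_fun_mul hf hh]
  ring

lemma pd_sum {κ : Type*} {s : Finset κ} {F : κ → Pt n → ℝ}
    (hF : ∀ i ∈ s, DifferentiableAt ℝ (F i) x) (a : Fin n) :
    pd (fun y => ∑ i ∈ s, F i y) a x = ∑ i ∈ s, pd (F i) a x := by
  simp [pd, fderiv_fun_sum hF]

lemma pd_prod {κ : Type*} [DecidableEq κ] {s : Finset κ} {F : κ → Pt n → ℝ}
    (hF : ∀ i ∈ s, DifferentiableAt ℝ (F i) x) (a : Fin n) :
    pd (fun y => ∏ i ∈ s, F i y) a x = ∑ i ∈ s, (∏ j ∈ s.erase i, F j x) * pd (F i) a x := by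
  simp [pd, fderiv_finsetProd hF]

lemma pd_comm (hf : ContDiff ℝ ∞ f) (a b : Fin n) (x : Pt n) :
    pd (pd f a) b x = pd (pd f b) a x := by
  have pd_pd (c d : Fin n) :
      pd (pd f c) d x = fderiv ℝ (fderiv ℝ f) x (Pi.single d 1) (Pi.single c 1) := by
    have hf' : DifferentiableAt ℝ (fderiv ℝ f) x :=
      ((hf.fderiv_right (m := ∞) (by simp)).differentiable (by simp)) x
    change fderiv ℝ (fun y => fderiv ℝ f y (Pi.single c 1)) x (Pi.single d 1) = _
    rw [fderiv_clm_apply hf' (differentiableAt_const _)]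
    simp
  have hsymm : IsSymmSndFDerivAt ℝ f x := by
    refine hf.contDiffAt.isSymmSndFDerivAt ?_
    rw [minSmoothness_of_isRCLikeNormedField]
    exact WithTop.coe_le_coe.2 le_top
  rw [pd_pd, pd_pd, hsymm.eq]

end PartialDeriv

/-! ### Pseudo-Riemannian metrics and Christoffel symbols -/

section MatrixFields

variable {n : ℕ}

/-- The entrywise partial derivative of a field of matrices. -/
def pdMatrix (M : MetricField n) (a : Fin n) (x : Pt n) : Matrix (Fin n) (Fin n) ℝ :=
  Matrix.of fun b c => pd (fun y => M y b c) a x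

lemma contDiff_det {M : MetricField n} (hM : ∀ b c, ContDiff ℝ ∞ fun x => M x b c) :
    ContDiff ℝ ∞ fun x => (M x).det := by
  simp only [Matrix.det_apply]
  fun_prop

lemma contDiff_inv_apply {M : MetricField n} (hM : ∀ b c, ContDiff ℝ ∞ fun x => M x b c)
    (hdet : ∀ x, (M x).det ≠ 0) (b c : Fin n) : ContDiff ℝ ∞ fun x => (M x)⁻¹ b c := by
  have hinv : (fun x => (M x)⁻¹ b c) =
      fun x => ((M x).det)⁻¹ * ((M x).updateRow c (Pi.single b 1)).det := by
    ext x
    rw [Matrix.inv_def, Matrix.smul_apply, Ring.inverse_eq_inv', smul_eq_mul,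
      Matrix.adjugate_apply]
  rw [hinv]
  refine ((contDiff_det hM).inv hdet).mul (contDiff_det fun d e => ?_)
  obtain rfl | hne := eq_or_ne d c
  · simpa only [Matrix.updateRow_self] using contDiff_const
  · simpa only [Matrix.updateRow_ne hne] using hM d e

lemma pdMatrix_mul {M N : MetricField n} (hM : ∀ b c, ContDiff ℝ ∞ fun x => M x b c)
    (hN : ∀ b c, ContDiff ℝ ∞ fun x => N x b c) (a : Fin n) (x : Pt n) :
    pdMatrix (fun y => M y * N y) a x = pdMatrix M a x * N x + M x * pdMatrix N a x := by
  have hM' b c : Differentiable ℝ fun y => M y b c := (hM b c).differentiable (by simp)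
  have hN' b c : Differentiable ℝ fun y => N y b c := (hN b c).differentiable (by simp)
  ext b c
  simp only [pdMatrix, Matrix.of_apply, Matrix.mul_apply, Matrix.add_apply]
  rw [pd_sum fun d _ => by fun_prop, ← Finset.sum_add_distrib]
  exact Finset.sum_congr rfl fun d _ => pd_mul (hM' b d x) (hN' d c x) a

/-- The connection matrix `Γ_a = (Γ^e_{ac})_{ec}`. -/
def connectionMatrix (g : MetricField n) (x : Pt n) (a : Fin n) : Matrix (Fin n) (Fin n) ℝ :=
  Matrix.of fun e c => christoffel g x e a c

/-- A smooth, symmetric and nondegenerate metric, of any signature. -/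
structure IsPseudoRiemannian (g : MetricField n) : Prop where
  contDiff : ∀ a b, ContDiff ℝ ∞ fun x => g x a b
  isSymm : ∀ x, (g x).IsSymm
  det_ne_zero : ∀ x, (g x).det ≠ 0

lemma IsLorentzMetric.isPseudoRiemannian {g : MetricField n} (hg : IsLorentzMetric g) :
    IsPseudoRiemannian g where
  contDiff := hg.1
  isSymm := hg.2.1
  det_ne_zero x hx := by
    obtain ⟨P, -, hP⟩ := hg.2.2 x
    have hdet := congrArg Matrix.det hP
    rw [Matrix.det_mul, Matrix.det_mul, hx, Matrix.det_diagonal, mul_zero, zero_mul] at hdet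
    refine Finset.prod_ne_zero_iff.2 (fun i _ => ?_) hdet.symm
    split_ifs <;> norm_num

namespace IsPseudoRiemannian

variable {g : MetricField n} (hg : IsPseudoRiemannian g)
include hg

lemma apply_symm (x : Pt n) (a b : Fin n) : g x a b = g x b a :=
  (hg.isSymm x).apply b a

lemma inv_mul (x : Pt n) : (g x)⁻¹ * g x = 1 :=
  Matrix.nonsing_inv_mul _ (isUnit_iff_ne_zero.2 (hg.det_ne_zero x))

lemma mul_inv (x : Pt n) : g x * (g x)⁻¹ = 1 :=
  Matrix.mul_nonsing_inv _ (isUnit_iff_ne_zero.2 (hg.det_ne_zero x))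

lemma contDiff_inv (a b : Fin n) : ContDiff ℝ ∞ fun x => (g x)⁻¹ a b :=
  contDiff_inv_apply hg.contDiff hg.det_ne_zero a b

lemma contDiff_christoffel (a b c : Fin n) : ContDiff ℝ ∞ fun x => christoffel g x a b c := by
  have hpd d e f : ContDiff ℝ ∞ fun x => pd (fun y => g y d e) f x :=
    contDiff_pd (hg.contDiff d e) f
  exact contDiff_const.mul (ContDiff.sum fun d _ =>
    (hg.contDiff_inv a d).mul (((hpd d c b).add (hpd b d c)).sub (hpd b c d)))

lemma differentiable_christoffel (a b c : Fin n) :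
    Differentiable ℝ fun x => christoffel g x a b c :=
  (hg.contDiff_christoffel a b c).differentiable (by simp)

lemma christoffel_comm (x : Pt n) (a b c : Fin n) :
    christoffel g x a b c = christoffel g x a c b := by
  have hsymm d e : (fun y => g y d e) = fun y => g y e d := funext fun y => hg.apply_symm y d e
  unfold christoffel
  congr! 3 with d
  rw [hsymm d c, hsymm b d, hsymm b c, add_comm]

lemma mul_connectionMatrix_apply (x : Pt n) (e b c : Fin n) :
    (g x * connectionMatrix g x b) e c = (1 / 2) *
      (pd (fun y => g y e c) b x + pd (fun y => g y b e) c x - pd (fun y => g y b c) e x) := by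
  have hΓ : connectionMatrix g x b = (1 / 2 : ℝ) • ((g x)⁻¹ * Matrix.of fun d c =>
      pd (fun y => g y d c) b x + pd (fun y => g y b d) c x - pd (fun y => g y b c) d x) := by
    ext e c
    simp [connectionMatrix, christoffel, Matrix.mul_apply]
  rw [hΓ, Matrix.mul_smul, ← Matrix.mul_assoc, hg.mul_inv, Matrix.one_mul]
  simp

lemma pdMatrix_metric (x : Pt n) (a : Fin n) :
    pdMatrix g a x = (connectionMatrix g x a)ᵀ * g x + g x * connectionMatrix g x a := by
  have htrans : (connectionMatrix g x a)ᵀ * g x = (g x * connectionMatrix g x a)ᵀ := by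
    rw [Matrix.transpose_mul, (hg.isSymm x).eq]
  ext b c
  rw [htrans, Matrix.add_apply, Matrix.transpose_apply, hg.mul_connectionMatrix_apply,
    hg.mul_connectionMatrix_apply]
  simp only [pdMatrix, Matrix.of_apply, fun y => hg.apply_symm y c b]
  ring

lemma pdMatrix_inv (x : Pt n) (a : Fin n) :
    pdMatrix (fun y => (g y)⁻¹) a x
      = -(connectionMatrix g x a * (g x)⁻¹) - (g x)⁻¹ * (connectionMatrix g x a)ᵀ := by
  set Γ := connectionMatrix g x a
  have hprod : pdMatrix (fun y => (g y)⁻¹) a x * g x + (g x)⁻¹ * pdMatrix g a x = 0 := by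
    rw [← pdMatrix_mul hg.contDiff_inv hg.contDiff]
    simp only [hg.inv_mul]
    ext b c
    exact pd_const _ a x
  calc pdMatrix (fun y => (g y)⁻¹) a x
      = pdMatrix (fun y => (g y)⁻¹) a x * g x * (g x)⁻¹ := by
        rw [Matrix.mul_assoc, hg.mul_inv, Matrix.mul_one]
    _ = -((g x)⁻¹ * (Γᵀ * g x + g x * Γ) * (g x)⁻¹) := by
        rw [eq_neg_of_add_eq_zero_left hprod, hg.pdMatrix_metric, Matrix.neg_mul]
    _ = -((g x)⁻¹ * Γᵀ * (g x * (g x)⁻¹) + (g x)⁻¹ * g x * Γ * (g x)⁻¹) := by noncomm_ring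
    _ = -(Γ * (g x)⁻¹) - (g x)⁻¹ * Γᵀ := by
        rw [hg.mul_inv, hg.inv_mul]; noncomm_ring

end IsPseudoRiemannian

end MatrixFields

/-! ### Covariant derivatives in coordinate directions -/

section Action

variable {n : ℕ} {ι : Type*}

/-- The components of a covariant tensor whose slots are labelled by `ι`. -/
abbrev Tensor (n : ℕ) (ι : Type*) := (ι → Fin n) → ℝ

variable [Fintype ι] [DecidableEq ι]

/-- The action of a matrix on covariant tensors as a derivation: the matrix is contracted into
each slot in turn. -/
def derivAction : Matrix (Fin n) (Fin n) ℝ →ₗ[ℝ] Module.End ℝ (Tensor n ι) :=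
  LinearMap.mk₂ ℝ (fun M t idx => ∑ m, ∑ e, M e (idx m) * t (Function.update idx m e))
    (fun M N t => by ext; simp [add_mul, Finset.sum_add_distrib])
    (fun c M t => by ext; simp [Finset.mul_sum, mul_assoc])
    (fun M t u => by ext; simp [mul_add, Finset.sum_add_distrib])
    (fun c M t => by ext; simp [Finset.mul_sum, mul_left_comm])

lemma derivAction_apply (M : Matrix (Fin n) (Fin n) ℝ) (t : Tensor n ι) (idx : ι → Fin n) :
    derivAction M t idx = ∑ m, ∑ e, M e (idx m) * t (Function.update idx m e) :=
  rfl

-- Contributions from two distinct slots commute, so only the diagonal terms survive.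
lemma derivAction_mul_sub_mul (M N : Matrix (Fin n) (Fin n) ℝ) (t : Tensor n ι) :
    derivAction M (derivAction N t) - derivAction N (derivAction M t)
      = derivAction (N * M - M * N) t := by
  let term (M N : Matrix (Fin n) (Fin n) ℝ) (idx : ι → Fin n) (m m' : ι) : ℝ :=
    ∑ e, ∑ f, M e (idx m) * (N f (Function.update idx m e m') *
      t (Function.update (Function.update idx m e) m' f))
  have expand (M N : Matrix (Fin n) (Fin n) ℝ) (idx : ι → Fin n) :
      derivAction M (derivAction N t) idx = ∑ m, ∑ m', term M N idx m m' := by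
    simp only [derivAction_apply, term, Finset.mul_sum]
    exact Finset.sum_congr rfl fun m _ => Finset.sum_comm
  have off_diagonal (idx : ι → Fin n) {m m' : ι} (hne : m' ≠ m) :
      term M N idx m m' = term N M idx m' m := by
    simp only [term]
    rw [Finset.sum_comm]
    refine Finset.sum_congr rfl fun f _ => Finset.sum_congr rfl fun e _ => ?_
    rw [Function.update_of_ne hne, Function.update_of_ne hne.symm, Function.update_comm hne]
    ring
  have diagonal (M N : Matrix (Fin n) (Fin n) ℝ) (idx : ι → Fin n) (m : ι) :
      term M N idx m m = ∑ f, (N * M) f (idx m) * t (Function.update idx m f) := by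
    simp only [term, Function.update_self, Function.update_idem, Matrix.mul_apply,
      Finset.sum_mul]
    rw [Finset.sum_comm]
    exact Finset.sum_congr rfl fun _ _ => Finset.sum_congr rfl fun _ _ => by ring
  ext idx
  rw [Pi.sub_apply, expand, expand, Finset.sum_comm (f := fun m m' => term N M idx m m'),
    ← Finset.sum_sub_distrib, derivAction_apply]
  refine Finset.sum_congr rfl fun m _ => ?_
  rw [← Finset.sum_sub_distrib, Finset.sum_eq_single m
    (fun m' _ hne => sub_eq_zero.2 (off_diagonal idx hne)) (by simp), diagonal, diagonal,
    ← Finset.sum_sub_distrib]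
  simp only [Matrix.sub_apply, sub_mul]

/-- The covariant derivative `∇_a T` in a coordinate direction; unlike in `covD`, the index `a`
does not become a slot of the result. -/
def coordCovD (g : MetricField n) (a : Fin n) (T : Pt n → Tensor n ι) : Pt n → Tensor n ι :=
  fun x idx => pd (fun y => T y idx) a x - derivAction (connectionMatrix g x a) (T x) idx

lemma covD_apply {k : ℕ} (g : MetricField n) (T : TensorField n k) (x : Pt n)
    (idx : Fin (k + 1) → Fin n) :
    covD g T x idx = coordCovD g (idx 0) T x (Fin.tail idx) :=
  rfl

lemma coordCovD_add (g : MetricField n) (a : Fin n) {T U : Pt n → Tensor n ι}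
    (hT : ContDiff ℝ ∞ T) (hU : ContDiff ℝ ∞ U) :
    coordCovD g a (T + U) = coordCovD g a T + coordCovD g a U := by
  have hT' := hT.differentiable (by simp)
  have hU' := hU.differentiable (by simp)
  ext x idx
  simp only [coordCovD, Pi.add_apply, map_add]
  rw [pd_add (by fun_prop) (by fun_prop)]
  ring

lemma coordCovD_neg (g : MetricField n) (a : Fin n) (T : Pt n → Tensor n ι) :
    coordCovD g a (-T) = -coordCovD g a T := by
  ext x idx
  simp only [coordCovD, Pi.neg_apply, map_neg, pd_neg]
  ring

/-- The curvature endomorphism `R_{ab} = ∂_a Γ_b - ∂_b Γ_a + [Γ_a, Γ_b]`. -/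
def curvatureMatrix (g : MetricField n) (x : Pt n) (a b : Fin n) : Matrix (Fin n) (Fin n) ℝ :=
  pdMatrix (connectionMatrix g · b) a x - pdMatrix (connectionMatrix g · a) b x
    + (connectionMatrix g x a * connectionMatrix g x b
      - connectionMatrix g x b * connectionMatrix g x a)

namespace IsPseudoRiemannian

variable {g : MetricField n} (hg : IsPseudoRiemannian g)
include hg

@[fun_prop]
lemma contDiff_coordCovD (a : Fin n) {T : Pt n → Tensor n ι} (hT : ContDiff ℝ ∞ T) :
    ContDiff ℝ ∞ (coordCovD g a T) := by
  have hΓ := hg.contDiff_christoffel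
  refine contDiff_pi.2 fun idx => ContDiff.sub (by fun_prop) ?_
  simp only [derivAction_apply, connectionMatrix, Matrix.of_apply]
  fun_prop

lemma contDiff_covD {k : ℕ} {T : TensorField n k} (hT : ContDiff ℝ ∞ T) :
    ContDiff ℝ ∞ (covD g T) :=
  contDiff_pi.2 fun idx =>
    contDiff_pi.1 (hg.contDiff_coordCovD (idx 0) hT) (Fin.tail idx)

lemma contDiff_covDIter {k : ℕ} {T : TensorField n k} (hT : ContDiff ℝ ∞ T) (I : ℕ) :
    ContDiff ℝ ∞ (covDIter g T I) := by
  induction I with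
  | zero => exact hT
  | succ I ih => exact hg.contDiff_covD ih

lemma pd_derivAction_connectionMatrix (a b : Fin n) {T : Pt n → Tensor n ι}
    (hT : ContDiff ℝ ∞ T) (x : Pt n) (idx : ι → Fin n) :
    pd (fun y => derivAction (connectionMatrix g y b) (T y) idx) a x
      = derivAction (pdMatrix (connectionMatrix g · b) a x) (T x) idx
        + derivAction (connectionMatrix g x b) (fun i => pd (fun y => T y i) a x) idx := by
  have hΓ := hg.differentiable_christoffel
  have hT' := hT.differentiable (by simp)
  simp only [derivAction_apply, pdMatrix, connectionMatrix, Matrix.of_apply]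
  rw [pd_sum fun m _ => by fun_prop, ← Finset.sum_add_distrib]
  refine Finset.sum_congr rfl fun m _ => ?_
  rw [pd_sum fun e _ => by fun_prop, ← Finset.sum_add_distrib]
  exact Finset.sum_congr rfl fun e _ => pd_mul (by fun_prop) (by fun_prop) a

lemma coordCovD_comm (a b : Fin n) {T : Pt n → Tensor n ι} (hT : ContDiff ℝ ∞ T) (x : Pt n) :
    coordCovD g a (coordCovD g b T) x - coordCovD g b (coordCovD g a T) x
      = -derivAction (curvatureMatrix g x a b) (T x) := by
  let Γ (a : Fin n) := connectionMatrix g x a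
  let dT (a : Fin n) : Tensor n ι := fun i => pd (fun y => T y i) a x
  have expand (a b : Fin n) (idx : ι → Fin n) :
      coordCovD g a (coordCovD g b T) x idx
        = pd (pd (fun z => T z idx) b) a x
          - derivAction (pdMatrix (connectionMatrix g · b) a x) (T x) idx
          - derivAction (Γ b) (dT a) idx - derivAction (Γ a) (dT b) idx
          + derivAction (Γ a) (derivAction (Γ b) (T x)) idx := by
    have hdT : DifferentiableAt ℝ (pd (fun z => T z idx) b) x :=
      (contDiff_pd (contDiff_pi.1 hT idx) b).differentiable (by simp) x
    have hΓT : DifferentiableAt ℝ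
        (fun y => derivAction (connectionMatrix g y b) (T y) idx) x := by
      have hΓ := hg.differentiable_christoffel
      have hT' := hT.differentiable (by simp)
      simp only [derivAction_apply, connectionMatrix, Matrix.of_apply]
      fun_prop
    have hsplit : coordCovD g b T x = dT b - derivAction (Γ b) (T x) := rfl
    have hpd : pd (fun y => coordCovD g b T y idx) a x = _ := pd_sub hdT hΓT a
    rw [coordCovD, hpd, hg.pd_derivAction_connectionMatrix a b hT, hsplit, map_sub, Pi.sub_apply]
    ring
  ext idx
  have hΓΓ := congrFun (derivAction_mul_sub_mul (Γ a) (Γ b) (T x)) idx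
  rw [Pi.sub_apply, expand, expand, pd_comm (contDiff_pi.1 hT idx)]
  simp only [curvatureMatrix, map_add, map_sub, LinearMap.add_apply, LinearMap.sub_apply,
    Pi.add_apply, Pi.sub_apply, Pi.neg_apply, Γ] at hΓΓ ⊢
  linear_combination hΓΓ

end IsPseudoRiemannian

lemma coordCovD_cons (g : MetricField n) {k : ℕ} (a : Fin n) (U : TensorField n (k + 1))
    (x : Pt n) (b : Fin n) (idx : Fin k → Fin n) :
    coordCovD g a U x (Fin.cons b idx)
      = coordCovD g a (fun y i => U y (Fin.cons b i)) x idx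
        - ∑ e, christoffel g x e a b * U x (Fin.cons e idx) := by
  simp only [coordCovD, derivAction_apply, Fin.sum_univ_succ, Fin.cons_zero, Fin.cons_succ,
    Fin.update_cons_zero, ← Fin.cons_update, connectionMatrix, Matrix.of_apply]
  ring

lemma covD_covD (g : MetricField n) {k : ℕ} (T : TensorField n k) (x : Pt n) (a b : Fin n)
    (idx : Fin k → Fin n) :
    covD g (covD g T) x (Fin.cons a (Fin.cons b idx))
      = coordCovD g a (coordCovD g b T) x idx
        - ∑ e, christoffel g x e a b * coordCovD g e T x idx := by
  rw [covD_apply, Fin.tail_cons, coordCovD_cons]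
  rfl

lemma IsPseudoRiemannian.covD_covD_comm {g : MetricField n} (hg : IsPseudoRiemannian g) {k : ℕ}
    {T : TensorField n k} (hT : ContDiff ℝ ∞ T) (x : Pt n) (a b : Fin n) (idx : Fin k → Fin n) :
    covD g (covD g T) x (Fin.cons a (Fin.cons b idx))
      = covD g (covD g T) x (Fin.cons b (Fin.cons a idx))
        - derivAction (curvatureMatrix g x a b) (T x) idx := by
  have hcomm := congrFun (hg.coordCovD_comm a b hT x) idx
  simp only [Pi.sub_apply, Pi.neg_apply] at hcomm
  simp only [covD_covD, hg.christoffel_comm x _ b a]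
  linear_combination hcomm

end Action

/-! ### Evaluation on vectors -/

section Evaluation

variable {n : ℕ} {ι : Type*} [Fintype ι] [DecidableEq ι]

/-- Evaluation of a covariant tensor on a tuple of vectors, one for each slot. -/
def eval : Tensor n ι →ₗ[ℝ] MultilinearMap ℝ (fun _ : ι => Fin n → ℝ) ℝ :=
  Fintype.linearCombination ℝ fun idx =>
    (MultilinearMap.mkPiAlgebra ℝ ι ℝ).compLinearMap fun m => LinearMap.proj (idx m)

lemma eval_apply (t : Tensor n ι) (Y : ι → Fin n → ℝ) :
    eval t Y = ∑ idx, t idx * ∏ m, Y m (idx m) := by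
  simp [eval, Fintype.linearCombination_apply]

lemma eval_single (t : Tensor n ι) (idx : ι → Fin n) :
    eval t (fun m => Pi.single (idx m) 1) = t idx := by
  rw [eval_apply, Finset.sum_eq_single idx]
  · simp
  · intro idx' _ hne
    obtain ⟨m, hm⟩ := Function.ne_iff.1 hne
    rw [Finset.prod_eq_zero (Finset.mem_univ m) (Pi.single_eq_of_ne hm 1), mul_zero]
  · simp

lemma prod_update_apply (Y : ι → Fin n → ℝ) (m : ι) (Z : Fin n → ℝ) (idx : ι → Fin n) :
    ∏ j, Function.update Y m Z j (idx j)
      = (∏ j ∈ Finset.univ.erase m, Y j (idx j)) * Z (idx m) := by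
  rw [← Finset.prod_erase_mul _ _ (Finset.mem_univ m), Function.update_self]
  congr 1
  exact Finset.prod_congr rfl fun j hj => by
    rw [Function.update_of_ne (Finset.ne_of_mem_erase hj)]

lemma eval_derivAction (M : Matrix (Fin n) (Fin n) ℝ) (t : Tensor n ι) (Y : ι → Fin n → ℝ) :
    eval (derivAction M t) Y = ∑ m, eval t (Function.update Y m (M *ᵥ Y m)) := by
  simp only [eval_apply, derivAction_apply, Finset.sum_mul]
  rw [Finset.sum_comm]
  refine Finset.sum_congr rfl fun m _ => ?_
  let swap : (ι → Fin n) × Fin n → (ι → Fin n) × Fin n :=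
    fun p => (Function.update p.1 m p.2, p.1 m)
  have hswap : Function.Involutive swap := fun p => by simp [swap]
  rw [← Fintype.sum_prod_type', ← Equiv.sum_comp hswap.toPerm, Fintype.sum_prod_type]
  refine Finset.sum_congr rfl fun idx _ => ?_
  simp only [Function.Involutive.coe_toPerm, swap, Function.update_self, Function.update_idem,
    Function.update_eq_self, prod_update_apply, Matrix.mulVec, dotProduct, Finset.mul_sum]
  refine Finset.sum_congr rfl fun e _ => ?_
  have hother : ∏ j ∈ Finset.univ.erase m, Y j (Function.update idx m e j)
      = ∏ j ∈ Finset.univ.erase m, Y j (idx j) :=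
    Finset.prod_congr rfl fun j hj => by rw [Function.update_of_ne (Finset.ne_of_mem_erase hj)]
  rw [← Finset.prod_erase_mul _ _ (Finset.mem_univ m), Function.update_self, hother]
  ring

/-- The covariant derivative of a vector field in a coordinate direction. -/
def coordCovDVec (g : MetricField n) (a : Fin n) (Y : VecField n) (x : Pt n) : Fin n → ℝ :=
  (fun e => pd (fun y => Y y e) a x) + connectionMatrix g x a *ᵥ Y x

lemma pd_eval (a : Fin n) {T : Pt n → Tensor n ι} (hT : ContDiff ℝ ∞ T) {Y : ι → Pt n → Fin n → ℝ}
    (hY : ∀ m, ContDiff ℝ ∞ (Y m)) (x : Pt n) :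
    pd (fun y => eval (T y) (fun m => Y m y)) a x
      = eval (fun i => pd (fun y => T y i) a x) (fun m => Y m x)
        + ∑ m, eval (T x)
            (Function.update (fun m => Y m x) m fun e => pd (fun y => Y m y e) a x) := by
  have hT' := hT.differentiable (by simp)
  have hY' m := (hY m).differentiable (by simp)
  simp only [eval_apply]
  rw [pd_sum fun idx _ => by fun_prop, Finset.sum_comm, ← Finset.sum_add_distrib]
  refine Finset.sum_congr rfl fun idx _ => ?_
  rw [pd_mul (by fun_prop) (by fun_prop), pd_prod fun m _ => by fun_prop]
  simp only [prod_update_apply, Finset.mul_sum]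

lemma pd_eval_eq_coordCovD (g : MetricField n) (a : Fin n) {T : Pt n → Tensor n ι}
    (hT : ContDiff ℝ ∞ T) {Y : ι → Pt n → Fin n → ℝ} (hY : ∀ m, ContDiff ℝ ∞ (Y m)) (x : Pt n) :
    pd (fun y => eval (T y) (fun m => Y m y)) a x
      = eval (coordCovD g a T x) (fun m => Y m x)
        + ∑ m, eval (T x)
            (Function.update (fun m => Y m x) m (coordCovDVec g a (Y m) x)) := by
  have hcoord : coordCovD g a T x
      = (fun i => pd (fun y => T y i) a x) - derivAction (connectionMatrix g x a) (T x) := rfl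
  simp only [pd_eval a hT hY, hcoord, map_sub, sub_apply, eval_derivAction,
    coordCovDVec, MultilinearMap.map_update_add, Finset.sum_add_distrib]
  ring

end Evaluation

/-! ### Tensor products, relabellings and contractions -/

section Operations

variable {n : ℕ} {ι κ : Type*}

/-- The tensor product of two tensor fields. -/
def tensorMul (T : Pt n → Tensor n ι) (U : Pt n → Tensor n κ) : Pt n → Tensor n (ι ⊕ κ) :=
  fun x idx => T x (idx ∘ Sum.inl) * U x (idx ∘ Sum.inr)

/-- The tensor field obtained by relabelling the slots along `e`. -/
def relabel (e : ι ≃ κ) (T : Pt n → Tensor n ι) : Pt n → Tensor n κ :=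
  fun x idx => T x (idx ∘ e)

/-- The matrix of components of a tensor in the two slots labelled by `Bool`, the others being
fixed to `idx`. -/
def slotMatrix (t : Tensor n (ι ⊕ Bool)) (idx : ι → Fin n) : Matrix (Fin n) (Fin n) ℝ :=
  Matrix.of fun p q => t (Sum.elim idx fun b => cond b q p)

/-- The contraction, with the inverse metric, of the two slots labelled by `Bool`. -/
def contract (g : MetricField n) (T : Pt n → Tensor n (ι ⊕ Bool)) : Pt n → Tensor n ι :=
  fun x idx => ((g x)⁻¹ * (slotMatrix (T x) idx)ᵀ).trace

lemma contract_apply (g : MetricField n) (T : Pt n → Tensor n (ι ⊕ Bool)) (x : Pt n)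
    (idx : ι → Fin n) :
    contract g T x idx
      = ∑ p, ∑ q, (g x)⁻¹ p q * T x (Sum.elim idx fun b => cond b q p) := by
  simp [contract, Matrix.trace, Matrix.mul_apply, slotMatrix]

variable [Fintype ι] [DecidableEq ι]

section

variable [Fintype κ] [DecidableEq κ]

lemma contDiff_tensorMul {T : Pt n → Tensor n ι} {U : Pt n → Tensor n κ} (hT : ContDiff ℝ ∞ T)
    (hU : ContDiff ℝ ∞ U) : ContDiff ℝ ∞ (tensorMul T U) :=
  contDiff_pi.2 fun _ => (contDiff_pi.1 hT _).mul (contDiff_pi.1 hU _)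

lemma contDiff_relabel {T : Pt n → Tensor n ι} (hT : ContDiff ℝ ∞ T) (e : ι ≃ κ) :
    ContDiff ℝ ∞ (relabel e T) :=
  contDiff_pi.2 fun _ => contDiff_pi.1 hT _

lemma coordCovD_tensorMul (g : MetricField n) (a : Fin n) {T : Pt n → Tensor n ι}
    {U : Pt n → Tensor n κ} (hT : ContDiff ℝ ∞ T) (hU : ContDiff ℝ ∞ U) :
    coordCovD g a (tensorMul T U)
      = tensorMul (coordCovD g a T) U + tensorMul T (coordCovD g a U) := by
  have hT' := hT.differentiable (by simp)
  have hU' := hU.differentiable (by simp)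
  ext x idx
  simp only [coordCovD, tensorMul, derivAction_apply, Pi.add_apply, Fintype.sum_sum_type]
  rw [pd_mul (by fun_prop) (by fun_prop)]
  simp only [Function.update_comp_eq_of_injective _ Sum.inl_injective,
    Function.update_comp_eq_of_injective _ Sum.inr_injective,
    Function.update_comp_eq_of_notMem_range _ _ (show Sum.inl _ ∉ Set.range Sum.inr by simp),
    Function.update_comp_eq_of_notMem_range _ _ (show Sum.inr _ ∉ Set.range Sum.inl by simp),
    sub_mul, mul_sub, Finset.sum_mul, Finset.mul_sum, Function.comp_apply, mul_assoc,
    mul_left_comm]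
  ring

lemma coordCovD_relabel (g : MetricField n) (a : Fin n) (T : Pt n → Tensor n ι) (e : ι ≃ κ) :
    coordCovD g a (relabel e T) = relabel e (coordCovD g a T) := by
  ext x idx
  simp only [coordCovD, relabel, derivAction_apply]
  rw [← Equiv.sum_comp e]
  simp only [Function.update_comp_eq_of_injective _ e.injective, Function.comp_apply]

end

lemma slotMatrix_derivAction (M : Matrix (Fin n) (Fin n) ℝ) (t : Tensor n (ι ⊕ Bool))
    (idx : ι → Fin n) :
    slotMatrix (derivAction M t) idx
      = (∑ m, ∑ e, M e (idx m) • slotMatrix t (Function.update idx m e))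
        + slotMatrix t idx * M + Mᵀ * slotMatrix t idx := by
  have update_true (p q e : Fin n) :
      Function.update (fun b => cond b q p) true e = fun b => cond b e p := by
    ext b; cases b <;> simp
  have update_false (p q e : Fin n) :
      Function.update (fun b => cond b q p) false e = fun b => cond b q e := by
    ext b; cases b <;> simp
  ext p q
  simp only [slotMatrix, derivAction_apply, Fintype.sum_sum_type, Fintype.sum_bool,
    Matrix.of_apply, Matrix.add_apply, Matrix.sum_apply, Matrix.smul_apply, Matrix.mul_apply,
    Matrix.transpose_apply, Sum.update_elim_inl, Sum.update_elim_inr, Sum.elim_inl, Sum.elim_inr,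
    cond_true, cond_false, update_true, update_false, smul_eq_mul, mul_comm (M _ q), add_assoc]

lemma pd_trace {M : MetricField n} (hM : ∀ b c, ContDiff ℝ ∞ fun x => M x b c) (a : Fin n)
    (x : Pt n) : pd (fun y => (M y).trace) a x = (pdMatrix M a x).trace :=
  pd_sum (fun b _ => (hM b b).differentiable (by simp) x) a

namespace IsPseudoRiemannian

variable {g : MetricField n} (hg : IsPseudoRiemannian g)
include hg

lemma contDiff_contract {T : Pt n → Tensor n (ι ⊕ Bool)} (hT : ContDiff ℝ ∞ T) :
    ContDiff ℝ ∞ (contract g T) := by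
  refine contDiff_pi.2 fun idx => ?_
  simp only [contract_apply]
  exact ContDiff.sum fun p _ => ContDiff.sum fun q _ =>
    (hg.contDiff_inv p q).mul (contDiff_pi.1 hT _)

-- Metric compatibility: the derivative of `g⁻¹` cancels the connection terms of the two slots.
lemma coordCovD_contract (a : Fin n) {T : Pt n → Tensor n (ι ⊕ Bool)} (hT : ContDiff ℝ ∞ T) :
    coordCovD g a (contract g T) = contract g (coordCovD g a T) := by
  ext x idx
  have hslot b c : ContDiff ℝ ∞ fun y => (slotMatrix (T y) idx)ᵀ b c := contDiff_pi.1 hT _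
  have hprod b c : ContDiff ℝ ∞ fun y => ((g y)⁻¹ * (slotMatrix (T y) idx)ᵀ) b c := by
    simp only [Matrix.mul_apply]
    exact ContDiff.sum fun d _ => (hg.contDiff_inv b d).mul (hslot d c)
  set Γ := connectionMatrix g x a
  have hpd : pd (fun y => contract g T y idx) a x
      = ((-(Γ * (g x)⁻¹) - (g x)⁻¹ * Γᵀ) * (slotMatrix (T x) idx)ᵀ
        + (g x)⁻¹ * pdMatrix (fun y => (slotMatrix (T y) idx)ᵀ) a x).trace := by
    rw [← hg.pdMatrix_inv, ← pdMatrix_mul hg.contDiff_inv hslot, ← pd_trace hprod]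
    rfl
  have hcov : (slotMatrix (coordCovD g a T x) idx)ᵀ
      = pdMatrix (fun y => (slotMatrix (T y) idx)ᵀ) a x
        - (slotMatrix (derivAction Γ (T x)) idx)ᵀ := rfl
  have hact : derivAction Γ (contract g T x) idx
      = ((g x)⁻¹ * (∑ m, ∑ e,
          Γ e (idx m) • slotMatrix (T x) (Function.update idx m e))ᵀ).trace := by
    simp [derivAction_apply, contract, Matrix.transpose_sum, Matrix.mul_sum, Matrix.trace_sum]
  have hcycle : (Γ * ((g x)⁻¹ * (slotMatrix (T x) idx)ᵀ)).trace
      = ((g x)⁻¹ * ((slotMatrix (T x) idx)ᵀ * Γ)).trace := by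
    rw [Matrix.trace_mul_comm, Matrix.mul_assoc]
  rw [coordCovD, hpd, hact, contract, hcov, slotMatrix_derivAction]
  simp only [Matrix.transpose_add, Matrix.transpose_mul, Matrix.transpose_transpose,
    Matrix.mul_add, Matrix.mul_sub, Matrix.sub_mul, Matrix.neg_mul, Matrix.trace_add,
    Matrix.trace_sub, Matrix.trace_neg, Matrix.mul_assoc, hcycle]
  ring

end IsPseudoRiemannian

end Operations

/-! ### Symmetries of the curvature -/

section Curvature

variable {n : ℕ} {g : MetricField n}

lemma curvatureMatrix_swap (g : MetricField n) (x : Pt n) (a b : Fin n) :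
    curvatureMatrix g x a b = -curvatureMatrix g x b a := by
  unfold curvatureMatrix
  abel

lemma riemann_apply (g : MetricField n) (x : Pt n) (idx : Fin 4 → Fin n) :
    riemann g x idx = (g x * curvatureMatrix g x (idx 2) (idx 3)) (idx 0) (idx 1) := by
  simp [riemann, curvatureMatrix, connectionMatrix, pdMatrix, Matrix.mul_apply,
    Finset.sum_sub_distrib]

lemma riemann_swap_right (g : MetricField n) (x : Pt n) (a b c d : Fin n) :
    riemann g x ![a, b, c, d] = -riemann g x ![a, b, d, c] := by
  simp [riemann_apply, curvatureMatrix_swap g x c d]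

/-- The metric as a tensor field. -/
def metricTensor (g : MetricField n) : TensorField n 2 := fun x idx => g x (idx 0) (idx 1)

lemma derivAction_metricTensor (g : MetricField n) (M : Matrix (Fin n) (Fin n) ℝ) (x : Pt n) :
    derivAction M (metricTensor g x) = fun idx => (Mᵀ * g x + g x * M) (idx 0) (idx 1) := by
  ext idx
  simp [metricTensor, derivAction_apply, Fin.sum_univ_two, Matrix.mul_apply,
    mul_comm (M _ (idx 1))]

lemma pdMatrix_comm {M : MetricField n} (hM : ∀ b c, ContDiff ℝ ∞ fun x => M x b c) (a b : Fin n)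
    (x : Pt n) : pdMatrix (pdMatrix M a) b x = pdMatrix (pdMatrix M b) a x := by
  ext c d
  exact pd_comm (hM c d) a b x

/-- The components `∇_a R_{bc}` of the derivative of the curvature endomorphism, the slots `b`
and `c` not being differentiated. -/
def covDCurvatureMatrix (g : MetricField n) (x : Pt n) (a b c : Fin n) :
    Matrix (Fin n) (Fin n) ℝ :=
  pdMatrix (curvatureMatrix g · b c) a x + connectionMatrix g x a * curvatureMatrix g x b c
    - curvatureMatrix g x b c * connectionMatrix g x a

namespace IsPseudoRiemannian

variable (hg : IsPseudoRiemannian g)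
include hg

lemma contDiff_connectionMatrix (a e c : Fin n) :
    ContDiff ℝ ∞ fun x => connectionMatrix g x a e c :=
  hg.contDiff_christoffel e a c

lemma contDiff_curvatureMatrix (a b e c : Fin n) :
    ContDiff ℝ ∞ fun x => curvatureMatrix g x a b e c := by
  have hΓ := hg.contDiff_connectionMatrix
  simp only [curvatureMatrix, Matrix.add_apply, Matrix.sub_apply, Matrix.mul_apply, pdMatrix,
    Matrix.of_apply]
  fun_prop

lemma contDiff_riemann : ContDiff ℝ ∞ (riemann g) := by
  have hR := hg.contDiff_curvatureMatrix
  have hg' := hg.contDiff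
  refine contDiff_pi.2 fun idx => ?_
  simp only [riemann_apply, Matrix.mul_apply]
  fun_prop

lemma curvatureMatrix_cyclic (x : Pt n) (a b c e : Fin n) :
    curvatureMatrix g x a b e c + curvatureMatrix g x b c e a
      + curvatureMatrix g x c a e b = 0 := by
  have hsymm (p q r : Fin n) :
      (fun y => christoffel g y p q r) = fun y => christoffel g y p r q :=
    funext fun y => hg.christoffel_comm y p q r
  simp only [curvatureMatrix, connectionMatrix, pdMatrix, Matrix.add_apply, Matrix.sub_apply,
    Matrix.of_apply, Matrix.mul_apply, hg.christoffel_comm x _ b a, hg.christoffel_comm x _ c b,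
    hg.christoffel_comm x _ c a, hsymm e b a, hsymm e c b, hsymm e c a]
  ring

lemma contDiff_metricTensor : ContDiff ℝ ∞ (metricTensor g) :=
  contDiff_pi.2 fun _ => hg.contDiff _ _

lemma coordCovD_metricTensor (a : Fin n) : coordCovD g a (metricTensor g) = 0 := by
  ext x idx
  have hpd : pd (fun y => metricTensor g y idx) a x = pdMatrix g a x (idx 0) (idx 1) := rfl
  rw [coordCovD, derivAction_metricTensor, hpd, hg.pdMatrix_metric]
  exact sub_self _

-- The metric is parallel, so the curvature endomorphisms act trivially on it.
lemma riemann_swap_left (x : Pt n) (a b c d : Fin n) :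
    riemann g x ![a, b, c, d] = -riemann g x ![b, a, c, d] := by
  have parallel_zero (e : Fin n) : coordCovD g e (0 : TensorField n 2) = 0 := by
    ext y idx
    simp [coordCovD, pd_const]
  have hact := congrFun (hg.coordCovD_comm c d hg.contDiff_metricTensor x) ![a, b]
  simp only [hg.coordCovD_metricTensor, parallel_zero, derivAction_metricTensor,
    Pi.sub_apply, Pi.neg_apply, Pi.zero_apply, Matrix.add_apply] at hact
  have htrans : (curvatureMatrix g x c d)ᵀ * g x = (g x * curvatureMatrix g x c d)ᵀ := by
    rw [Matrix.transpose_mul, (hg.isSymm x).eq]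
  simp only [riemann_apply, htrans, Matrix.transpose_apply, Matrix.cons_val] at hact ⊢
  linarith

lemma riemann_cyclic (x : Pt n) (a b c d : Fin n) :
    riemann g x ![a, b, c, d] + riemann g x ![a, c, d, b] + riemann g x ![a, d, b, c] = 0 := by
  simp only [riemann_apply, Matrix.mul_apply, ← Finset.sum_add_distrib, ← mul_add,
    Matrix.cons_val]
  exact Finset.sum_eq_zero fun e _ => by rw [hg.curvatureMatrix_cyclic, mul_zero]

lemma riemann_pair_swap (x : Pt n) (a b c d : Fin n) :
    riemann g x ![a, b, c, d] = riemann g x ![c, d, a, b] := by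
  have left := hg.riemann_swap_left x
  have right := riemann_swap_right g x
  have cyclic := hg.riemann_cyclic x
  linarith [cyclic a b c d, cyclic b c d a, cyclic c d a b, cyclic d a b c,
    left a b c d, left a c d b, left a d b c, left b c d a, left b d a c, left c d a b,
    right b a c d, right c a d b, right d a b c, right c b d a, right d b a c, right d c a b,
    right c d b a, right a c b d, right b d c a, right a b d c, right b c a d, right a d c b]

lemma covDCurvatureMatrix_cyclic (x : Pt n) (a b c : Fin n) :
    covDCurvatureMatrix g x a b c + covDCurvatureMatrix g x b c a
      + covDCurvatureMatrix g x c a b = 0 := by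
  have hΓ := hg.contDiff_connectionMatrix
  let Γ (a : Fin n) : MetricField n := (connectionMatrix g · a)
  have hpd (a b c : Fin n) : pdMatrix (curvatureMatrix g · b c) a x
      = pdMatrix (pdMatrix (Γ c) b) a x - pdMatrix (pdMatrix (Γ b) c) a x
        + (pdMatrix (Γ b) a x * Γ c x + Γ b x * pdMatrix (Γ c) a x
          - (pdMatrix (Γ c) a x * Γ b x + Γ c x * pdMatrix (Γ b) a x)) := by
    have hprod (b c d e : Fin n) : Differentiable ℝ fun y => (Γ b y * Γ c y) d e := by
      have hΓ' b d e : Differentiable ℝ fun y => Γ b y d e := (hΓ b d e).differentiable (by simp)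
      simp only [Matrix.mul_apply]
      fun_prop
    have hpdΓ (b c d e : Fin n) : Differentiable ℝ fun y => pdMatrix (Γ b) c y d e :=
      (contDiff_pd (hΓ b d e) c).differentiable (by simp)
    rw [← pdMatrix_mul (hΓ b) (hΓ c), ← pdMatrix_mul (hΓ c) (hΓ b)]
    ext d e
    exact (pd_add ((hpdΓ c b d e x).sub (hpdΓ b c d e x))
      ((hprod b c d e x).sub (hprod c b d e x)) a).trans
      (congrArg₂ (· + ·) (pd_sub (hpdΓ c b d e x) (hpdΓ b c d e x) a)
        (pd_sub (hprod b c d e x) (hprod c b d e x) a))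
  simp only [covDCurvatureMatrix, hpd]
  rw [pdMatrix_comm (hΓ c) b a, pdMatrix_comm (hΓ a) c b, pdMatrix_comm (hΓ b) a c]
  simp only [curvatureMatrix, Γ]
  noncomm_ring

lemma coordCovD_riemann (x : Pt n) (a b c d e : Fin n) :
    coordCovD g e (riemann g) x ![a, b, c, d]
      = (g x * covDCurvatureMatrix g x e c d) a b
        - (∑ f, christoffel g x f e c * riemann g x ![a, b, f, d])
        - ∑ f, christoffel g x f e d * riemann g x ![a, b, c, f] := by
  have hpd : pd (fun y => riemann g y ![a, b, c, d]) e x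
      = (((connectionMatrix g x e)ᵀ * g x + g x * connectionMatrix g x e) * curvatureMatrix g x c d
        + g x * pdMatrix (curvatureMatrix g · c d) e x) a b := by
    rw [← hg.pdMatrix_metric, ← pdMatrix_mul hg.contDiff (hg.contDiff_curvatureMatrix c d)]
    simp only [riemann_apply]
    rfl
  have hchristoffel (p q : Fin n) : christoffel g x p e q = connectionMatrix g x e p q := rfl
  have update_slots (f : Fin n) : Function.update ![a, b, c, d] 0 f = ![f, b, c, d] ∧
      Function.update ![a, b, c, d] 1 f = ![a, f, c, d] ∧
      Function.update ![a, b, c, d] 2 f = ![a, b, f, d] ∧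
      Function.update ![a, b, c, d] 3 f = ![a, b, c, f] := by
    refine ⟨?_, ?_, ?_, ?_⟩ <;> ext m <;> fin_cases m <;> rfl
  have first : ∑ f, connectionMatrix g x e f a * riemann g x ![f, b, c, d]
      = ((connectionMatrix g x e)ᵀ * (g x * curvatureMatrix g x c d)) a b := by
    simp [riemann_apply, Matrix.mul_apply]
  have second : ∑ f, connectionMatrix g x e f b * riemann g x ![a, f, c, d]
      = (g x * curvatureMatrix g x c d * connectionMatrix g x e) a b := by
    simp [riemann_apply, Matrix.mul_apply (M := g x * curvatureMatrix g x c d), mul_comm]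
  rw [coordCovD, hpd, derivAction_apply, Fin.sum_univ_four]
  simp only [update_slots, Matrix.cons_val, first, second, covDCurvatureMatrix, Matrix.mul_add,
    Matrix.mul_sub, Matrix.add_mul, Matrix.add_apply, Matrix.sub_apply, Matrix.mul_assoc,
    hchristoffel]
  ring

lemma coordCovD_riemann_cyclic (x : Pt n) (a b c d e : Fin n) :
    coordCovD g c (riemann g) x ![a, b, d, e] + coordCovD g d (riemann g) x ![a, b, e, c]
      + coordCovD g e (riemann g) x ![a, b, c, d] = 0 := by
  have torsion_free (p q r : Fin n) : ∑ f, christoffel g x f p q * riemann g x ![a, b, f, r]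
      = -∑ f, christoffel g x f q p * riemann g x ![a, b, r, f] := by
    rw [← Finset.sum_neg_distrib]
    exact Finset.sum_congr rfl fun f _ => by
      rw [hg.christoffel_comm, riemann_swap_right]; ring
  have hcyclic := congrArg (fun M => (g x * M) a b) (hg.covDCurvatureMatrix_cyclic x c d e)
  simp only [Matrix.mul_add, Matrix.add_apply, Matrix.mul_zero, Matrix.zero_apply] at hcyclic
  rw [hg.coordCovD_riemann, hg.coordCovD_riemann, hg.coordCovD_riemann, torsion_free c d e,
    torsion_free d e c, torsion_free e c d]
  linear_combination hcyclic

end IsPseudoRiemannian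

end Curvature

/-! ### Null frames -/

section Pairing

variable {n : ℕ} {g : MetricField n}

lemma gdot_eq_toBilin' (g : MetricField n) (x : Pt n) (X Y : Fin n → ℝ) :
    gdot g x X Y = Matrix.toBilin' (g x) X Y := by
  simp only [gdot, Matrix.toBilin'_apply, mul_comm (g x _ _)]

lemma gdot_mulVec (x : Pt n) (P : Matrix (Fin n) (Fin n) ℝ) (X Y : Fin n → ℝ) :
    gdot g x (P *ᵥ X) (P *ᵥ Y) = X ⬝ᵥ ((Pᵀ * g x * P) *ᵥ Y) := by
  rw [gdot_eq_toBilin', Matrix.toBilin'_apply', ← Matrix.mulVec_mulVec, ← Matrix.mulVec_mulVec,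
    Matrix.dotProduct_mulVec X, Matrix.vecMul_transpose]

lemma IsPseudoRiemannian.gdot_comm (hg : IsPseudoRiemannian g) (x : Pt n) (X Y : Fin n → ℝ) :
    gdot g x X Y = gdot g x Y X := by
  simp only [gdot]
  rw [Finset.sum_comm]
  exact Finset.sum_congr rfl fun a _ => Finset.sum_congr rfl fun b _ => by
    rw [hg.apply_symm]; ring

lemma mul_mul_transpose_apply (g : MetricField n) (x : Pt n) (A B : Matrix (Fin n) (Fin n) ℝ)
    (a b : Fin n) : (A * g x * Bᵀ) a b = gdot g x (A a) (B b) := by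
  simp only [gdot, Matrix.mul_apply, Matrix.transpose_apply, Finset.sum_mul]
  rw [Finset.sum_comm]
  simp only [mul_comm (A a _)]

/-- A Lorentzian metric with a smooth nowhere vanishing null vector field. -/
structure NullBackground (g : MetricField n) (ℓ : VecField n) : Prop where
  lorentz : IsLorentzMetric g
  null : IsNullField g ℓ

lemma NullBackground.isPseudoRiemannian {ℓ : VecField n} (H : NullBackground g ℓ) :
    IsPseudoRiemannian g := H.lorentz.isPseudoRiemannian

end Pairing

section Lorentz

variable {n : ℕ} [NeZero n] {g : MetricField n} {x : Pt n}

/-- The frame `e` is orthonormal at `x`, its vector `e 0` being timelike. -/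
def IsOrthonormalFrame (g : MetricField n) (x : Pt n) (e : Fin n → Fin n → ℝ) : Prop :=
  ∀ a b, gdot g x (e a) (e b) = if a = b then (if a = 0 then -1 else 1) else 0

lemma IsLorentzMetric.exists_gdot_eq_inner (hg : IsLorentzMetric g) (x : Pt n) :
    ∃ P : Matrix (Fin n) (Fin n) ℝ, IsUnit P.det ∧ ∀ X Y : EuclideanSpace ℝ (Fin n),
      gdot g x (P *ᵥ X) (P *ᵥ Y) = inner ℝ X Y - 2 * (X 0 * Y 0) := by
  obtain ⟨P, hP, hdiag⟩ := hg.2.2 x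
  refine ⟨P, hP, fun X Y => ?_⟩
  have hterm (i : Fin n) : X i * ((if (i : ℕ) = 0 then -1 else 1) * Y i)
      = Y i * X i - if i = 0 then 2 * (X i * Y i) else 0 := by
    simp only [Fin.val_eq_zero_iff]
    split_ifs <;> ring
  rw [gdot_mulVec, hdiag]
  simp only [dotProduct, Matrix.mulVec_diagonal, hterm, Finset.sum_sub_distrib]
  simp [PiLp.inner_apply]

lemma exists_orthonormal_of_inner_self_eq {u : EuclideanSpace ℝ (Fin n)} (hu : u 0 ≠ 0)
    (hnull : inner ℝ u u = 2 * (u 0 * u 0)) :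
    ∃ w : EuclideanSpace ℝ (Fin n), w 0 = 0 ∧ inner ℝ w w = 1 ∧
      u = u 0 • (EuclideanSpace.single 0 1 + w) := by
  refine ⟨(u 0)⁻¹ • u - EuclideanSpace.single 0 1, by simp [hu], ?_, by simp [smul_smul, hu]⟩
  simp only [inner_sub_left, inner_sub_right, inner_smul_left, inner_smul_right, hnull,
    EuclideanSpace.inner_single_left, EuclideanSpace.inner_single_right]
  simp
  field_simp
  norm_num

lemma fin_zero_ne_one_iff : (0 : Fin n) ≠ 1 ↔ 1 < n := by
  rw [Ne, Fin.ext_iff, Fin.val_zero, Fin.val_one']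
  have := NeZero.pos n
  refine ⟨fun h => ?_, fun h => by rw [Nat.mod_eq_of_lt h]; omega⟩
  by_contra hn
  exact h (by rw [show n = 1 by omega])

lemma exists_orthonormalBasis_zero_one (h01 : (0 : Fin n) ≠ 1) {w : EuclideanSpace ℝ (Fin n)}
    (hw0 : w 0 = 0) (hww : inner ℝ w w = 1) :
    ∃ B : OrthonormalBasis (Fin n) ℝ (EuclideanSpace ℝ (Fin n)),
      B 0 = EuclideanSpace.single 0 1 ∧ B 1 = w := by
  let axis : EuclideanSpace ℝ (Fin n) := EuclideanSpace.single 0 1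
  have horth : Orthonormal ℝ
      (({0, 1} : Set (Fin n)).domRestrict fun i => if i = 0 then axis else w) := by
    rw [orthonormal_iff_ite]
    rintro ⟨i, hi⟩ ⟨j, hj⟩
    simp only [Subtype.mk.injEq, Set.domRestrict_apply]
    rcases hi with rfl | rfl <;> rcases hj with rfl | rfl <;>
      simp [axis, EuclideanSpace.inner_single_left, EuclideanSpace.inner_single_right, h01,
        h01.symm, hw0, hww, -inner_self_eq_norm_sq_to_K]
  obtain ⟨B, hB⟩ := horth.exists_orthonormalBasis_extension_of_card_eq (by simp)
  exact ⟨B, by simp [hB 0 (by simp), axis], by simp [hB 1 (by simp), h01.symm]⟩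

lemma exists_orthonormalFrame_of_null (hg : IsLorentzMetric g) {v : Fin n → ℝ} (hv : v ≠ 0)
    (hnull : gdot g x v v = 0) :
    (0 : Fin n) ≠ 1 ∧ ∃ e, IsOrthonormalFrame g x e ∧ ∃ c : ℝ, c ≠ 0 ∧ v = c • (e 0 + e 1) := by
  obtain ⟨P, hP, hgP⟩ := hg.exists_gdot_eq_inner x
  let u : EuclideanSpace ℝ (Fin n) := WithLp.toLp 2 (P⁻¹ *ᵥ v)
  have hPu : P *ᵥ u = v := by simp [u, Matrix.mul_nonsing_inv _ hP]
  have hu_null : inner ℝ u u = 2 * (u 0 * u 0) := by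
    rw [← sub_eq_zero, ← hgP, hPu, hnull]
  have hu0 : u 0 ≠ 0 := fun h0 => hv <| by
    have : u = 0 := inner_self_eq_zero.1 (by rw [hu_null, h0, mul_zero, mul_zero])
    rw [← hPu, this]
    simp
  obtain ⟨w, hw0, hww, huw⟩ := exists_orthonormal_of_inner_self_eq hu0 hu_null
  have h01 : (0 : Fin n) ≠ 1 := by
    by_contra h01
    have hn : n = 1 := by
      have := NeZero.pos n
      have := mt fin_zero_ne_one_iff.2 (not_not.2 h01)
      omega
    subst hn
    have hw : w = 0 := by ext i; rw [Subsingleton.elim i 0, hw0]; rfl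
    simp [hw] at hww
  obtain ⟨B, hB0, hB1⟩ := exists_orthonormalBasis_zero_one h01 hw0 hww
  have htime (X : EuclideanSpace ℝ (Fin n)) : X 0 = inner ℝ (B 0) X := by
    simp [hB0, EuclideanSpace.inner_single_left]
  refine ⟨h01, fun a => P *ᵥ B a, fun a b => ?_, u 0, hu0, ?_⟩
  · rw [hgP, htime (B a), htime (B b)]
    simp only [orthonormal_iff_ite.1 B.orthonormal]
    grind
  · rw [← hPu, ← Matrix.mulVec_add, ← Matrix.mulVec_smul, hB0, hB1]
    exact congrArg (P *ᵥ ·.ofLp) huw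

/-- The involution of frame labels exchanging the two null directions. -/
def dualIndex : Equiv.Perm (Fin n) := Equiv.swap 0 1

/-- The boost weight of the frame vector with label `i`. -/
def weight (i : Fin n) : ℤ := if i = 0 then 1 else if i = 1 then -1 else 0

lemma dualIndex_dualIndex (a : Fin n) : dualIndex (dualIndex a) = a := by simp [dualIndex]

lemma dualIndex_zero : dualIndex (0 : Fin n) = 1 := by simp [dualIndex]

lemma dualIndex_one : dualIndex (1 : Fin n) = 0 := by simp [dualIndex]

lemma dualIndex_of_ne {i : Fin n} (h0 : i ≠ 0) (h1 : i ≠ 1) : dualIndex i = i :=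
  Equiv.swap_apply_of_ne_of_ne h0 h1

lemma weight_zero : weight (0 : Fin n) = 1 := by simp [weight]

lemma weight_le_one (i : Fin n) : weight i ≤ 1 := by unfold weight; split_ifs <;> simp

lemma neg_one_le_weight (i : Fin n) : -1 ≤ weight i := by unfold weight; split_ifs <;> simp

lemma weight_lt_one {i : Fin n} (hi : i ≠ 0) : weight i < 1 := by
  simp only [weight, hi, if_false]; split_ifs <;> simp

lemma weight_eq_one_iff {i : Fin n} : weight i = 1 ↔ i = 0 := by
  unfold weight; split_ifs <;> simp_all

lemma weight_eq_zero_iff {i : Fin n} : weight i = 0 ↔ i ≠ 0 ∧ i ≠ 1 := by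
  unfold weight; split_ifs <;> simp_all

lemma weight_eq_neg_one_iff (h01 : (0 : Fin n) ≠ 1) {i : Fin n} : weight i = -1 ↔ i = 1 := by
  unfold weight; split_ifs <;> simp_all

lemma dualIndex_eq_of_weight_eq_zero {i : Fin n} (hi : weight i = 0) : dualIndex i = i :=
  let ⟨h0, h1⟩ := weight_eq_zero_iff.1 hi
  dualIndex_of_ne h0 h1

lemma dualIndex_eq_of_weight_add_eq_zero (h01 : (0 : Fin n) ≠ 1) {i j : Fin n}
    (hij : weight i + weight j = 0) (hi : weight i ≠ 0) : dualIndex i = j := by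
  have hle := weight_le_one i
  have hge := neg_one_le_weight i
  obtain h | h : weight i = 1 ∨ weight i = -1 := by omega
  · have hj : weight j = -1 := by omega
    rw [weight_eq_one_iff.1 h, dualIndex_zero, (weight_eq_neg_one_iff h01).1 hj]
  · have hj : weight j = 1 := by omega
    rw [(weight_eq_neg_one_iff h01).1 h, dualIndex_one, weight_eq_one_iff.1 hj]

lemma two_le_val_iff (h01 : (0 : Fin n) ≠ 1) (i : Fin n) : 2 ≤ (i : ℕ) ↔ i ≠ 0 ∧ i ≠ 1 := by
  rw [Ne, Ne, Fin.ext_iff, Fin.ext_iff, Fin.val_zero, Fin.val_one',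
    Nat.mod_eq_of_lt (fin_zero_ne_one_iff.1 h01)]
  omega

lemma IsOrthonormalFrame.exists_nullFrameAt {e : Fin n → Fin n → ℝ}
    (he : IsOrthonormalFrame g x e) (h01 : (0 : Fin n) ≠ 1) {c : ℝ} (hc : c ≠ 0) :
    ∃ fr : NullFrameAt g x, fr.e 0 = c • (e 0 + e 1) := by
  simp only [IsOrthonormalFrame, gdot_eq_toBilin'] at he
  have h10 := h01.symm
  refine ⟨{ e := fun a => if a = 0 then c • (e 0 + e 1)
              else if a = 1 then (2 * c)⁻¹ • (e 1 - e 0) else e a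
            h00 := ?_, h11 := ?_, h01 := ?_, h0i := ?_, h1i := ?_, hij := ?_ }, ?_⟩
  · simp [gdot_eq_toBilin', he, h01, h10]
  · simp [gdot_eq_toBilin', he, h01, h10]
  · simp [gdot_eq_toBilin', he, h01, h10]
    field_simp
    norm_num
  · intro i hi
    obtain ⟨h0, h1⟩ := (two_le_val_iff h01 i).1 hi
    simp [gdot_eq_toBilin', he, h0, h1, h0.symm, h1.symm]
  · intro i hi
    obtain ⟨h0, h1⟩ := (two_le_val_iff h01 i).1 hi
    simp [gdot_eq_toBilin', he, h0, h1, h0.symm, h1.symm, h10]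
  · intro i j hi hj
    obtain ⟨h0, h1⟩ := (two_le_val_iff h01 i).1 hi
    obtain ⟨h0', h1'⟩ := (two_le_val_iff h01 j).1 hj
    simp [gdot_eq_toBilin', he, h0, h1, h0', h1']
  · simp

lemma NullBackground.exists_nullFrameAt {ℓ : VecField n} (H : NullBackground g ℓ) (x : Pt n) :
    ∃ fr : NullFrameAt g x, fr.e 0 = ℓ x := by
  obtain ⟨h01, e, he, c, hc, hℓ⟩ :=
    exists_orthonormalFrame_of_null H.lorentz (H.null.2.1 x) (H.null.2.2 x)
  rw [hℓ]
  exact he.exists_nullFrameAt h01 hc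

namespace NullFrameAt

variable (fr : NullFrameAt g x)
include fr

lemma zero_ne_one : (0 : Fin n) ≠ 1 := by
  intro h01
  have := fr.h01
  rw [← h01, fr.h00] at this
  norm_num at this

lemma weight_dualIndex (i : Fin n) : weight (dualIndex i) = -weight i := by
  have h10 := fr.zero_ne_one.symm
  by_cases h0 : i = 0
  · simp [h0, dualIndex_zero, weight, h10]
  by_cases h1 : i = 1
  · simp [h1, dualIndex_one, weight, h10]
  · simp [dualIndex_of_ne h0 h1, weight, h0, h1]

variable (hg : IsPseudoRiemannian g)
include hg

lemma gdot_eq (a b : Fin n) : gdot g x (fr.e a) (fr.e b) = if b = dualIndex a then 1 else 0 := by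
  have h01 := fr.zero_ne_one
  have h10 := h01.symm
  have two_le {i : Fin n} (h0 : i ≠ 0) (h1 : i ≠ 1) := (two_le_val_iff h01 i).2 ⟨h0, h1⟩
  have label (i : Fin n) : i = 0 ∨ i = 1 ∨ i ≠ 0 ∧ i ≠ 1 := by tauto
  obtain rfl | rfl | ⟨ha0, ha1⟩ := label a <;> obtain rfl | rfl | ⟨hb0, hb1⟩ := label b
  · simp [fr.h00, dualIndex_zero, h01]
  · simp [fr.h01, dualIndex_zero]
  · simp [fr.h0i b (two_le hb0 hb1), dualIndex_zero, hb1]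
  · simp [hg.gdot_comm x (fr.e 1), fr.h01, dualIndex_one]
  · simp [fr.h11, dualIndex_one, h10]
  · simp [fr.h1i b (two_le hb0 hb1), dualIndex_one, hb0]
  · simp [hg.gdot_comm x (fr.e a), fr.h0i a (two_le ha0 ha1), dualIndex_of_ne ha0 ha1, ha0.symm]
  · simp [hg.gdot_comm x (fr.e a), fr.h1i a (two_le ha0 ha1), dualIndex_of_ne ha0 ha1, ha1.symm]
  · simp [fr.hij a b (two_le ha0 ha1) (two_le hb0 hb1), dualIndex_of_ne ha0 ha1, eq_comm]

lemma transpose_mul_eq_one :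
    (Matrix.of fr.e)ᵀ * ((Matrix.of fr.e).submatrix dualIndex id * g x) = 1 := by
  refine mul_eq_one_comm.1 ?_
  ext a b
  rw [mul_mul_transpose_apply, Matrix.one_apply]
  exact (fr.gdot_eq hg _ _).trans (by rw [dualIndex_dualIndex]; simp only [eq_comm])

lemma inv_apply (p q : Fin n) : (g x)⁻¹ p q = ∑ a, fr.e a p * fr.e (dualIndex a) q := by
  have hinv : (g x)⁻¹ = (Matrix.of fr.e)ᵀ * (Matrix.of fr.e).submatrix dualIndex id :=
    Matrix.inv_eq_left_inv (by rw [Matrix.mul_assoc, fr.transpose_mul_eq_one hg])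
  simp [hinv, Matrix.mul_apply]

lemma sum_gdot_smul (Y : Fin n → ℝ) :
    ∑ a, gdot g x (fr.e (dualIndex a)) Y • fr.e a = Y := by
  conv_rhs => rw [← Matrix.one_mulVec Y, ← fr.transpose_mul_eq_one hg,
    ← Matrix.mulVec_mulVec, ← Matrix.mulVec_mulVec]
  ext q
  simp [gdot, Matrix.mulVec, dotProduct, Finset.mul_sum, mul_comm (fr.e _ q), mul_assoc,
    mul_left_comm]

end NullFrameAt

end Lorentz

/-! ### The boost weight filtration -/

section Evaluation

variable {n : ℕ} {ι κ : Type*} [Fintype ι] [DecidableEq ι] [Fintype κ] [DecidableEq κ]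

lemma eval_relabel (e : ι ≃ κ) (T : Pt n → Tensor n ι) (x : Pt n) (Y : κ → Fin n → ℝ) :
    eval (relabel e T x) Y = eval (T x) (Y ∘ e) := by
  simp only [eval_apply, relabel]
  refine Fintype.sum_equiv (e.symm.arrowCongr (Equiv.refl _)) _ _ fun idx => ?_
  have harrow : e.symm.arrowCongr (Equiv.refl (Fin n)) idx = idx ∘ e := by
    ext i; simp [Equiv.arrowCongr]
  rw [harrow]
  congr 1
  exact (e.prod_comp fun m => Y m (idx m)).symm

lemma eval_tensorMul (T : Pt n → Tensor n ι) (U : Pt n → Tensor n κ) (x : Pt n)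
    (Y : ι ⊕ κ → Fin n → ℝ) :
    eval (tensorMul T U x) Y = eval (T x) (Y ∘ Sum.inl) * eval (U x) (Y ∘ Sum.inr) := by
  simp only [eval_apply, tensorMul]
  rw [Fintype.sum_mul_sum, ← Fintype.sum_prod_type']
  refine Fintype.sum_equiv (Equiv.sumArrowEquivProdArrow ι κ (Fin n)) _ _ fun idx => ?_
  simp only [Equiv.sumArrowEquivProdArrow, Equiv.coe_fn_mk, Fintype.prod_sum_type,
    Function.comp_apply]
  ring

lemma eval_sumElim (t : Tensor n (ι ⊕ κ)) (Y : ι → Fin n → ℝ) (Z : κ → Fin n → ℝ) :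
    eval t (Sum.elim Y Z)
      = ∑ idx, (∑ jdx, t (Sum.elim idx jdx) * ∏ m, Z m (jdx m)) * ∏ m, Y m (idx m) := by
  simp only [eval_apply, Finset.sum_mul]
  rw [← Fintype.sum_prod_type']
  refine Fintype.sum_equiv (Equiv.sumArrowEquivProdArrow ι κ (Fin n)) _ _ fun idx => ?_
  simp only [Equiv.sumArrowEquivProdArrow, Equiv.coe_fn_mk, Fintype.prod_sum_type,
    Sum.elim_comp_inl_inr, Sum.elim_inl, Sum.elim_inr, Function.comp_apply]
  ring

variable [NeZero n] {g : MetricField n} {x : Pt n}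

lemma NullFrameAt.eval_contract (fr : NullFrameAt g x) (hg : IsPseudoRiemannian g)
    (T : Pt n → Tensor n (ι ⊕ Bool)) (Y : ι → Fin n → ℝ) :
    eval (contract g T x) Y
      = ∑ a, eval (T x) (Sum.elim Y fun b => cond b (fr.e (dualIndex a)) (fr.e a)) := by
  simp only [eval_sumElim]
  rw [eval_apply, Finset.sum_comm]
  refine Finset.sum_congr rfl fun idx _ => ?_
  rw [← Finset.sum_mul, contract_apply]
  congr 1
  have hpair (a : Fin n) : ∑ jdx : Bool → Fin n, T x (Sum.elim idx jdx)
        * ∏ m, (cond m (fr.e (dualIndex a)) (fr.e a)) (jdx m)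
      = ∑ p, ∑ q, fr.e a p * fr.e (dualIndex a) q
        * T x (Sum.elim idx fun b => cond b q p) := by
    rw [← Fintype.sum_prod_type', ← Equiv.sum_comp (Equiv.boolArrowEquivProd (Fin n)).symm]
    refine Finset.sum_congr rfl fun p _ => ?_
    simp [Equiv.boolArrowEquivProd, Bool.cond_eq_ite, mul_comm (fr.e (dualIndex a) _),
      mul_comm (T x _)]
  simp only [hpair, fr.inv_apply hg, Finset.sum_mul]
  exact (Finset.sum_congr rfl fun p _ => Finset.sum_comm).trans Finset.sum_comm

lemma NullFrameAt.eval_eq_sum (fr : NullFrameAt g x) (hg : IsPseudoRiemannian g)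
    (t : Tensor n ι) (Y : ι → Fin n → ℝ) :
    eval t Y = ∑ a : ι → Fin n,
      (∏ m, gdot g x (fr.e (dualIndex (a m))) (Y m)) * eval t (fr.e ∘ a) := by
  conv_lhs => rw [← funext fun m => fr.sum_gdot_smul hg (Y m)]
  simp only [MultilinearMap.map_sum, MultilinearMap.map_smul_univ, smul_eq_mul,
    Function.comp_def]

lemma NullFrameAt.eq_zero_of_eval_eq_zero (fr : NullFrameAt g x) (hg : IsPseudoRiemannian g)
    {t : Tensor n ι} (h : ∀ a : ι → Fin n, eval t (fr.e ∘ a) = 0) : t = 0 := by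
  ext idx
  rw [← eval_single t idx, fr.eval_eq_sum hg]
  simp [h]

end Evaluation

section Filtration

variable {n : ℕ}

/-- The vector `X` at `x` has only components of boost weight at least `w` with respect to the null
direction `ℓ`: it lies in the step `w` of the filtration `⊤ ⊇ ℓ^⊥ ⊇ ⟨ℓ⟩ ⊇ 0`, whose proper
steps are numbered `0`, `1`, `2`. -/
def HasBoostWeightGE (g : MetricField n) (ℓ : VecField n) (x : Pt n) (w : ℤ) (X : Fin n → ℝ) :
    Prop :=
  (0 ≤ w → gdot g x X (ℓ x) = 0) ∧ (1 ≤ w → ∃ c : ℝ, X = c • ℓ x) ∧ (2 ≤ w → X = 0)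

/-- The tensor `t` at `x` has boost order at most `b` with respect to the null direction `ℓ`. This
is `BoostOrderLE` without frames. -/
def HasBoostOrderAt {ι : Type*} [Fintype ι] [DecidableEq ι] (g : MetricField n) (ℓ : VecField n)
    (x : Pt n) (b : ℤ) (t : Tensor n ι) : Prop :=
  ∀ (Y : ι → Fin n → ℝ) (w : ι → ℤ), (∀ m, HasBoostWeightGE g ℓ x (w m) (Y m)) →
    b < ∑ m, w m → eval t Y = 0

/-- The tensor field `T` is smooth and has boost order at most `b` everywhere. -/
structure HasBoostOrder {ι : Type*} [Fintype ι] [DecidableEq ι] (g : MetricField n)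
    (ℓ : VecField n) (b : ℤ) (T : Pt n → Tensor n ι) : Prop where
  contDiff : ContDiff ℝ ∞ T
  boostOrderAt : ∀ x, HasBoostOrderAt g ℓ x b (T x)

variable {g : MetricField n} {ℓ : VecField n} {x : Pt n}

lemma HasBoostWeightGE.gdot_eq_zero (hg : IsPseudoRiemannian g) {u v : ℤ} {X Y : Fin n → ℝ}
    (hX : HasBoostWeightGE g ℓ x u X) (hY : HasBoostWeightGE g ℓ x v Y) (huv : 0 < u + v) :
    gdot g x X Y = 0 := by
  wlog h : v ≤ u generalizing u v X Y
  · rw [hg.gdot_comm, this hY hX (by omega) (by omega)]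
  by_cases hv : 0 ≤ v
  · obtain ⟨c, rfl⟩ := hX.2.1 (by omega)
    have := hY.1 hv
    rw [hg.gdot_comm, gdot_eq_toBilin'] at this
    simp [gdot_eq_toBilin', this]
  · rw [hX.2.2 (by omega), gdot_eq_toBilin', map_zero, LinearMap.zero_apply]

namespace NullFrameAt

variable [NeZero n] (fr : NullFrameAt g x) (hfr : fr.e 0 = ℓ x) (hg : IsPseudoRiemannian g)
include hfr hg

lemma hasBoostWeightGE (a : Fin n) : HasBoostWeightGE g ℓ x (weight a) (fr.e a) := by
  refine ⟨fun h => ?_, fun h => ?_, fun h => ?_⟩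
  · rw [← hfr, fr.gdot_eq hg, if_neg]
    intro h0
    have := fr.weight_dualIndex a
    rw [← h0, weight_zero] at this
    omega
  · have ha : a = 0 := by
      by_contra ha
      have := weight_lt_one ha
      omega
    exact ⟨1, by rw [ha, hfr, one_smul]⟩
  · have := weight_le_one a
    omega

-- The filtration is self-dual with respect to the metric.
lemma hasBoostWeightGE_of_gdot {w : ℤ} {Z : Fin n → ℝ}
    (h : ∀ v Y, HasBoostWeightGE g ℓ x v Y → 0 < w + v → gdot g x Y Z = 0) :
    HasBoostWeightGE g ℓ x w Z := by
  have hframe (a : Fin n) (ha : weight a < w) : gdot g x (fr.e (dualIndex a)) Z = 0 :=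
    h _ _ (fr.hasBoostWeightGE hfr hg _) (by rw [fr.weight_dualIndex]; omega)
  refine ⟨fun hw => ?_, fun hw => ?_, fun hw => ?_⟩
  · rw [← hfr, hg.gdot_comm]
    exact h _ _ (fr.hasBoostWeightGE hfr hg 0) (by rw [weight_zero]; omega)
  · refine ⟨gdot g x (fr.e (dualIndex 0)) Z, ?_⟩
    rw [← hfr]
    conv_lhs => rw [← fr.sum_gdot_smul hg Z]
    refine Finset.sum_eq_single 0 (fun a _ ha => ?_) (by simp)
    rw [hframe a ((weight_lt_one ha).trans_le hw), zero_smul]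
  · rw [← fr.sum_gdot_smul hg Z]
    refine Finset.sum_eq_zero fun a _ => ?_
    rw [hframe a ((weight_le_one a).trans_lt (by omega)), zero_smul]

variable {ι : Type*} [Fintype ι] [DecidableEq ι]

lemma hasBoostOrderAt_iff {b : ℤ} {t : Tensor n ι} :
    HasBoostOrderAt g ℓ x b t
      ↔ ∀ a : ι → Fin n, b < ∑ m, weight (a m) → eval t (fr.e ∘ a) = 0 := by
  refine ⟨fun h a ha => h _ (fun m => weight (a m)) (fun m => fr.hasBoostWeightGE hfr hg _) ha,
    fun h Y w hY hw => ?_⟩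
  rw [fr.eval_eq_sum hg]
  refine Finset.sum_eq_zero fun a _ => ?_
  by_cases ha : b < ∑ m, weight (a m)
  · rw [h a ha, mul_zero]
  · obtain ⟨m, -, hm⟩ := Finset.exists_lt_of_sum_lt ((not_lt.1 ha).trans_lt hw)
    have hpair : gdot g x (fr.e (dualIndex (a m))) (Y m) = 0 :=
      (fr.hasBoostWeightGE hfr hg _).gdot_eq_zero hg (hY m) (by rw [fr.weight_dualIndex]; omega)
    rw [Finset.prod_eq_zero (Finset.mem_univ m) hpair, zero_mul]

end NullFrameAt

namespace HasBoostOrder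

variable {ι κ : Type*} [Fintype ι] [DecidableEq ι] [Fintype κ] [DecidableEq κ] {b c : ℤ}
  {T U : Pt n → Tensor n ι}

lemma mono (hT : HasBoostOrder g ℓ b T) (hbc : b ≤ c) : HasBoostOrder g ℓ c T :=
  ⟨hT.contDiff, fun x Y w hY hw => hT.boostOrderAt x Y w hY (hbc.trans_lt hw)⟩

lemma add (hT : HasBoostOrder g ℓ b T) (hU : HasBoostOrder g ℓ b U) :
    HasBoostOrder g ℓ b (T + U) :=
  ⟨hT.contDiff.add hU.contDiff, fun x Y w hY hw => by
    rw [Pi.add_apply, map_add, add_apply, hT.boostOrderAt x Y w hY hw,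
      hU.boostOrderAt x Y w hY hw, add_zero]⟩

lemma neg (hT : HasBoostOrder g ℓ b T) : HasBoostOrder g ℓ b (-T) :=
  ⟨hT.contDiff.neg, fun x Y w hY hw => by
    rw [Pi.neg_apply, map_neg, neg_apply, hT.boostOrderAt x Y w hY hw, neg_zero]⟩

lemma zero (b : ℤ) : HasBoostOrder g ℓ b (0 : Pt n → Tensor n ι) :=
  ⟨contDiff_const, fun x Y w _ _ => by simp⟩

lemma relabel (hT : HasBoostOrder g ℓ b T) (e : ι ≃ κ) : HasBoostOrder g ℓ b (relabel e T) :=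
  ⟨contDiff_relabel hT.contDiff e, fun x Y w hY hw => by
    rw [eval_relabel]
    exact hT.boostOrderAt x _ (w ∘ e) (fun i => hY _) (by rwa [← e.sum_comp] at hw)⟩

lemma tensorMul {V : Pt n → Tensor n κ} (hT : HasBoostOrder g ℓ b T)
    (hV : HasBoostOrder g ℓ c V) : HasBoostOrder g ℓ (b + c) (tensorMul T V) :=
  ⟨contDiff_tensorMul hT.contDiff hV.contDiff, fun x Y w hY hw => by
    rw [eval_tensorMul]
    rw [Fintype.sum_sum_type] at hw
    by_cases h : b < ∑ i, w (Sum.inl i)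
    · rw [hT.boostOrderAt x (Y ∘ Sum.inl) _ (fun i => hY _) h, zero_mul]
    · rw [hV.boostOrderAt x (Y ∘ Sum.inr) _ (fun i => hY _) (by omega), mul_zero]⟩

lemma contract [NeZero n] (H : NullBackground g ℓ) {T : Pt n → Tensor n (ι ⊕ Bool)}
    (hT : HasBoostOrder g ℓ b T) : HasBoostOrder g ℓ b (contract g T) :=
  have hg := H.isPseudoRiemannian
  ⟨hg.contDiff_contract hT.contDiff, fun x Y w hY hw => by
    obtain ⟨fr, hfr⟩ := H.exists_nullFrameAt x
    rw [fr.eval_contract hg]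
    refine Finset.sum_eq_zero fun a _ => hT.boostOrderAt x _
      (Sum.elim w fun b => cond b (weight (dualIndex a)) (weight a)) ?_ ?_
    · rintro (m | _ | _)
      exacts [hY m, fr.hasBoostWeightGE hfr hg _, fr.hasBoostWeightGE hfr hg _]
    · simpa [Fintype.sum_sum_type, fr.weight_dualIndex] using hw⟩

end HasBoostOrder

end Filtration

/-! ### Directional derivatives and boost order -/

section Directional

variable {n : ℕ} {ι : Type*} [Fintype ι] [DecidableEq ι]

/-- The covariant derivative `∇_X T` of a tensor field along a vector `X` at `x`. -/
def dirCovD (g : MetricField n) (X : Fin n → ℝ) (T : Pt n → Tensor n ι) (x : Pt n) : Tensor n ι :=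
  ∑ a, X a • coordCovD g a T x

/-- The covariant derivative `∇_X Y` of a vector field along a vector `X` at `x`. -/
def dirCovDVec (g : MetricField n) (X : Fin n → ℝ) (Y : VecField n) (x : Pt n) : Fin n → ℝ :=
  ∑ a, X a • coordCovDVec g a Y x

lemma sum_mul_pd_eval (g : MetricField n) (X : Fin n → ℝ) {T : Pt n → Tensor n ι}
    (hT : ContDiff ℝ ∞ T) {Y : ι → Pt n → Fin n → ℝ} (hY : ∀ m, ContDiff ℝ ∞ (Y m)) (x : Pt n) :
    ∑ a, X a * pd (fun y => eval (T y) (fun m => Y m y)) a x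
      = eval (dirCovD g X T x) (fun m => Y m x)
        + ∑ m, eval (T x)
            (Function.update (fun m => Y m x) m (dirCovDVec g X (Y m) x)) := by
  simp only [pd_eval_eq_coordCovD g _ hT hY, mul_add, Finset.sum_add_distrib, dirCovD, dirCovDVec,
    map_sum, map_smul, sum_apply, smul_apply,
    MultilinearMap.map_update_sum, MultilinearMap.map_update_smul, smul_eq_mul, Finset.mul_sum]
  rw [Finset.sum_comm (f := fun a m => X a * _)]

lemma eval_cons {k : ℕ} (t : Tensor n (Fin (k + 1))) (X : Fin n → ℝ) (Y : Fin k → Fin n → ℝ) :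
    eval t (Fin.cons X Y : Fin (k + 1) → Fin n → ℝ)
      = ∑ a, X a * eval (fun i => t (Fin.cons a i)) Y := by
  simp only [eval_apply, Finset.mul_sum]
  rw [← (Fin.consEquiv fun _ => Fin n).sum_comp, Fintype.sum_prod_type]
  refine Finset.sum_congr rfl fun a _ => Finset.sum_congr rfl fun i _ => ?_
  have hcons : Fin.consEquiv (fun _ => Fin n) (a, i) = Fin.cons a i := rfl
  simp only [hcons, Fin.prod_univ_succ, Fin.cons_zero, Fin.cons_succ]
  ring

lemma eval_vecOne (t : Tensor n (Fin 1)) (X : Fin n → ℝ) :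
    eval t ![X] = ∑ a, X a * t ![a] := by
  refine (eval_cons t X ![]).trans (Finset.sum_congr rfl fun a _ => ?_)
  rw [eval_apply, Fintype.sum_unique, Fin.prod_univ_zero, mul_one, Subsingleton.elim default ![]]
  rfl

lemma eval_vecTwo (t : Tensor n (Fin 2)) (X Y : Fin n → ℝ) :
    eval t ![X, Y] = ∑ a, X a * ∑ b, Y b * t ![a, b] :=
  (eval_cons t X ![Y]).trans (Finset.sum_congr rfl fun _ _ => by rw [eval_vecOne]; rfl)

lemma eval_metricTensor (g : MetricField n) (x : Pt n) (X Y : Fin n → ℝ) :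
    eval (metricTensor g x) ![X, Y] = gdot g x X Y := by
  simp only [eval_vecTwo, gdot, metricTensor, Finset.mul_sum]
  exact Finset.sum_congr rfl fun a _ => Finset.sum_congr rfl fun b _ => by simp; ring

lemma eval_lowerField (g : MetricField n) (ℓ : VecField n) (x : Pt n) (Y : Fin n → ℝ) :
    eval (lowerField g ℓ x) ![Y] = gdot g x Y (ℓ x) := by
  simp [eval_vecOne, lowerField, lower, gdot, Finset.mul_sum, mul_left_comm, mul_assoc]

lemma eval_covD_cons {k : ℕ} (g : MetricField n) (T : TensorField n k) (x : Pt n)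
    (X : Fin n → ℝ) (Y : Fin k → Fin n → ℝ) :
    eval (covD g T x) (Fin.cons X Y : Fin (k + 1) → Fin n → ℝ) = eval (dirCovD g X T x) Y := by
  rw [eval_cons]
  simp only [dirCovD, map_sum, map_smul, sum_apply, smul_apply,
    smul_eq_mul]
  rfl

namespace IsPseudoRiemannian

variable {g : MetricField n} (hg : IsPseudoRiemannian g)
include hg

lemma dirCovD_metricTensor (X : Fin n → ℝ) (x : Pt n) : dirCovD g X (metricTensor g) x = 0 := by
  simp [dirCovD, hg.coordCovD_metricTensor]

lemma sum_mul_pd_gdot (X : Fin n → ℝ) {Y Z : VecField n} (hY : ContDiff ℝ ∞ Y)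
    (hZ : ContDiff ℝ ∞ Z) (x : Pt n) :
    ∑ a, X a * pd (fun y => gdot g y (Y y) (Z y)) a x
      = gdot g x (dirCovDVec g X Y x) (Z x) + gdot g x (Y x) (dirCovDVec g X Z x) := by
  have leibniz := sum_mul_pd_eval g X hg.contDiff_metricTensor (Y := ![Y, Z])
    (Fin.forall_fin_two.2 ⟨hY, hZ⟩) x
  have hpair (y : Pt n) : (fun m => (![Y, Z] : Fin 2 → VecField n) m y) = ![Y y, Z y] := by
    ext m; fin_cases m <;> rfl
  have hupdate_zero (V : Fin n → ℝ) : Function.update ![Y x, Z x] 0 V = ![V, Z x] := by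
    ext m; fin_cases m <;> rfl
  have hupdate_one (V : Fin n → ℝ) : Function.update ![Y x, Z x] 1 V = ![Y x, V] := by
    ext m; fin_cases m <;> rfl
  simpa only [hpair, eval_metricTensor, hg.dirCovD_metricTensor, map_zero,
    zero_apply, zero_add, Fin.sum_univ_two, hupdate_zero, hupdate_one,
    Matrix.cons_val_zero, Matrix.cons_val_one] using leibniz

lemma contDiff_lowerField {ℓ : VecField n} (hℓ : ContDiff ℝ ∞ ℓ) :
    ContDiff ℝ ∞ (lowerField g ℓ) :=
  contDiff_pi.2 fun idx => ContDiff.sum (s := Finset.univ) fun b _ =>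
    (hg.contDiff (idx 0) b).mul (contDiff_pi.1 hℓ b)

lemma contDiff_gdot {Y Z : VecField n} (hY : ContDiff ℝ ∞ Y) (hZ : ContDiff ℝ ∞ Z) :
    ContDiff ℝ ∞ fun y => gdot g y (Y y) (Z y) :=
  ContDiff.sum fun a _ => ContDiff.sum fun b _ =>
    ((hg.contDiff a b).mul (contDiff_pi.1 hY a)).mul (contDiff_pi.1 hZ b)

lemma eval_covD_lowerField {ℓ : VecField n} (hℓ : ContDiff ℝ ∞ ℓ) (x : Pt n)
    (X Y : Fin n → ℝ) :
    eval (covD g (lowerField g ℓ) x) ![X, Y] = gdot g x (dirCovDVec g X ℓ x) Y := by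
  let K : VecField n := fun _ => Y
  have hK : ContDiff ℝ ∞ K := contDiff_const
  have leibniz := sum_mul_pd_eval g X (hg.contDiff_lowerField hℓ) (Y := fun _ => K)
    (fun _ => hK) x
  have compat := hg.sum_mul_pd_gdot X hK hℓ x
  have hconst : (fun _ => Y : Fin 1 → Fin n → ℝ) = ![Y] := Matrix.const_fin1_eq Y
  have hupdate (V : Fin n → ℝ) : Function.update ![Y] 0 V = ![V] := by
    ext m; fin_cases m; rfl
  simp only [K, hconst, eval_lowerField, Fin.sum_univ_one, hupdate] at leibniz compat
  have hcov : eval (covD g (lowerField g ℓ) x) ![X, Y]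
      = eval (dirCovD g X (lowerField g ℓ) x) ![Y] := eval_covD_cons g _ x X ![Y]
  rw [hcov, hg.gdot_comm x _ Y]
  linarith

end IsPseudoRiemannian

end Directional

section Filtration

variable {n : ℕ} {g : MetricField n} {ℓ : VecField n} {x : Pt n}

namespace HasBoostWeightGE

lemma of_neg {w : ℤ} (hw : w < 0) (X : Fin n → ℝ) : HasBoostWeightGE g ℓ x w X :=
  ⟨fun h => by omega, fun h => by omega, fun h => by omega⟩

lemma zero (w : ℤ) : HasBoostWeightGE g ℓ x w 0 :=
  ⟨fun _ => by simp [gdot], fun _ => ⟨0, by simp⟩, fun _ => rfl⟩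

lemma mono {v w : ℤ} {X : Fin n → ℝ} (h : HasBoostWeightGE g ℓ x w X) (hvw : v ≤ w) :
    HasBoostWeightGE g ℓ x v X :=
  ⟨fun hv => h.1 (hv.trans hvw), fun hv => h.2.1 (hv.trans hvw), fun hv => h.2.2 (hv.trans hvw)⟩

lemma smul {w : ℤ} {X : Fin n → ℝ} (h : HasBoostWeightGE g ℓ x w X) (c : ℝ) :
    HasBoostWeightGE g ℓ x w (c • X) := by
  refine ⟨fun hw => ?_, fun hw => ?_, fun hw => by rw [h.2.2 hw, smul_zero]⟩
  · have := h.1 hw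
    rw [gdot_eq_toBilin'] at this ⊢
    rw [map_smul, LinearMap.smul_apply, this, smul_zero]
  · obtain ⟨d, rfl⟩ := h.2.1 hw
    exact ⟨c * d, smul_smul c d _⟩

end HasBoostWeightGE

namespace NullBackground

variable (H : NullBackground g ℓ)
include H

lemma contDiff : ContDiff ℝ ∞ ℓ := contDiff_pi.2 H.null.1

lemma hasBoostWeightGE_self (x : Pt n) : HasBoostWeightGE g ℓ x 1 (ℓ x) :=
  ⟨fun _ => H.null.2.2 x, fun _ => ⟨1, (one_smul ℝ _).symm⟩, fun h => by omega⟩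

variable [NeZero n] (hA : HasBoostOrder g ℓ (-1) (covD g (lowerField g ℓ)))
include hA

lemma hasBoostWeightGE_dirCovDVec_self {u : ℤ} {X : Fin n → ℝ}
    (hX : HasBoostWeightGE g ℓ x u X) :
    HasBoostWeightGE g ℓ x (u + 1) (dirCovDVec g X ℓ x) := by
  have hg := H.isPseudoRiemannian
  obtain ⟨fr, hfr⟩ := H.exists_nullFrameAt x
  refine fr.hasBoostWeightGE_of_gdot hfr hg fun v Y hY hv => ?_
  rw [hg.gdot_comm, ← hg.eval_covD_lowerField H.contDiff]
  exact hA.boostOrderAt x _ ![u, v] (Fin.forall_fin_two.2 ⟨hX, hY⟩)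
    (by simp [Fin.sum_univ_two]; omega)

lemma hasBoostWeightGE_dirCovDVec_smul {u : ℤ} {X : Fin n → ℝ}
    (hX : HasBoostWeightGE g ℓ x u X) (c : ℝ) :
    HasBoostWeightGE g ℓ x (1 + min u 0) (dirCovDVec g X (fun y => c • ℓ y) x) := by
  have hℓ : Differentiable ℝ ℓ := H.contDiff.differentiable (by simp)
  have hconst : dirCovDVec g X (fun y => c • ℓ y) x = c • dirCovDVec g X ℓ x := by
    have hpd (a e : Fin n) : pd (fun y => c * ℓ y e) a x = c * pd (fun y => ℓ y e) a x := by
      rw [pd_mul (by fun_prop) (differentiable_pi.1 hℓ e x), pd_const]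
      ring
    ext e
    simp [dirCovDVec, coordCovDVec, hpd, Matrix.mulVec_smul, Finset.mul_sum, mul_add,
      mul_left_comm]
  rw [hconst]
  refine (HasBoostWeightGE.mono ?_ (?_ : 1 + min u 0 ≤ max u (-1) + 1)).smul c
  · rcases max_choice u (-1) with h | h <;> rw [h]
    exacts [H.hasBoostWeightGE_dirCovDVec_self hA hX,
      H.hasBoostWeightGE_dirCovDVec_self hA (.of_neg (by simp) X)]
  · omega

lemma gdot_dirCovDVec_eq_zero {u : ℤ} {X : Fin n → ℝ} (hX : HasBoostWeightGE g ℓ x u X)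
    (hu : 0 ≤ u) {Y : VecField n} (hY : ContDiff ℝ ∞ Y) (horth : ∀ y, gdot g y (Y y) (ℓ y) = 0) :
    gdot g x (dirCovDVec g X Y x) (ℓ x) = 0 := by
  have hg := H.isPseudoRiemannian
  have hpair : gdot g x (Y x) (dirCovDVec g X ℓ x) = 0 :=
    HasBoostWeightGE.gdot_eq_zero hg (u := 0) (v := u + 1)
      ⟨fun _ => horth x, fun h => by omega, fun h => by omega⟩
      (H.hasBoostWeightGE_dirCovDVec_self hA hX) (by omega)
  have compat := hg.sum_mul_pd_gdot X hY H.contDiff x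
  simpa [horth, pd_const, hpair] using compat.symm

lemma exists_extension (x : Pt n) {w : ℤ} {v : Fin n → ℝ} (hv : HasBoostWeightGE g ℓ x w v) :
    ∃ Y : VecField n, ContDiff ℝ ∞ Y ∧ Y x = v ∧ (∀ y, HasBoostWeightGE g ℓ y w (Y y)) ∧
      ∀ u X, HasBoostWeightGE g ℓ x u X →
        HasBoostWeightGE g ℓ x (w + min u 0) (dirCovDVec g X Y x) := by
  have hg := H.isPseudoRiemannian
  have cases : w < 0 ∨ w = 0 ∨ w = 1 ∨ 2 ≤ w := by omega
  obtain hw | rfl | rfl | hw := cases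
  · exact ⟨fun _ => v, contDiff_const, rfl, fun y => .of_neg hw v,
      fun u X _ => .of_neg (by omega) _⟩
  · obtain ⟨fr, hfr⟩ := H.exists_nullFrameAt x
    let N := fr.e 1
    let Y : VecField n := fun y => gdot g y N (ℓ y) • v - gdot g y v (ℓ y) • N
    have hY : ContDiff ℝ ∞ Y :=
      have hdot (Z : Fin n → ℝ) : ContDiff ℝ ∞ fun y => gdot g y Z (ℓ y) :=
        hg.contDiff_gdot (contDiff_const (c := Z)) H.contDiff
      ((hdot N).smul contDiff_const).sub ((hdot v).smul contDiff_const)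
    have horth (y : Pt n) : gdot g y (Y y) (ℓ y) = 0 := by
      simp only [Y, gdot_eq_toBilin', map_sub, map_smul, LinearMap.sub_apply,
        LinearMap.smul_apply, smul_eq_mul]
      ring
    have hYx : Y x = v := by
      simp only [Y, N, ← hfr, hg.gdot_comm x (fr.e 1), fr.h01, one_smul]
      rw [hfr, hv.1 le_rfl, zero_smul, sub_zero]
    exact ⟨Y, hY, hYx, fun y => ⟨fun _ => horth y, fun h => by omega, fun h => by omega⟩,
      fun u X hX => ⟨fun hu => H.gdot_dirCovDVec_eq_zero hA hX (by omega) hY horth,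
        fun h => by omega, fun h => by omega⟩⟩
  · obtain ⟨c, rfl⟩ := hv.2.1 le_rfl
    exact ⟨fun y => c • ℓ y, (contDiff_const (c := c)).smul H.contDiff, rfl,
      fun y => (H.hasBoostWeightGE_self y).smul c,
      fun u X hX => H.hasBoostWeightGE_dirCovDVec_smul hA hX c⟩
  · have hzero (X : Fin n → ℝ) : dirCovDVec g X 0 x = 0 := by
      ext e
      simp [dirCovDVec, coordCovDVec, pd_const]
    exact ⟨0, contDiff_const, (hv.2.2 hw).symm, fun y => .zero w,
      fun u X _ => by rw [hzero]; exact .zero _⟩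

end NullBackground

namespace HasBoostOrder

variable [NeZero n] {ι : Type*} [Fintype ι] [DecidableEq ι] {b : ℤ}

lemma eval_dirCovD_eq_zero (H : NullBackground g ℓ)
    (hA : HasBoostOrder g ℓ (-1) (covD g (lowerField g ℓ))) {T : Pt n → Tensor n ι}
    (hT : HasBoostOrder g ℓ b T) {u : ℤ} {X : Fin n → ℝ} (hX : HasBoostWeightGE g ℓ x u X)
    {Y : ι → Fin n → ℝ} {w : ι → ℤ} (hY : ∀ m, HasBoostWeightGE g ℓ x (w m) (Y m))
    (hb : b < ∑ m, w m + min u 0) : eval (dirCovD g X T x) Y = 0 := by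
  choose Z hZ hZx hZw hZX using fun m => H.exists_extension hA x (hY m)
  have hvanish (y : Pt n) : eval (T y) (fun m => Z m y) = 0 :=
    hT.boostOrderAt y _ w (fun m => hZw m y) (by omega)
  have hslot (m : ι) : eval (T x) (Function.update Y m (dirCovDVec g X (Z m) x)) = 0 := by
    refine hT.boostOrderAt x _ (Function.update w m (w m + min u 0)) (fun j => ?_) ?_
    · obtain rfl | hj := eq_or_ne j m
      · simpa only [Function.update_self] using hZX j u X hX
      · simpa only [Function.update_of_ne hj] using hY j
    · rw [Finset.sum_update_of_mem (Finset.mem_univ m)]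
      have := Finset.add_sum_erase Finset.univ w (Finset.mem_univ m)
      rw [Finset.sdiff_singleton_eq_erase]
      omega
  have leibniz := sum_mul_pd_eval g X hT.contDiff hZ x
  simpa [hvanish, pd_const, hZx, hslot] using leibniz.symm

end HasBoostOrder

end Filtration

/-! ### Derivatives along the null direction -/

section CovDAlong

variable {n : ℕ} {g : MetricField n} {ℓ : VecField n} {ι κ : Type*} [Fintype ι] [DecidableEq ι]
  [Fintype κ] [DecidableEq κ]

/-- The covariant derivative `∇_ℓ T` along a vector field. -/
def covDAlong (g : MetricField n) (ℓ : VecField n) (T : Pt n → Tensor n ι) : Pt n → Tensor n ι :=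
  fun x => dirCovD g (ℓ x) T x

lemma covDAlong_apply (T : Pt n → Tensor n ι) (x : Pt n) (idx : ι → Fin n) :
    covDAlong g ℓ T x idx = ∑ a, ℓ x a * coordCovD g a T x idx := by
  simp [covDAlong, dirCovD]

lemma IsPseudoRiemannian.contDiff_covDAlong (hg : IsPseudoRiemannian g) (hℓ : ContDiff ℝ ∞ ℓ)
    {T : Pt n → Tensor n ι} (hT : ContDiff ℝ ∞ T) : ContDiff ℝ ∞ (covDAlong g ℓ T) :=
  ContDiff.sum (s := Finset.univ) fun a _ =>
    (contDiff_pi.1 hℓ a).smul (hg.contDiff_coordCovD a hT)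

lemma covDAlong_add {T U : Pt n → Tensor n ι} (hT : ContDiff ℝ ∞ T) (hU : ContDiff ℝ ∞ U) :
    covDAlong g ℓ (T + U) = covDAlong g ℓ T + covDAlong g ℓ U := by
  ext x idx
  simp [covDAlong_apply, coordCovD_add g _ hT hU, mul_add, Finset.sum_add_distrib]

lemma covDAlong_neg (T : Pt n → Tensor n ι) : covDAlong g ℓ (-T) = -covDAlong g ℓ T := by
  ext x idx
  simp [covDAlong_apply, coordCovD_neg]

lemma covDAlong_zero : covDAlong g ℓ (0 : Pt n → Tensor n ι) = 0 := by
  ext x idx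
  simp [covDAlong_apply, coordCovD, pd_const]

lemma covDAlong_relabel (e : ι ≃ κ) (T : Pt n → Tensor n ι) :
    covDAlong g ℓ (relabel e T) = relabel e (covDAlong g ℓ T) := by
  ext x idx
  simp [covDAlong_apply, coordCovD_relabel, relabel]

lemma covDAlong_tensorMul {T : Pt n → Tensor n ι} {U : Pt n → Tensor n κ} (hT : ContDiff ℝ ∞ T)
    (hU : ContDiff ℝ ∞ U) :
    covDAlong g ℓ (tensorMul T U)
      = tensorMul (covDAlong g ℓ T) U + tensorMul T (covDAlong g ℓ U) := by
  ext x idx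
  simp [covDAlong_apply, coordCovD_tensorMul g _ hT hU, tensorMul, mul_add,
    Finset.sum_add_distrib, Finset.sum_mul, Finset.mul_sum, mul_assoc, mul_left_comm]

lemma IsPseudoRiemannian.covDAlong_contract (hg : IsPseudoRiemannian g)
    {T : Pt n → Tensor n (ι ⊕ Bool)} (hT : ContDiff ℝ ∞ T) :
    covDAlong g ℓ (contract g T) = contract g (covDAlong g ℓ T) := by
  ext x idx
  simp only [covDAlong_apply, hg.coordCovD_contract _ hT, contract_apply, Finset.mul_sum]
  rw [Finset.sum_comm]
  refine Finset.sum_congr rfl fun p _ => ?_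
  rw [Finset.sum_comm]
  simp only [mul_left_comm]

namespace HasBoostOrder

variable [NeZero n] (H : NullBackground g ℓ)
  (hA : HasBoostOrder g ℓ (-1) (covD g (lowerField g ℓ))) {b : ℤ}

include H hA

lemma covDAlong {T : Pt n → Tensor n ι} (hT : HasBoostOrder g ℓ b T) :
    HasBoostOrder g ℓ b (covDAlong g ℓ T) :=
  ⟨H.isPseudoRiemannian.contDiff_covDAlong H.contDiff hT.contDiff, fun x _ _ hY hw =>
    eval_dirCovD_eq_zero H hA hT (H.hasBoostWeightGE_self x) hY (by simpa using hw)⟩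

-- In a null frame, only the component of `∇ T` along `ℓ` could raise the boost order.
lemma covD {k : ℕ} {T : TensorField n k} (hT : HasBoostOrder (ι := Fin k) g ℓ b T)
    (hD : HasBoostOrder (ι := Fin k) g ℓ (b - 1) (VSI.covDAlong (ι := Fin k) g ℓ T)) :
    HasBoostOrder (ι := Fin (k + 1)) g ℓ b (covD g T) := by
  have hg := H.isPseudoRiemannian
  refine ⟨hg.contDiff_covD hT.contDiff, fun x => ?_⟩
  obtain ⟨fr, hfr⟩ := H.exists_nullFrameAt x
  refine (fr.hasBoostOrderAt_iff hfr hg).2 fun a ha => ?_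
  have hcons : fr.e ∘ a = Fin.cons (fr.e (a 0)) (fr.e ∘ Fin.tail a) := by
    ext m
    refine Fin.cases ?_ (fun j => ?_) m <;> rfl
  rw [Fin.sum_univ_succ] at ha
  rw [hcons, eval_covD_cons]
  obtain h0 | h0 := eq_or_ne (a 0) 0
  · rw [h0, weight_zero] at ha
    rw [h0, hfr]
    exact (fr.hasBoostOrderAt_iff hfr hg).1 (hD.boostOrderAt x) (Fin.tail a)
      (by simpa [Fin.tail] using sub_lt_iff_lt_add'.2 ha)
  · have hlt := weight_lt_one h0
    exact eval_dirCovD_eq_zero H hA hT (fr.hasBoostWeightGE hfr hg (a 0))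
      (w := fun m => weight (a m.succ)) (fun m => fr.hasBoostWeightGE hfr hg _) (by omega)

end HasBoostOrder

/-- The tensor field `T` has boost order at most `b`, and each of the first `m` derivatives along
`ℓ` lowers this bound by one. -/
def HasBoostOrderAlong (g : MetricField n) (ℓ : VecField n) : ℕ → ℤ → (Pt n → Tensor n ι) → Prop
  | 0, b, T => HasBoostOrder g ℓ b T
  | m + 1, b, T => HasBoostOrder g ℓ b T ∧ HasBoostOrderAlong g ℓ m (b - 1) (covDAlong g ℓ T)

namespace HasBoostOrderAlong

variable {m : ℕ} {b c : ℤ} {T U : Pt n → Tensor n ι}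

lemma hasBoostOrder (h : HasBoostOrderAlong g ℓ m b T) : HasBoostOrder g ℓ b T := by
  cases m
  exacts [h, h.1]

lemma mono (h : HasBoostOrderAlong g ℓ m b T) (hbc : b ≤ c) : HasBoostOrderAlong g ℓ m c T := by
  induction m generalizing b c T with
  | zero => exact HasBoostOrder.mono h hbc
  | succ m ih => exact ⟨h.1.mono hbc, ih h.2 (by omega)⟩

lemma pred (h : HasBoostOrderAlong g ℓ (m + 1) b T) : HasBoostOrderAlong g ℓ m b T := by
  induction m generalizing b T with
  | zero => exact h.1
  | succ m ih => exact ⟨h.1, ih h.2⟩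

lemma add (hT : HasBoostOrderAlong g ℓ m b T) (hU : HasBoostOrderAlong g ℓ m b U) :
    HasBoostOrderAlong g ℓ m b (T + U) := by
  induction m generalizing b T U with
  | zero => exact HasBoostOrder.add hT hU
  | succ m ih =>
    refine ⟨hT.1.add hU.1, ?_⟩
    rw [covDAlong_add hT.1.contDiff hU.1.contDiff]
    exact ih hT.2 hU.2

lemma neg (hT : HasBoostOrderAlong g ℓ m b T) : HasBoostOrderAlong g ℓ m b (-T) := by
  induction m generalizing b T with
  | zero => exact HasBoostOrder.neg hT
  | succ m ih =>
    refine ⟨hT.1.neg, ?_⟩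
    rw [covDAlong_neg]
    exact ih hT.2

lemma sub (hT : HasBoostOrderAlong g ℓ m b T) (hU : HasBoostOrderAlong g ℓ m b U) :
    HasBoostOrderAlong g ℓ m b (T - U) :=
  sub_eq_add_neg T U ▸ hT.add hU.neg

lemma zero (m : ℕ) (b : ℤ) : HasBoostOrderAlong g ℓ m b (0 : Pt n → Tensor n ι) := by
  induction m generalizing b with
  | zero => exact HasBoostOrder.zero b
  | succ m ih => exact ⟨HasBoostOrder.zero b, by rw [covDAlong_zero]; exact ih _⟩

lemma sum {ξ : Type*} (s : Finset ξ) {T : ξ → Pt n → Tensor n ι}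
    (h : ∀ z ∈ s, HasBoostOrderAlong g ℓ m b (T z)) :
    HasBoostOrderAlong g ℓ m b (∑ z ∈ s, T z) :=
  Finset.sum_induction _ _ (fun _ _ => add) (zero m b) h

lemma relabel (e : ι ≃ κ) (hT : HasBoostOrderAlong g ℓ m b T) :
    HasBoostOrderAlong g ℓ m b (relabel e T) := by
  induction m generalizing b T with
  | zero => exact HasBoostOrder.relabel hT e
  | succ m ih =>
    refine ⟨hT.1.relabel e, ?_⟩
    rw [covDAlong_relabel]
    exact ih hT.2

lemma contract [NeZero n] (H : NullBackground g ℓ) {T : Pt n → Tensor n (ι ⊕ Bool)}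
    (hT : HasBoostOrderAlong g ℓ m b T) :
    HasBoostOrderAlong g ℓ m b (contract g T) := by
  induction m generalizing b T with
  | zero => exact HasBoostOrder.contract H hT
  | succ m ih =>
    refine ⟨hT.1.contract H, ?_⟩
    rw [H.isPseudoRiemannian.covDAlong_contract hT.1.contDiff]
    exact ih hT.2

lemma tensorMul {V : Pt n → Tensor n κ} (hT : HasBoostOrderAlong g ℓ m b T)
    (hV : HasBoostOrderAlong g ℓ m c V) : HasBoostOrderAlong g ℓ m (b + c) (tensorMul T V) := by
  induction m generalizing b c T V with
  | zero => exact HasBoostOrder.tensorMul hT hV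
  | succ m ih =>
    refine ⟨hT.1.tensorMul hV.1, ?_⟩
    rw [covDAlong_tensorMul hT.1.contDiff hV.1.contDiff]
    exact ((ih hT.2 hV.pred).mono (by omega)).add ((ih hT.pred hV.2).mono (by omega))

end HasBoostOrderAlong

end CovDAlong

/-! ### Interior products and the commutator of `∇_ℓ` with `∇` -/

section InteriorProduct

variable {n k : ℕ} {g : MetricField n}

/-- The interior product `ι_X T = T(X, ⋅, …, ⋅)`. -/
def interiorProd (X : VecField n) (T : Pt n → Tensor n (Fin (k + 1))) : Pt n → Tensor n (Fin k) :=
  fun x idx => ∑ a, X x a * T x (Fin.cons a idx)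

lemma eval_interiorProd (X : VecField n) (T : Pt n → Tensor n (Fin (k + 1))) (x : Pt n)
    (Y : Fin k → Fin n → ℝ) :
    eval (interiorProd X T x) Y = eval (T x) (Fin.cons (X x) Y : Fin (k + 1) → Fin n → ℝ) := by
  have h : interiorProd X T x = ∑ a, X x a • fun i => T x (Fin.cons a i) := by
    ext idx
    simp [interiorProd]
  simp [h, eval_cons]

lemma contDiff_interiorProd {X : VecField n} {T : Pt n → Tensor n (Fin (k + 1))}
    (hX : ContDiff ℝ ∞ X) (hT : ContDiff ℝ ∞ T) : ContDiff ℝ ∞ (interiorProd X T) :=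
  contDiff_pi.2 fun _ => ContDiff.sum fun a _ => (contDiff_pi.1 hX a).mul (contDiff_pi.1 hT _)

lemma covDAlong_eq_interiorProd (ℓ : VecField n) (T : TensorField n k) :
    covDAlong (ι := Fin k) g ℓ T = interiorProd ℓ (covD g T) := by
  ext x idx
  exact covDAlong_apply T x idx

lemma eval_covDAlong (ℓ : VecField n) (T : TensorField n k) (x : Pt n) (Y : Fin k → Fin n → ℝ) :
    eval (covDAlong (ι := Fin k) g ℓ T x) Y
      = eval (covD g T x) (Fin.cons (ℓ x) Y : Fin (k + 1) → Fin n → ℝ) := by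
  rw [covDAlong_eq_interiorProd, eval_interiorProd]

lemma derivAction_interiorProd (M : Matrix (Fin n) (Fin n) ℝ) (X : VecField n)
    (T : Pt n → Tensor n (Fin (k + 1))) (x : Pt n) (idx : Fin k → Fin n) :
    derivAction M (interiorProd X T x) idx
      = ∑ a, X x a * derivAction M (T x) (Fin.cons a idx)
        - ∑ e, (M *ᵥ X x) e * T x (Fin.cons e idx) := by
  have hfirst : ∑ e, (M *ᵥ X x) e * T x (Fin.cons e idx)
      = ∑ a, X x a * ∑ e, M e a * T x (Fin.cons e idx) := by
    simp only [Matrix.mulVec, dotProduct, Finset.sum_mul, Finset.mul_sum]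
    rw [Finset.sum_comm]
    exact Finset.sum_congr rfl fun _ _ => Finset.sum_congr rfl fun _ _ => by ring
  have hrest : derivAction M (interiorProd X T x) idx
      = ∑ a, X x a * derivAction M (fun i => T x (Fin.cons a i)) idx := by
    have hsum : interiorProd X T x = ∑ a, X x a • fun i => T x (Fin.cons a i) := by
      ext i
      simp [interiorProd]
    simp [hsum]
  simp only [hfirst, hrest, derivAction_apply, Fin.sum_univ_succ, Fin.cons_zero, Fin.cons_succ,
    Fin.update_cons_zero, ← Fin.cons_update, mul_add, Finset.sum_add_distrib]
  ring

lemma coordCovD_interiorProd (b : Fin n) {X : VecField n} {T : Pt n → Tensor n (Fin (k + 1))}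
    (hX : ContDiff ℝ ∞ X) (hT : ContDiff ℝ ∞ T) :
    coordCovD g b (interiorProd X T)
      = interiorProd X (coordCovD g b T) + interiorProd (coordCovDVec g b X) T := by
  ext x idx
  have hXd (a : Fin n) : Differentiable ℝ fun y => X y a :=
    (contDiff_pi.1 hX a).differentiable (by simp)
  have hTd (i : Fin (k + 1) → Fin n) : Differentiable ℝ fun y => T y i :=
    (contDiff_pi.1 hT i).differentiable (by simp)
  have hpd : pd (fun y => interiorProd X T y idx) b x
      = ∑ a, (pd (fun y => X y a) b x * T x (Fin.cons a idx)
          + X x a * pd (fun y => T y (Fin.cons a idx)) b x) := by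
    simp only [interiorProd]
    rw [pd_sum fun a _ => ((hXd a).fun_mul (hTd _)) x]
    exact Finset.sum_congr rfl fun a _ => pd_mul (hXd a x) (hTd _ x) b
  rw [coordCovD, hpd, derivAction_interiorProd]
  simp only [interiorProd, coordCovD, coordCovDVec, Pi.add_apply, mul_sub, add_mul,
    Finset.sum_add_distrib, Finset.sum_sub_distrib]
  ring

end InteriorProduct

/-! ### Contractions with the derivative of `ℓ` and with the curvature -/

section SlotActions

variable {n k : ℕ} {g : MetricField n}

/-- The slots of the product of a `2`-tensor with a `k`-tensor `U`: the first slot of the former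
takes the place of slot `j` of `U`, while its second slot and slot `j` are to be contracted. -/
def actSlotEquiv (j : Fin k) : Fin 2 ⊕ Fin k ≃ Fin k ⊕ Bool where
  toFun := Sum.elim ![Sum.inl j, Sum.inr false] fun i => if i = j then Sum.inr true else Sum.inl i
  invFun := Sum.elim (fun i => if i = j then Sum.inl 0 else Sum.inr i)
    fun b => cond b (Sum.inr j) (Sum.inl 1)
  left_inv := by
    rintro (i | i)
    · fin_cases i <;> simp
    · by_cases h : i = j <;> simp [h]
  right_inv := by
    rintro (i | i)
    · by_cases h : i = j <;> simp [h]
    · cases i <;> simp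

/-- As `actSlotEquiv`, for a `3`-tensor whose first slot becomes the first slot of the result. -/
def formActSlotEquiv (j : Fin k) : Fin 3 ⊕ Fin k ≃ Fin (k + 1) ⊕ Bool where
  toFun := Sum.elim ![Sum.inl 0, Sum.inl j.succ, Sum.inr false]
    fun i => if i = j then Sum.inr true else Sum.inl i.succ
  invFun := Sum.elim (Fin.cons (Sum.inl 0) fun i => if i = j then Sum.inl 1 else Sum.inr i)
    fun b => cond b (Sum.inr j) (Sum.inl 2)
  left_inv := by
    rintro (i | i)
    · fin_cases i <;> simp
    · by_cases h : i = j <;> simp [h]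
  right_inv := by
    rintro (i | i)
    · refine Fin.cases ?_ (fun m => ?_) i
      · simp
      · by_cases h : m = j <;> simp [h]
    · cases i <;> simp

/-- The action of a `2`-tensor, as an endomorphism of covectors, on slot `j` of `U`. -/
def actOnSlot (g : MetricField n) (A : TensorField n 2) (j : Fin k) (U : TensorField n k) :
    TensorField n k :=
  contract g (relabel (actSlotEquiv j) (tensorMul (ι := Fin 2) (κ := Fin k) A U))

/-- The action of a `3`-tensor, as a one-form valued in endomorphisms of covectors, on slot `j`
of `U`. -/
def formActOnSlot (g : MetricField n) (K : TensorField n 3) (j : Fin k) (U : TensorField n k) :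
    TensorField n (k + 1) :=
  contract g (relabel (formActSlotEquiv j) (tensorMul (ι := Fin 3) (κ := Fin k) K U))

lemma actOnSlot_apply (A : TensorField n 2) (j : Fin k) (U : TensorField n k) (x : Pt n)
    (idx : Fin k → Fin n) :
    actOnSlot g A j U x idx
      = ∑ p, ∑ q, (g x)⁻¹ p q * (A x ![idx j, p] * U x (Function.update idx j q)) := by
  rw [actOnSlot, contract_apply]
  refine Finset.sum_congr rfl fun p _ => Finset.sum_congr rfl fun q _ => ?_
  simp only [relabel, tensorMul]
  congr 3 <;> ext i
  · fin_cases i <;> simp [actSlotEquiv]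
  · by_cases h : i = j <;> simp [actSlotEquiv, h]

lemma formActOnSlot_apply (K : TensorField n 3) (j : Fin k) (U : TensorField n k) (x : Pt n)
    (b : Fin n) (idx : Fin k → Fin n) :
    formActOnSlot g K j U x (Fin.cons b idx)
      = ∑ p, ∑ q, (g x)⁻¹ p q * (K x ![b, idx j, p] * U x (Function.update idx j q)) := by
  rw [formActOnSlot, contract_apply]
  refine Finset.sum_congr rfl fun p _ => Finset.sum_congr rfl fun q _ => ?_
  simp only [relabel, tensorMul]
  congr 3 <;> ext i
  · fin_cases i <;> simp [formActSlotEquiv]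
  · by_cases h : i = j <;> simp [formActSlotEquiv, h]

end SlotActions

section Identities

variable {n k : ℕ} {g : MetricField n} {ℓ : VecField n}

/-- The curvature tensor with `ℓ` in its first slot. -/
def curvatureAlong (g : MetricField n) (ℓ : VecField n) : TensorField n 3 :=
  interiorProd (k := 3) ℓ (riemann g)

lemma curvatureAlong_apply (x : Pt n) (b c d : Fin n) :
    curvatureAlong g ℓ x ![b, c, d] = ∑ a, ℓ x a * riemann g x ![a, b, c, d] := rfl

namespace IsPseudoRiemannian

variable (hg : IsPseudoRiemannian g)
include hg

lemma sum_inv_mul_lower (x : Pt n) (v f : Fin n → ℝ) :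
    ∑ p, ∑ q, (g x)⁻¹ p q * ((g x *ᵥ v) p * f q) = ∑ q, v q * f q := by
  have hlower (q : Fin n) : ∑ p, (g x *ᵥ v) p * (g x)⁻¹ p q = v q := by
    change ((g x *ᵥ v) ᵥ* (g x)⁻¹) q = v q
    rw [← (hg.isSymm x).eq, Matrix.mulVec_transpose, Matrix.vecMul_vecMul, (hg.isSymm x).eq,
      hg.mul_inv, Matrix.vecMul_one]
  rw [Finset.sum_comm]
  refine Finset.sum_congr rfl fun q _ => ?_
  rw [← hlower q, Finset.sum_mul]
  exact Finset.sum_congr rfl fun p _ => by ring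

lemma covD_lowerField_apply (hℓ : ContDiff ℝ ∞ ℓ) (x : Pt n) (b p : Fin n) :
    covD g (lowerField g ℓ) x ![b, p] = (g x *ᵥ coordCovDVec g b ℓ x) p := by
  have h := hg.eval_covD_lowerField hℓ x (Pi.single b 1) (Pi.single p 1)
  have hidx : ![Pi.single b 1, Pi.single p 1]
      = fun m => (Pi.single (![b, p] m) 1 : Fin n → ℝ) := by
    ext m; fin_cases m <;> rfl
  have hdir : dirCovDVec g (Pi.single b 1) ℓ x = coordCovDVec g b ℓ x := by
    simp [dirCovDVec, Pi.single_apply]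
  rwa [hidx, eval_single, hg.gdot_comm, gdot_eq_toBilin', Matrix.toBilin'_apply',
    single_one_dotProduct, hdir] at h

lemma actOnSlot_covD_lowerField_apply (hℓ : ContDiff ℝ ∞ ℓ) (j : Fin k) (U : TensorField n k)
    (x : Pt n) (idx : Fin k → Fin n) :
    actOnSlot g (covD g (lowerField g ℓ)) j U x idx
      = ∑ q, coordCovDVec g (idx j) ℓ x q * U x (Function.update idx j q) := by
  rw [actOnSlot_apply, ← hg.sum_inv_mul_lower x]
  simp only [hg.covD_lowerField_apply hℓ]

lemma sum_formActOnSlot_curvatureAlong (T : TensorField n k) (x : Pt n) (b : Fin n)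
    (idx : Fin k → Fin n) :
    ∑ j, formActOnSlot g (curvatureAlong g ℓ) j T x (Fin.cons b idx)
      = -∑ a, ℓ x a * derivAction (ι := Fin k) (curvatureMatrix g x a b) (T x) idx := by
  have hslot (j : Fin k) : formActOnSlot g (curvatureAlong g ℓ) j T x (Fin.cons b idx)
      = -∑ a, ℓ x a * ∑ e, curvatureMatrix g x a b e (idx j) * T x (Function.update idx j e) := by
    let V : Fin n → ℝ := fun e => -∑ a, ℓ x a * curvatureMatrix g x a b e (idx j)
    have hlower (p : Fin n) : curvatureAlong g ℓ x ![b, idx j, p] = (g x *ᵥ V) p := by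
      have hriemann (a : Fin n) : riemann g x ![a, b, idx j, p]
          = -∑ e, g x p e * curvatureMatrix g x a b e (idx j) := by
        rw [hg.riemann_pair_swap, hg.riemann_swap_left, riemann_apply, Matrix.mul_apply]
        simp
      simp only [curvatureAlong_apply, hriemann, V, Matrix.mulVec, dotProduct, mul_neg,
        Finset.sum_neg_distrib, Finset.mul_sum]
      rw [Finset.sum_comm]
      simp only [mul_left_comm]
    rw [formActOnSlot_apply]
    simp only [hlower]
    rw [hg.sum_inv_mul_lower]
    simp only [V, neg_mul, Finset.sum_neg_distrib, Finset.sum_mul, Finset.mul_sum]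
    rw [Finset.sum_comm]
    simp only [mul_assoc]
  simp only [hslot, derivAction_apply, Finset.sum_neg_distrib, Finset.mul_sum]
  rw [Finset.sum_comm]

lemma covDAlong_covD (hℓ : ContDiff ℝ ∞ ℓ) {T : TensorField n k} (hT : ContDiff ℝ ∞ T) :
    covDAlong (ι := Fin (k + 1)) g ℓ (covD g T)
      = covD g (covDAlong (ι := Fin k) g ℓ T)
        - actOnSlot g (covD g (lowerField g ℓ)) 0 (covD g T)
        + ∑ j, formActOnSlot g (curvatureAlong g ℓ) j T := by
  ext x i
  obtain ⟨b, idx, rfl⟩ : ∃ b idx, i = (Fin.cons b idx : Fin (k + 1) → Fin n) :=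
    ⟨i 0, Fin.tail i, (Fin.cons_self_tail i).symm⟩
  have hleft : covDAlong (ι := Fin (k + 1)) g ℓ (covD g T) x (Fin.cons b idx)
      = ∑ a, ℓ x a * covD g (covD g T) x (Fin.cons b (Fin.cons a idx))
        + ∑ j, formActOnSlot g (curvatureAlong g ℓ) j T x (Fin.cons b idx) := by
    rw [hg.sum_formActOnSlot_curvatureAlong, ← sub_eq_add_neg, ← Finset.sum_sub_distrib,
      covDAlong_eq_interiorProd]
    refine Finset.sum_congr rfl fun a _ => ?_
    rw [hg.covD_covD_comm hT x a b, mul_sub]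
  have hright : covD g (covDAlong (ι := Fin k) g ℓ T) x (Fin.cons b idx)
      = ∑ a, ℓ x a * covD g (covD g T) x (Fin.cons b (Fin.cons a idx))
        + actOnSlot g (covD g (lowerField g ℓ)) 0 (covD g T) x (Fin.cons b idx) := by
    rw [covD_apply, covDAlong_eq_interiorProd,
      coordCovD_interiorProd _ hℓ (hg.contDiff_covD hT),
      hg.actOnSlot_covD_lowerField_apply hℓ]
    simp only [Fin.update_cons_zero]
    rfl
  simp only [Pi.add_apply, Pi.sub_apply, Finset.sum_apply, hleft, hright]
  ring

end IsPseudoRiemannian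

end Identities

section Identities

variable {n : ℕ} {g : MetricField n} {ℓ : VecField n}

namespace IsPseudoRiemannian

variable (hg : IsPseudoRiemannian g)
include hg

lemma ricci_identity_lowerField (hℓ : ContDiff ℝ ∞ ℓ) :
    curvatureAlong g ℓ
      = relabel (Equiv.swap (0 : Fin 3) 2) (covD g (covD g (lowerField g ℓ)))
        - relabel (finRotate 3) (covD g (covD g (lowerField g ℓ))) := by
  ext x idx
  have hricci := hg.covD_covD_comm (hg.contDiff_lowerField hℓ) x (idx 1) (idx 2) ![idx 0]
  have hact : derivAction (ι := Fin 1) (curvatureMatrix g x (idx 1) (idx 2)) (lowerField g ℓ x)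
      ![idx 0] = curvatureAlong g ℓ x ![idx 0, idx 1, idx 2] := by
    simp only [derivAction_apply, Fin.sum_univ_one, curvatureAlong_apply, riemann_apply,
      Matrix.mul_apply, lowerField, lower, Finset.mul_sum, Matrix.cons_val, Function.update_self]
    rw [Finset.sum_comm]
    exact Finset.sum_congr rfl fun a _ => Finset.sum_congr rfl fun e _ => by
      rw [hg.apply_symm x e a]; ring
  have hswap : idx ∘ Equiv.swap (0 : Fin 3) 2 = Fin.cons (idx 2) (Fin.cons (idx 1) ![idx 0]) := by
    ext m; fin_cases m <;> rfl
  have hrotate : idx ∘ finRotate 3 = Fin.cons (idx 1) (Fin.cons (idx 2) ![idx 0]) := by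
    ext m; fin_cases m <;> rfl
  have hidx : idx = ![idx 0, idx 1, idx 2] := by ext m; fin_cases m <;> rfl
  rw [hact, ← hidx] at hricci
  simp only [Pi.sub_apply, relabel, hswap, hrotate]
  linarith

lemma relabel_swap_riemann : relabel (Equiv.swap (0 : Fin 4) 1) (riemann g) = -riemann g := by
  ext x idx
  have hidx : idx = ![idx 0, idx 1, idx 2, idx 3] := (FinVec.etaExpand_eq idx).symm
  have hswap : idx ∘ Equiv.swap (0 : Fin 4) 1 = ![idx 1, idx 0, idx 2, idx 3] := by
    ext m; fin_cases m <;> rfl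
  rw [relabel, hswap, hg.riemann_swap_left, ← hidx]
  rfl

lemma relabel_pairSwap_riemann :
    relabel (Equiv.swap 0 2 * Equiv.swap 1 3 : Equiv.Perm (Fin 4)) (riemann g) = riemann g := by
  ext x idx
  have hidx : idx = ![idx 0, idx 1, idx 2, idx 3] := (FinVec.etaExpand_eq idx).symm
  have hswap : idx ∘ (Equiv.swap 0 2 * Equiv.swap 1 3 : Equiv.Perm (Fin 4))
      = ![idx 2, idx 3, idx 0, idx 1] := by
    ext m; fin_cases m <;> rfl
  rw [relabel, hswap, hg.riemann_pair_swap, ← hidx]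

lemma coordCovD_riemann_swap_left (x : Pt n) (a b c d e : Fin n) :
    coordCovD g e (riemann g) x ![a, b, c, d] = -coordCovD g e (riemann g) x ![b, a, c, d] := by
  have hcov := coordCovD_relabel g e (riemann g) (Equiv.swap (0 : Fin 4) 1)
  rw [hg.relabel_swap_riemann, coordCovD_neg] at hcov
  have hswap : ![b, a, c, d] ∘ Equiv.swap (0 : Fin 4) 1 = ![a, b, c, d] := by
    ext m; fin_cases m <;> rfl
  rw [← hswap]
  exact (congrFun (congrFun hcov x) ![b, a, c, d]).symm

lemma coordCovD_riemann_pair_swap (x : Pt n) (a b c d e : Fin n) :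
    coordCovD g e (riemann g) x ![a, b, c, d] = coordCovD g e (riemann g) x ![c, d, a, b] := by
  let σ : Equiv.Perm (Fin 4) := Equiv.swap 0 2 * Equiv.swap 1 3
  have hcov := coordCovD_relabel g e (riemann g) σ
  rw [hg.relabel_pairSwap_riemann] at hcov
  have hswap : ![a, b, c, d] ∘ σ = ![c, d, a, b] := by ext m; fin_cases m <;> rfl
  rw [← hswap]
  exact congrFun (congrFun hcov x) ![a, b, c, d]

lemma covD_curvatureAlong_apply (hℓ : ContDiff ℝ ∞ ℓ) (x : Pt n) (a b c d : Fin n) :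
    covD g (curvatureAlong g ℓ) x ![a, b, c, d]
      = ∑ e, ℓ x e * coordCovD g a (riemann g) x ![e, b, c, d]
        + ∑ e, coordCovDVec g a ℓ x e * riemann g x ![e, b, c, d] := by
  rw [covD_apply, curvatureAlong, coordCovD_interiorProd _ hℓ hg.contDiff_riemann]
  rfl

-- The second Bianchi identity, one of the cyclically permuted slots being contracted with `ℓ`.
lemma covDAlong_riemann (hℓ : ContDiff ℝ ∞ ℓ) :
    covDAlong (ι := Fin 4) g ℓ (riemann g)
      = covD g (curvatureAlong g ℓ)
        - relabel (Equiv.swap (0 : Fin 4) 1) (covD g (curvatureAlong g ℓ))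
        - actOnSlot g (covD g (lowerField g ℓ)) 0 (riemann g)
        - actOnSlot g (covD g (lowerField g ℓ)) 1 (riemann g) := by
  ext x idx
  obtain ⟨a, b, c, d, rfl⟩ : ∃ a b c d, idx = ![a, b, c, d] :=
    ⟨idx 0, idx 1, idx 2, idx 3, by ext m; fin_cases m <;> rfl⟩
  have hbianchi (e : Fin n) : coordCovD g e (riemann g) x ![a, b, c, d]
      = coordCovD g a (riemann g) x ![e, b, c, d]
        - coordCovD g b (riemann g) x ![e, a, c, d] := by
    have hcyclic := hg.coordCovD_riemann_cyclic x c d e a b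
    simp only [hg.coordCovD_riemann_pair_swap x c d] at hcyclic
    rw [hg.coordCovD_riemann_swap_left x b e] at hcyclic
    linarith
  have hswap : ![a, b, c, d] ∘ Equiv.swap (0 : Fin 4) 1 = ![b, a, c, d] := by
    ext m; fin_cases m <;> rfl
  have hupdate_zero (e : Fin n) : Function.update ![a, b, c, d] 0 e = ![e, b, c, d] := by
    ext m; fin_cases m <;> rfl
  have hupdate_one (e : Fin n) : Function.update ![a, b, c, d] 1 e = ![a, e, c, d] := by
    ext m; fin_cases m <;> rfl
  simp only [covDAlong_apply, hbianchi, Pi.sub_apply, relabel, hswap,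
    hg.covD_curvatureAlong_apply hℓ, hg.actOnSlot_covD_lowerField_apply hℓ, hupdate_zero,
    hupdate_one, hg.riemann_swap_left x a, mul_sub, mul_neg, Finset.sum_sub_distrib,
    Finset.sum_neg_distrib, Matrix.cons_val_zero, Matrix.cons_val_one]
  ring

end IsPseudoRiemannian

/-- The curvature tensor with `ℓ` in its first and last slots. -/
def tidalTensor (g : MetricField n) (ℓ : VecField n) : TensorField n 2 :=
  formActOnSlot g (curvatureAlong g ℓ) 0 (lowerField g ℓ)

lemma IsPseudoRiemannian.tidalTensor_apply (hg : IsPseudoRiemannian g) (x : Pt n) (a c : Fin n) :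
    tidalTensor g ℓ x ![a, c] = ∑ d, ℓ x d * curvatureAlong g ℓ x ![a, c, d] := by
  refine (formActOnSlot_apply (curvatureAlong g ℓ) 0 (lowerField g ℓ) x a ![c]).trans ?_
  rw [← hg.sum_inv_mul_lower x (ℓ x), Finset.sum_comm]
  refine Finset.sum_congr rfl fun p _ => Finset.sum_congr rfl fun q _ => ?_
  rw [← (hg.isSymm x).inv.apply]
  simp [lowerField, lower, Matrix.mulVec, dotProduct, mul_comm]

lemma IsPseudoRiemannian.relabel_swap_tidalTensor (hg : IsPseudoRiemannian g) :
    relabel (Equiv.swap 0 1) (tidalTensor g ℓ) = tidalTensor g ℓ := by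
  ext x idx
  have heta : idx = ![idx 0, idx 1] := (FinVec.etaExpand_eq idx).symm
  have hswap : idx ∘ Equiv.swap 0 1 = ![idx 1, idx 0] := by ext m; fin_cases m <;> rfl
  change tidalTensor g ℓ x (idx ∘ Equiv.swap 0 1) = _
  rw [hswap, heta]
  simp only [hg.tidalTensor_apply, curvatureAlong_apply, Finset.mul_sum, Matrix.cons_val_zero,
    Matrix.cons_val_one]
  rw [Finset.sum_comm]
  refine Finset.sum_congr rfl fun b _ => Finset.sum_congr rfl fun d _ => ?_
  rw [hg.riemann_pair_swap, hg.riemann_swap_left, riemann_swap_right]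
  ring

-- The Riccati equation for `∇ℓ♭`.
lemma IsPseudoRiemannian.covDAlong_covD_lowerField (hg : IsPseudoRiemannian g)
    (hℓ : ContDiff ℝ ∞ ℓ) (hgeo : covDAlong (ι := Fin 1) g ℓ (lowerField g ℓ) = 0) :
    covDAlong (ι := Fin 2) g ℓ (covD g (lowerField g ℓ))
      = tidalTensor g ℓ - actOnSlot g (covD g (lowerField g ℓ)) 0 (covD g (lowerField g ℓ)) := by
  have hzero : covD g (0 : TensorField n 1) = 0 := by
    ext x idx
    simp [covD_apply, coordCovD, pd_const]
  rw [hg.covDAlong_covD hℓ (hg.contDiff_lowerField hℓ), hgeo, hzero, Fin.sum_univ_one]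
  rw [zero_sub, neg_add_eq_sub]
  rfl

end Identities

/-! ### Propagation of the boost order along `ℓ` -/

section Propagation

variable {n k : ℕ} {g : MetricField n} {ℓ : VecField n} {b : ℤ}

lemma covDAlong_interiorProd (hℓ : ContDiff ℝ ∞ ℓ) (hgeo : ∀ x, dirCovDVec g (ℓ x) ℓ x = 0)
    {T : TensorField n (k + 1)} (hT : ContDiff ℝ ∞ T) :
    covDAlong (ι := Fin k) g ℓ (interiorProd ℓ T)
      = interiorProd ℓ (covDAlong (ι := Fin (k + 1)) g ℓ T) := by
  ext x idx
  have hgeo_apply (e : Fin n) : ∑ a, ℓ x a * coordCovDVec g a ℓ x e = 0 := by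
    simpa [dirCovDVec] using congrFun (hgeo x) e
  have hsecond : ∑ a, ℓ x a * interiorProd (coordCovDVec g a ℓ) T x idx = 0 := by
    simp only [interiorProd, Finset.mul_sum, ← mul_assoc]
    rw [Finset.sum_comm]
    simp [← Finset.sum_mul, hgeo_apply]
  simp only [covDAlong_apply, coordCovD_interiorProd _ hℓ hT, Pi.add_apply, mul_add,
    Finset.sum_add_distrib, hsecond, add_zero]
  simp only [interiorProd, covDAlong_apply, Finset.mul_sum]
  rw [Finset.sum_comm]
  simp only [mul_left_comm]

lemma NullBackground.hasBoostOrder_lowerField (H : NullBackground g ℓ) :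
    HasBoostOrder (ι := Fin 1) g ℓ (-1) (lowerField g ℓ) := by
  refine ⟨H.isPseudoRiemannian.contDiff_lowerField H.contDiff, fun x Y w hY hw => ?_⟩
  rw [Fin.sum_univ_one] at hw
  have hvec : Y = ![Y 0] := by ext m; rw [Subsingleton.elim m 0]; rfl
  rw [hvec, eval_lowerField]
  exact (hY 0).1 (by omega)

lemma HasBoostOrder.interiorProd (H : NullBackground g ℓ) {T : TensorField n (k + 1)}
    (hT : HasBoostOrder (ι := Fin (k + 1)) g ℓ b T) :
    HasBoostOrder (ι := Fin k) g ℓ (b - 1) (interiorProd ℓ T) :=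
  ⟨contDiff_interiorProd H.contDiff hT.contDiff, fun x Y w hY hw => by
    rw [eval_interiorProd]
    refine hT.boostOrderAt x _ (Fin.cons 1 w : Fin (k + 1) → ℤ) (fun m => ?_)
      (by simpa [Fin.sum_univ_succ] using sub_lt_iff_lt_add'.1 hw)
    refine Fin.cases ?_ (fun j => ?_) m
    exacts [H.hasBoostWeightGE_self x, hY j]⟩

lemma HasBoostOrderAlong.interiorProd {m : ℕ} (H : NullBackground g ℓ)
    (hgeo : ∀ x, dirCovDVec g (ℓ x) ℓ x = 0) {T : TensorField n (k + 1)}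
    (hT : HasBoostOrderAlong (ι := Fin (k + 1)) g ℓ m b T) :
    HasBoostOrderAlong (ι := Fin k) g ℓ m (b - 1) (interiorProd ℓ T) := by
  induction m generalizing b T with
  | zero => exact HasBoostOrder.interiorProd H hT
  | succ m ih =>
    refine ⟨hT.1.interiorProd H, ?_⟩
    rw [covDAlong_interiorProd H.contDiff hgeo hT.1.contDiff]
    exact ih hT.2

variable [NeZero n]

lemma NullBackground.dirCovDVec_self_eq_zero (H : NullBackground g ℓ)
    (hA : HasBoostOrder g ℓ (-1) (covD g (lowerField g ℓ))) (x : Pt n) :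
    dirCovDVec g (ℓ x) ℓ x = 0 :=
  (H.hasBoostWeightGE_dirCovDVec_self hA (H.hasBoostWeightGE_self x)).2.2 (by norm_num)

lemma NullBackground.covDAlong_lowerField_eq_zero (H : NullBackground g ℓ)
    (hA : HasBoostOrder g ℓ (-1) (covD g (lowerField g ℓ))) :
    covDAlong (ι := Fin 1) g ℓ (lowerField g ℓ) = 0 := by
  ext x idx
  have hcons : (Fin.cons (ℓ x) fun m => Pi.single (idx m) 1 : Fin 2 → Fin n → ℝ)
      = ![ℓ x, Pi.single (idx 0) 1] := by
    ext m; fin_cases m <;> rfl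
  rw [← eval_single (covDAlong (ι := Fin 1) g ℓ (lowerField g ℓ) x) idx, eval_covDAlong, hcons,
    H.isPseudoRiemannian.eval_covD_lowerField H.contDiff, H.dirCovDVec_self_eq_zero hA]
  simp [gdot]

namespace HasBoostOrderAlong

variable {m : ℕ} {c : ℤ}

section Closure

variable (H : NullBackground g ℓ)
include H

lemma actOnSlot {A : TensorField n 2} {U : TensorField n k}
    (hA : HasBoostOrderAlong (ι := Fin 2) g ℓ m b A)
    (hU : HasBoostOrderAlong (ι := Fin k) g ℓ m c U) (j : Fin k) :
    HasBoostOrderAlong (ι := Fin k) g ℓ m (b + c) (actOnSlot g A j U) :=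
  ((hA.tensorMul hU).relabel _).contract H

lemma formActOnSlot {K : TensorField n 3} {U : TensorField n k}
    (hK : HasBoostOrderAlong (ι := Fin 3) g ℓ m b K)
    (hU : HasBoostOrderAlong (ι := Fin k) g ℓ m c U) (j : Fin k) :
    HasBoostOrderAlong (ι := Fin (k + 1)) g ℓ m (b + c) (formActOnSlot g K j U) :=
  ((hK.tensorMul hU).relabel _).contract H

lemma covD_of_curvatureAlong
    (hA : ∀ m, HasBoostOrderAlong (ι := Fin 2) g ℓ m (-1) (covD g (lowerField g ℓ)))
    (hK : ∀ j < m, HasBoostOrderAlong (ι := Fin 3) g ℓ j (-1) (curvatureAlong g ℓ))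
    {T : TensorField n k} (hT : HasBoostOrderAlong (ι := Fin k) g ℓ (m + 1) b T) :
    HasBoostOrderAlong (ι := Fin (k + 1)) g ℓ m b (covD g T) := by
  induction m generalizing b T with
  | zero => exact HasBoostOrder.covD H (hA 0) hT.1 hT.2
  | succ m ih =>
    have ih {b : ℤ} {T : TensorField n k} := @ih b (fun j hj => hK j (by omega)) T
    refine ⟨(ih hT.pred).hasBoostOrder, ?_⟩
    rw [H.isPseudoRiemannian.covDAlong_covD H.contDiff hT.1.contDiff]
    refine ((ih hT.2).sub ?_).add (sum _ fun j _ => ?_)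
    · exact ((hA m).actOnSlot H (ih hT.pred) 0).mono (by omega)
    · exact ((hK m (by omega)).formActOnSlot H hT.pred.pred j).mono (by omega)

variable (hA : ∀ m, HasBoostOrderAlong (ι := Fin 2) g ℓ m (-1) (VSI.covD g (lowerField g ℓ)))
include hA

lemma curvatureAlong (m : ℕ) :
    HasBoostOrderAlong (ι := Fin 3) g ℓ m (-1) (curvatureAlong g ℓ) := by
  induction m using Nat.strong_induction_on with
  | _ m ih =>
    have hAA := covD_of_curvatureAlong H hA ih (hA (m + 1))
    rw [H.isPseudoRiemannian.ricci_identity_lowerField H.contDiff]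
    exact (hAA.relabel _).sub (hAA.relabel _)

lemma covD {T : TensorField n k} (hT : HasBoostOrderAlong (ι := Fin k) g ℓ (m + 1) b T) :
    HasBoostOrderAlong (ι := Fin (k + 1)) g ℓ m b (covD g T) :=
  covD_of_curvatureAlong H hA (fun j _ => curvatureAlong H hA j) hT

lemma covDIter {T : TensorField n k} (hT : ∀ m, HasBoostOrderAlong (ι := Fin k) g ℓ m b T)
    (i m : ℕ) : HasBoostOrderAlong (ι := Fin (k + i)) g ℓ m b (covDIter g T i) := by
  induction i generalizing m with
  | zero => exact hT m
  | succ i ih => exact covD H hA (ih (m + 1))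

end Closure

end HasBoostOrderAlong

section Curvature

variable (H : NullBackground g ℓ)
  (hA : HasBoostOrder g ℓ (-1) (covD g (lowerField g ℓ)))
include H hA

lemma NullBackground.hasBoostOrderAlong_lowerField (m : ℕ) :
    HasBoostOrderAlong (ι := Fin 1) g ℓ m (-1) (lowerField g ℓ) := by
  cases m with
  | zero => exact H.hasBoostOrder_lowerField
  | succ m =>
    refine ⟨H.hasBoostOrder_lowerField, ?_⟩
    rw [H.covDAlong_lowerField_eq_zero hA]
    exact HasBoostOrderAlong.zero m _

-- The Riccati equation propagates the boost order of `∇ℓ♭`.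
lemma NullBackground.hasBoostOrderAlong_covD_lowerField
    (hJ : ∀ m, HasBoostOrderAlong (ι := Fin 2) g ℓ m (-2) (tidalTensor g ℓ)) (m : ℕ) :
    HasBoostOrderAlong (ι := Fin 2) g ℓ m (-1) (covD g (lowerField g ℓ)) := by
  induction m with
  | zero => exact hA
  | succ m ih =>
    refine ⟨hA, ?_⟩
    rw [H.isPseudoRiemannian.covDAlong_covD_lowerField H.contDiff
      (H.covDAlong_lowerField_eq_zero hA)]
    exact (hJ m).sub (ih.actOnSlot H ih 0)

variable
  (hR : ∀ i, HasBoostOrder (ι := Fin (4 + i)) g ℓ 0 (covDIter g (riemann g) i))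
include hR

lemma NullBackground.hasBoostOrderAlong_covDIter_riemann (m i : ℕ) :
    HasBoostOrderAlong (ι := Fin (4 + i)) g ℓ m 0 (covDIter g (riemann g) i) := by
  induction m generalizing i with
  | zero => exact hR i
  | succ m ih =>
    refine ⟨hR i, ?_⟩
    rw [covDAlong_eq_interiorProd]
    exact (ih (i + 1)).interiorProd H (H.dirCovDVec_self_eq_zero hA)

lemma NullBackground.hasBoostOrder_covDIter_lowerField (i : ℕ) :
    HasBoostOrder (ι := Fin (1 + i)) g ℓ (-1) (covDIter g (lowerField g ℓ) i) := by
  have hK (m : ℕ) : HasBoostOrderAlong (ι := Fin 3) g ℓ m (-1) (curvatureAlong g ℓ) :=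
    (H.hasBoostOrderAlong_covDIter_riemann hA hR m 0).interiorProd H
      (H.dirCovDVec_self_eq_zero hA)
  have hJ (m : ℕ) : HasBoostOrderAlong (ι := Fin 2) g ℓ m (-2) (tidalTensor g ℓ) :=
    (hK m).formActOnSlot H (H.hasBoostOrderAlong_lowerField hA m) 0
  exact (HasBoostOrderAlong.covDIter H (H.hasBoostOrderAlong_covD_lowerField hA hJ)
    (H.hasBoostOrderAlong_lowerField hA) i 0).hasBoostOrder

end Curvature

end Propagation

/-! ### Scalar invariants in a null frame -/

section Invariants

variable {n : ℕ}

lemma sum_prod_eval {P J : Type*} [Fintype P] [DecidableEq P] [Fintype J]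
    {K : J → Type*} [∀ j, Fintype (K j)] [∀ j, DecidableEq (K j)] (e : P ≃ Σ j, K j)
    (t : ∀ j, Tensor n (K j)) (Z : P → Fin n → ℝ) :
    ∑ φ : P → Fin n, (∏ p, Z p (φ p)) * ∏ j, t j (fun s => φ (e.symm ⟨j, s⟩))
      = ∏ j, eval (t j) (fun s => Z (e.symm ⟨j, s⟩)) := by
  classical
  simp only [eval_apply]
  rw [Finset.prod_univ_sum, Fintype.piFinset_univ]
  let curry : (P → Fin n) ≃ (∀ j, K j → Fin n) :=
    (Equiv.arrowCongr e (Equiv.refl _)).trans (Equiv.piCurry fun _ _ => Fin n)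
  refine Fintype.sum_equiv curry _ _ fun φ => ?_
  rw [Finset.prod_mul_distrib, mul_comm]
  congr 1
  rw [← Equiv.prod_comp e.symm, Fintype.prod_sigma]
  rfl

variable [NeZero n]

/-- The frame label in a contracted slot when the contracted pairs of slots are labelled by `c`. -/
def slotLabel {m : ℕ} (c : Fin m → Fin n) (p : Fin m × Bool) : Fin n :=
  cond p.2 (dualIndex (c p.1)) (c p.1)

variable {g : MetricField n} {x : Pt n} {k : ℕ} {T : TensorField n k}

/-- The slots of the factors of a complete contraction, as the members of its contracted pairs. -/
def slotEquiv (S : ConcomScheme k 0) : Fin S.m × Bool ≃ Σ j : Fin S.N, Fin (k + S.ord j) :=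
  (Equiv.sumEmpty _ _).symm.trans S.slots

lemma NullFrameAt.value_eq_sum (fr : NullFrameAt g x) (hg : IsPseudoRiemannian g)
    (S : ConcomScheme k 0) (T : TensorField n k) (v : Fin 0 → Fin n) :
    S.value g T x v = ∑ c : Fin S.m → Fin n, ∏ j, eval (covDIter g T (S.ord j) x)
      (fun s => fr.e (slotLabel c ((slotEquiv S).symm ⟨j, s⟩))) := by
  have hfactor (c : Fin S.m → Fin n) := sum_prod_eval (slotEquiv S)
    (fun j => covDIter g T (S.ord j) x) (fun p => fr.e (slotLabel c p))
  rw [← Finset.sum_congr rfl fun c _ => hfactor c, Finset.sum_comm]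
  refine Finset.sum_congr rfl fun φ _ => ?_
  rw [← Finset.sum_mul]
  congr 1
  · simp only [fr.inv_apply hg, Finset.prod_univ_sum, Fintype.piFinset_univ,
      Fintype.prod_prod_type, Fintype.prod_bool, mul_comm (fr.e (dualIndex _) _), slotLabel,
      cond_true, cond_false]
  · have hslot (y : (Fin S.m × Bool) ⊕ Fin 0) :
        Sum.elim φ v y = φ (Equiv.sumEmpty _ _ y) := by
      obtain y | y := y
      exacts [rfl, y.elim0]
    exact Finset.prod_congr rfl fun j _ => congrArg _ (funext fun s => hslot _)

lemma NullFrameAt.sum_weight_slotLabel (fr : NullFrameAt g x) (S : ConcomScheme k 0)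
    (c : Fin S.m → Fin n) :
    ∑ j, ∑ s, weight (slotLabel c ((slotEquiv S).symm ⟨j, s⟩)) = 0 := by
  rw [← Fintype.sum_sigma' (fun j s => weight (slotLabel c ((slotEquiv S).symm ⟨j, s⟩))),
    (slotEquiv S).symm.sum_comp fun p => weight (slotLabel c p), Fintype.sum_prod_type]
  simp [slotLabel, fr.weight_dualIndex]

-- The total boost weight of a complete contraction is zero, so one of its factors is evaluated in
-- nonnegative boost weight.
lemma NullBackground.isVSI {ℓ : VecField n} (H : NullBackground g ℓ)
    (hT : ∀ i, HasBoostOrder (ι := Fin (k + i)) g ℓ (-1) (covDIter g T i)) : IsVSI g T := by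
  intro I S _ x v
  have hg := H.isPseudoRiemannian
  obtain ⟨fr, hfr⟩ := H.exists_nullFrameAt x
  rw [fr.value_eq_sum hg]
  refine Finset.sum_eq_zero fun c _ => ?_
  have : Nonempty (Fin S.N) := ⟨⟨0, S.hN⟩⟩
  obtain ⟨j, -, hj⟩ : ∃ j ∈ Finset.univ,
      0 ≤ ∑ s, weight (slotLabel c ((slotEquiv S).symm ⟨j, s⟩)) := by
    by_contra! hneg
    exact (Finset.sum_neg hneg Finset.univ_nonempty).ne (fr.sum_weight_slotLabel S c)
  exact Finset.prod_eq_zero (Finset.mem_univ j)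
    ((fr.hasBoostOrderAt_iff hfr hg).1 ((hT _).boostOrderAt x) _ (by omega))

/-- The complete contraction of two copies of the `i`-th derivative of a field, where slot `σ s` of
the first copy is contracted with slot `s` of the second. -/
def pairScheme (k i : ℕ) (σ : Equiv.Perm (Fin (k + i))) : ConcomScheme k 0 where
  N := 2
  hN := by norm_num
  ord := fun _ => i
  m := k + i
  slots :=
    { toFun := Sum.elim (fun p => cond p.2 ⟨1, σ.symm p.1⟩ ⟨0, p.1⟩) (fun s => s.elim0)
      invFun := fun q => Sum.inl (if q.1 = 0 then (q.2, false) else (σ q.2, true))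
      left_inv := by
        rintro (⟨s, b⟩ | s)
        · cases b <;> simp
        · exact s.elim0
      right_inv := by
        rintro ⟨j, s⟩
        fin_cases j <;> simp }

lemma NullFrameAt.value_pairScheme (fr : NullFrameAt g x) (hg : IsPseudoRiemannian g) {i : ℕ}
    (σ : Equiv.Perm (Fin (k + i))) (T : TensorField n k) (v : Fin 0 → Fin n) :
    (pairScheme k i σ).value g T x v = ∑ c : Fin (k + i) → Fin n,
      eval (covDIter g T i x) (fr.e ∘ c) * eval (covDIter g T i x) (fr.e ∘ dualIndex ∘ c ∘ σ) := by
  rw [fr.value_eq_sum hg]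
  exact Finset.sum_congr rfl fun c _ => Fin.prod_univ_two _

-- Every nonzero product in the self-contraction is a square, so all of them vanish.
lemma IsVSI.eval_eq_zero_of_pairing (hV : IsVSI g T) (fr : NullFrameAt g x)
    (hg : IsPseudoRiemannian g) {i : ℕ} (σ : Equiv.Perm (Fin (k + i)))
    (hsq : ∀ c : Fin (k + i) → Fin n, eval (covDIter g T i x) (fr.e ∘ c) ≠ 0 →
      eval (covDIter g T i x) (fr.e ∘ dualIndex ∘ c ∘ σ) ≠ 0 → dualIndex ∘ c ∘ σ = c)
    {c : Fin (k + i) → Fin n} (hc : dualIndex ∘ c ∘ σ = c) :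
    eval (covDIter g T i x) (fr.e ∘ c) = 0 := by
  have hzero := hV i (pairScheme k i σ) (fun _ => le_rfl) x Fin.elim0
  rw [fr.value_pairScheme hg, Finset.sum_eq_zero_iff_of_nonneg] at hzero
  · simpa [hc] using hzero c (Finset.mem_univ c)
  · intro a _
    by_cases h₁ : eval (covDIter g T i x) (fr.e ∘ a) = 0
    · rw [h₁, zero_mul]
    by_cases h₂ : eval (covDIter g T i x) (fr.e ∘ dualIndex ∘ a ∘ σ) = 0
    · rw [h₂, mul_zero]
    rw [hsq a h₁ h₂]
    exact mul_self_nonneg _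

/-- The scheme `T^a T^c ∇_a T_b ∇_c T^b`, the squared norm of the acceleration `T^a ∇_a T_b`. -/
def quarticScheme : ConcomScheme 1 0 where
  N := 4
  hN := by norm_num
  ord := ![1, 1, 0, 0]
  m := 3
  slots :=
    { toFun := Sum.elim (fun p =>
        if p.1 = 0 then cond p.2 ⟨2, 0⟩ ⟨0, ⟨0, by decide⟩⟩
        else if p.1 = 1 then cond p.2 ⟨1, ⟨1, by decide⟩⟩ ⟨0, ⟨1, by decide⟩⟩
        else cond p.2 ⟨3, 0⟩ ⟨1, ⟨0, by decide⟩⟩) (fun i => i.elim0)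
      invFun := fun q => Sum.inl (
        if q.1 = 0 then (if (q.2 : ℕ) = 0 then (0, false) else (1, false))
        else if q.1 = 1 then (if (q.2 : ℕ) = 0 then (2, false) else (1, true))
        else if q.1 = 2 then (0, true) else (2, true))
      left_inv := by decide
      right_inv := by decide }

lemma NullFrameAt.value_quarticScheme (fr : NullFrameAt g x) (hg : IsPseudoRiemannian g)
    (T : TensorField n 1) (v : Fin 0 → Fin n) :
    quarticScheme.value g T x v = ∑ c : Fin 3 → Fin n,
      eval (covD g T x) ![fr.e (c 0), fr.e (c 1)]
        * eval (covD g T x) ![fr.e (c 2), fr.e (dualIndex (c 1))]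
        * eval (T x) ![fr.e (dualIndex (c 0))] * eval (T x) ![fr.e (dualIndex (c 2))] := by
  rw [fr.value_eq_sum hg]
  refine Finset.sum_congr rfl fun c _ => (Fin.prod_univ_four _).trans ?_
  refine congrArg₂ (· * ·) (congrArg₂ (· * ·) (congrArg₂ (· * ·) ?_ ?_) ?_) ?_ <;>
    refine congrArg (eval _) (funext fun s => ?_) <;> fin_cases s <;> rfl

end Invariants

/-! ### Consequences of vanishing invariants -/

section FirstOrder

variable {n : ℕ} {g : MetricField n} {ℓ : VecField n}

lemma IsVSI.gdot_self_eq_zero (hg : IsPseudoRiemannian g) (hV : IsVSI g (lowerField g ℓ))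
    (x : Pt n) : gdot g x (ℓ x) (ℓ x) = 0 := by
  have hzero := hV 0 (pairScheme 1 0 1) (fun _ => le_rfl) x Fin.elim0
  let pair : (Fin 1 × Bool → Fin n) ≃ Fin n × Fin n :=
    (Equiv.arrowCongr (Equiv.uniqueProd Bool (Fin 1)) (Equiv.refl _)).trans
      (Equiv.boolArrowEquivProd _)
  have hvalue : (pairScheme 1 0 1).value g (lowerField g ℓ) x Fin.elim0
      = ∑ p, ∑ q, (g x)⁻¹ p q * (lowerField g ℓ x ![p] * lowerField g ℓ x ![q]) := by
    rw [← Fintype.sum_prod_type']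
    refine Fintype.sum_equiv pair _ _ fun φ => congrArg₂ (· * ·) (Fin.prod_univ_one _) ?_
    exact Fin.prod_univ_two _
  rw [hvalue] at hzero
  have hlower (p : Fin n) : (g x *ᵥ ℓ x) p = lowerField g ℓ x ![p] := rfl
  rw [← eval_lowerField, eval_vecOne, ← hg.sum_inv_mul_lower x (ℓ x), ← hzero]
  simp only [hlower]

lemma NullBackground.eval_covD_lowerField_self (H : NullBackground g ℓ) (x : Pt n)
    (X : Fin n → ℝ) : eval (covD g (lowerField g ℓ) x) ![X, ℓ x] = 0 := by
  have hg := H.isPseudoRiemannian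
  have hnull := hg.sum_mul_pd_gdot X H.contDiff H.contDiff x
  simp only [H.null.2.2, pd_const, mul_zero, Finset.sum_const_zero] at hnull
  rw [hg.gdot_comm x (ℓ x)] at hnull
  rw [hg.eval_covD_lowerField H.contDiff]
  linarith

lemma comp_eq_vecTwo {α β : Type*} (e : α → β) (c : Fin 2 → α) : e ∘ c = ![e (c 0), e (c 1)] :=
  (FinVec.map_eq e c).symm

variable [NeZero n]

lemma NullBackground.hasBoostOrder_covD_lowerField (H : NullBackground g ℓ)
    (hacc : ∀ x (fr : NullFrameAt g x), fr.e 0 = ℓ x →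
      ∀ i, eval (covD g (lowerField g ℓ) x) ![fr.e 0, fr.e i] = 0)
    (hopt : ∀ x (fr : NullFrameAt g x), fr.e 0 = ℓ x → ∀ i j, weight i = 0 → weight j = 0 →
      eval (covD g (lowerField g ℓ) x) ![fr.e i, fr.e j] = 0) :
    HasBoostOrder g ℓ (-1) (covD g (lowerField g ℓ)) := by
  have hg := H.isPseudoRiemannian
  refine ⟨hg.contDiff_covD (hg.contDiff_lowerField H.contDiff), fun x => ?_⟩
  obtain ⟨fr, hfr⟩ := H.exists_nullFrameAt x
  refine (fr.hasBoostOrderAt_iff hfr hg).2 fun a ha => ?_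
  rw [Fin.sum_univ_two] at ha
  rw [comp_eq_vecTwo]
  obtain h1 | h1 := eq_or_ne (a 1) 0
  · rw [h1, hfr, H.eval_covD_lowerField_self]
  obtain h0 | h0 := eq_or_ne (a 0) 0
  · rw [h0, hacc x fr hfr]
  have h0' := weight_lt_one h0
  have h1' := weight_lt_one h1
  exact hopt x fr hfr _ _ (by omega) (by omega)

variable (H : NullBackground g ℓ) (hV : IsVSI g (lowerField g ℓ)) {x : Pt n}
  (fr : NullFrameAt g x) (hfr : fr.e 0 = ℓ x)
include H hV hfr

lemma IsVSI.eval_acceleration_eq_zero {i : Fin n} (hi : i ≠ 1) :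
    eval (covD g (lowerField g ℓ) x) ![fr.e 0, fr.e i] = 0 := by
  have hg := H.isPseudoRiemannian
  have hnull (a : Fin n) : eval (covD g (lowerField g ℓ) x) ![fr.e a, fr.e 0] = 0 := by
    rw [hfr, H.eval_covD_lowerField_self]
  have hlower (a : Fin n) :
      eval (lowerField g ℓ x) ![fr.e (dualIndex a)] = if a = 0 then 1 else 0 := by
    rw [eval_lowerField, ← hfr, fr.gdot_eq hg, dualIndex_dualIndex]
    simp only [eq_comm]
  obtain rfl | hi0 := eq_or_ne i 0
  · exact hnull 0
  have hzero := hV 1 quarticScheme (by decide) x Fin.elim0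
  rw [fr.value_quarticScheme hg, Finset.sum_eq_zero_iff_of_nonneg] at hzero
  · simpa [hlower, dualIndex_of_ne hi0 hi] using hzero ![0, i, 0] (Finset.mem_univ _)
  · intro c _
    simp only [hlower]
    by_cases h : c 0 = 0 ∧ c 2 = 0
    swap
    · obtain h | h := not_and_or.1 h <;> simp [h]
    rw [h.1, h.2]
    obtain hc | hc := eq_or_ne (weight (c 1)) 0
    · rw [dualIndex_eq_of_weight_eq_zero hc]
      simpa using mul_self_nonneg _
    · have hc' : c 1 = 0 ∨ c 1 = 1 := by
        by_contra! hne
        exact hc (weight_eq_zero_iff.2 hne)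
      obtain hc' | hc' := hc' <;> simp [hc', hnull, dualIndex_one]

lemma IsVSI.weight_of_eval_covD_lowerField_ne_zero {c : Fin 2 → Fin n}
    (hc : eval (covD g (lowerField g ℓ) x) (fr.e ∘ c) ≠ 0) :
    weight (c 1) ≤ 0 ∧ (weight (c 0) = 1 → weight (c 1) = -1) := by
  rw [comp_eq_vecTwo] at hc
  constructor
  · by_contra! hpos
    have hle := weight_le_one (c 1)
    rw [weight_eq_one_iff.1 (show weight (c 1) = 1 by omega), hfr,
      H.eval_covD_lowerField_self] at hc
    exact hc rfl
  · intro h0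
    by_contra h1
    rw [weight_eq_one_iff.1 h0, hV.eval_acceleration_eq_zero H fr hfr] at hc
    · exact hc rfl
    · exact mt (weight_eq_neg_one_iff fr.zero_ne_one).2 h1

lemma IsVSI.eval_transverse_eq_zero {i j : Fin n} (hi : weight i = 0) (hj : weight j = 0) :
    eval (covD g (lowerField g ℓ) x) ![fr.e i, fr.e j] = 0 := by
  have hij : fr.e ∘ ![i, j] = ![fr.e i, fr.e j] := comp_eq_vecTwo _ _
  have hdual (c : Fin 2 → Fin n) (h0 : weight (c 0) = 0) (h1 : weight (c 1) = 0) :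
      dualIndex ∘ c = c := by
    ext1 m
    fin_cases m
    exacts [dualIndex_eq_of_weight_eq_zero h0, dualIndex_eq_of_weight_eq_zero h1]
  rw [← hij]
  refine hV.eval_eq_zero_of_pairing fr H.isPseudoRiemannian (i := 1) 1 (fun c hc hc' => ?_)
    (hdual ![i, j] hi hj)
  have h := hV.weight_of_eval_covD_lowerField_ne_zero H fr hfr hc
  have h' := hV.weight_of_eval_covD_lowerField_ne_zero H fr hfr hc'
  change weight (dualIndex (c 1)) ≤ 0 ∧
    (weight (dualIndex (c 0)) = 1 → weight (dualIndex (c 1)) = -1) at h'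
  rw [fr.weight_dualIndex, fr.weight_dualIndex] at h'
  have hle := weight_le_one (c 0)
  have hge := neg_one_le_weight (c 0)
  exact hdual c (by omega) (by omega)

lemma IsVSI.eval_zero_one_eq_zero :
    eval (covD g (lowerField g ℓ) x) ![fr.e 0, fr.e 1] = 0 := by
  have h01 := fr.zero_ne_one
  have hdual (c : Fin 2 → Fin n) (h0 : weight (c 0) = 1) (h1 : weight (c 1) = -1) :
      dualIndex ∘ c ∘ Equiv.swap 0 1 = c := by
    ext1 m
    fin_cases m
    exacts [dualIndex_eq_of_weight_add_eq_zero h01 (i := c 1) (j := c 0) (by omega) (by omega),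
      dualIndex_eq_of_weight_add_eq_zero h01 (i := c 0) (j := c 1) (by omega) (by omega)]
  have hpair : fr.e ∘ ![0, 1] = ![fr.e 0, fr.e 1] := comp_eq_vecTwo _ _
  rw [← hpair]
  refine hV.eval_eq_zero_of_pairing fr H.isPseudoRiemannian (i := 1) (Equiv.swap 0 1)
    (fun c hc hc' => ?_) (hdual ![0, 1] weight_zero ((weight_eq_neg_one_iff h01).2 rfl))
  have htransverse : weight (c 0) ≠ 0 ∨ weight (c 1) ≠ 0 := by
    by_contra! h
    refine hc ?_
    exact (congrArg _ (comp_eq_vecTwo fr.e c)).trans (hV.eval_transverse_eq_zero H fr hfr h.1 h.2)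
  have h := hV.weight_of_eval_covD_lowerField_ne_zero H fr hfr hc
  have h' := hV.weight_of_eval_covD_lowerField_ne_zero H fr hfr hc'
  change weight (dualIndex (c 0)) ≤ 0 ∧
    (weight (dualIndex (c 1)) = 1 → weight (dualIndex (c 0)) = -1) at h'
  rw [fr.weight_dualIndex, fr.weight_dualIndex] at h'
  have hle := weight_le_one (c 0)
  have hge := neg_one_le_weight (c 1)
  exact hdual c (by omega) (by omega)

omit fr hfr in
lemma IsVSI.hasBoostOrder_covD_lowerField :
    HasBoostOrder g ℓ (-1) (covD g (lowerField g ℓ)) := by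
  refine H.hasBoostOrder_covD_lowerField (fun x fr hfr i => ?_)
    fun x fr hfr i j => hV.eval_transverse_eq_zero H fr hfr
  obtain rfl | hi := eq_or_ne i 1
  exacts [hV.eval_zero_one_eq_zero H fr hfr, hV.eval_acceleration_eq_zero H fr hfr hi]

end FirstOrder

section HigherOrder

variable {n k : ℕ} [NeZero n] {g : MetricField n} {ℓ : VecField n} {b : ℤ}

lemma NullFrameAt.eval_covDAlong {x : Pt n} (fr : NullFrameAt g x) (hfr : fr.e 0 = ℓ x)
    (T : TensorField n k) (c : Fin k → Fin n) :
    eval (covDAlong (ι := Fin k) g ℓ T x) (fr.e ∘ c)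
      = eval (covD g T x) (fr.e ∘ (Fin.cons 0 c : Fin (k + 1) → Fin n)) := by
  rw [VSI.eval_covDAlong, ← hfr]
  congr 1
  ext1 m
  refine Fin.cases ?_ (fun j => ?_) m <;> rfl

lemma NullFrameAt.sum_weight_le_of_eval_covD_ne_zero {x : Pt n} (fr : NullFrameAt g x)
    (hfr : fr.e 0 = ℓ x) (H : NullBackground g ℓ)
    (hA : HasBoostOrder g ℓ (-1) (covD g (lowerField g ℓ))) {T : TensorField n k}
    (hT : HasBoostOrder (ι := Fin k) g ℓ b T) {c : Fin (k + 1) → Fin n}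
    (hc : eval (covD g T x) (fr.e ∘ c) ≠ 0) :
    ∑ m, weight (c (Fin.succ m)) + min (weight (c 0)) 0 ≤ b := by
  contrapose! hc
  have hcons : fr.e ∘ c
      = (Fin.cons (fr.e (c 0)) (fr.e ∘ Fin.tail c) : Fin (k + 1) → Fin n → ℝ) :=
    (Fin.cons_self_tail _).symm
  have hvec (a : Fin n) := fr.hasBoostWeightGE hfr H.isPseudoRiemannian a
  rw [hcons, eval_covD_cons]
  exact HasBoostOrder.eval_dirCovD_eq_zero H hA hT (hvec _) (fun m => hvec (Fin.tail c m)) hc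

omit [NeZero n] in
lemma NullBackground.hasBoostOrder_curvatureAlong (H : NullBackground g ℓ)
    (hAA : HasBoostOrder (ι := Fin 3) g ℓ b (covD g (covD g (lowerField g ℓ)))) :
    HasBoostOrder (ι := Fin 3) g ℓ b (curvatureAlong g ℓ) := by
  rw [H.isPseudoRiemannian.ricci_identity_lowerField H.contDiff, sub_eq_add_neg]
  exact (hAA.relabel _).add (hAA.relabel _).neg

variable (H : NullBackground g ℓ) (hV : IsVSI g (lowerField g ℓ))
include H hV

lemma IsVSI.eval_covD_covD_lowerField_eq_zero {x : Pt n} (fr : NullFrameAt g x)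
    (hfr : fr.e 0 = ℓ x) {i : Fin n} (hi : weight i = 0) :
    eval (covD g (covD g (lowerField g ℓ)) x) (fr.e ∘ ![0, 1, i]) = 0 := by
  have h01 := fr.zero_ne_one
  have hA := hV.hasBoostOrder_covD_lowerField H
  have hdual (c : Fin 3 → Fin n) (h0 : weight (c 0) = 1) (h1 : weight (c 1) = -1)
      (h2 : weight (c 2) = 0) : dualIndex ∘ c ∘ Equiv.swap 0 1 = c := by
    ext1 m
    fin_cases m
    exacts [dualIndex_eq_of_weight_add_eq_zero h01 (i := c 1) (j := c 0) (by omega) (by omega),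
      dualIndex_eq_of_weight_add_eq_zero h01 (i := c 0) (j := c 1) (by omega) (by omega),
      dualIndex_eq_of_weight_eq_zero h2]
  refine hV.eval_eq_zero_of_pairing fr H.isPseudoRiemannian (i := 2) (Equiv.swap 0 1)
    (fun c hc hc' => ?_) (hdual ![0, 1, i] weight_zero ((weight_eq_neg_one_iff h01).2 rfl) hi)
  have h := fr.sum_weight_le_of_eval_covD_ne_zero hfr H hA hA hc
  have h' := fr.sum_weight_le_of_eval_covD_ne_zero hfr H hA hA hc'
  rw [Fin.sum_univ_two] at h h'
  change weight (c 1) + weight (c 2) + min (weight (c 0)) 0 ≤ -1 at h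
  change weight (dualIndex (c 0)) + weight (dualIndex (c 2))
    + min (weight (dualIndex (c 1))) 0 ≤ -1 at h'
  simp only [fr.weight_dualIndex] at h'
  have hle := weight_le_one (c 0)
  have hge := neg_one_le_weight (c 1)
  exact hdual c (by omega) (by omega) (by omega)

lemma IsVSI.hasBoostOrder_tidalTensor : HasBoostOrder (ι := Fin 2) g ℓ (-2) (tidalTensor g ℓ) := by
  have hg := H.isPseudoRiemannian
  have hA := hV.hasBoostOrder_covD_lowerField H
  have hAct : HasBoostOrder (ι := Fin 2) g ℓ (-2)
      (actOnSlot g (covD g (lowerField g ℓ)) 0 (covD g (lowerField g ℓ))) :=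
    HasBoostOrderAlong.actOnSlot (m := 0) H hA hA 0
  have htidal : tidalTensor g ℓ = covDAlong (ι := Fin 2) g ℓ (covD g (lowerField g ℓ))
      + actOnSlot g (covD g (lowerField g ℓ)) 0 (covD g (lowerField g ℓ)) := by
    rw [hg.covDAlong_covD_lowerField H.contDiff (H.covDAlong_lowerField_eq_zero hA),
      sub_add_cancel]
  have horder : HasBoostOrder (ι := Fin 2) g ℓ (-1) (tidalTensor g ℓ) :=
    htidal ▸ (HasBoostOrder.covDAlong H hA hA).add (hAct.mono (by norm_num))
  refine ⟨horder.contDiff, fun x => ?_⟩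
  obtain ⟨fr, hfr⟩ := H.exists_nullFrameAt x
  have hweight_one := (weight_eq_neg_one_iff fr.zero_ne_one).2 rfl
  have hright {i : Fin n} (hi : weight i = 0) :
      eval (tidalTensor g ℓ x) (fr.e ∘ ![1, i]) = 0 := by
    have hact := (fr.hasBoostOrderAt_iff hfr hg).1 (hAct.boostOrderAt x) ![1, i]
      (by simp [hi, hweight_one])
    rw [htidal, Pi.add_apply, map_add, add_apply, hact, fr.eval_covDAlong hfr,
      add_zero]
    exact hV.eval_covD_covD_lowerField_eq_zero H fr hfr hi
  refine (fr.hasBoostOrderAt_iff hfr hg).2 fun a ha => ?_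
  obtain hlt | hle := lt_or_ge (-1) (∑ m, weight (a m))
  · exact (fr.hasBoostOrderAt_iff hfr hg).1 (horder.boostOrderAt x) a hlt
  rw [Fin.sum_univ_two] at ha hle
  have hge := neg_one_le_weight (a 0)
  have hge' := neg_one_le_weight (a 1)
  have heta : a = ![a 0, a 1] := (FinVec.etaExpand_eq a).symm
  obtain ⟨h0, h1⟩ | ⟨h0, h1⟩ : weight (a 0) = -1 ∧ weight (a 1) = 0 ∨
      weight (a 0) = 0 ∧ weight (a 1) = -1 := by omega
  · rw [heta, (weight_eq_neg_one_iff fr.zero_ne_one).1 h0, hright h1]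
  · have hswap : (fr.e ∘ ![a 0, 1]) ∘ Equiv.swap 0 1 = fr.e ∘ ![1, a 0] := by
      ext1 m; fin_cases m <;> rfl
    rw [heta, (weight_eq_neg_one_iff fr.zero_ne_one).1 h1, ← hg.relabel_swap_tidalTensor,
      eval_relabel, hswap, hright h0]

lemma IsVSI.hasBoostOrder_covDAlong_covD_lowerField :
    HasBoostOrder (ι := Fin 2) g ℓ (-2)
      (covDAlong (ι := Fin 2) g ℓ (covD g (lowerField g ℓ))) := by
  have hA := hV.hasBoostOrder_covD_lowerField H
  rw [H.isPseudoRiemannian.covDAlong_covD_lowerField H.contDiff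
    (H.covDAlong_lowerField_eq_zero hA)]
  exact HasBoostOrderAlong.sub (m := 0) (hV.hasBoostOrder_tidalTensor H)
    (HasBoostOrderAlong.actOnSlot (m := 0) H hA hA 0)

lemma IsVSI.hasBoostOrder_covD_covD_lowerField :
    HasBoostOrder (ι := Fin 3) g ℓ (-1) (covD g (covD g (lowerField g ℓ))) :=
  HasBoostOrder.covD H (hV.hasBoostOrder_covD_lowerField H)
    (hV.hasBoostOrder_covD_lowerField H) (hV.hasBoostOrder_covDAlong_covD_lowerField H)

lemma IsVSI.eval_covDAlong_covD_eq {x : Pt n} (fr : NullFrameAt g x) (hfr : fr.e 0 = ℓ x)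
    {c : Fin 3 → Fin n} (hc : -2 < ∑ m, weight (c m)) :
    eval (covDAlong (ι := Fin 3) g ℓ (covD g (covD g (lowerField g ℓ))) x) (fr.e ∘ c)
      = eval (covD g (covDAlong (ι := Fin 2) g ℓ (covD g (lowerField g ℓ))) x) (fr.e ∘ c) := by
  have hA := hV.hasBoostOrder_covD_lowerField H
  have hAA := hV.hasBoostOrder_covD_covD_lowerField H
  have hK := H.hasBoostOrder_curvatureAlong hAA
  have hfirst : HasBoostOrder (ι := Fin 3) g ℓ (-2)
      (actOnSlot g (covD g (lowerField g ℓ)) 0 (covD g (covD g (lowerField g ℓ)))) :=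
    HasBoostOrderAlong.actOnSlot (m := 0) H hA hAA 0
  have hsecond : HasBoostOrder (ι := Fin 3) g ℓ (-2)
      (∑ j, formActOnSlot g (curvatureAlong g ℓ) j (covD g (lowerField g ℓ))) :=
    HasBoostOrderAlong.sum (m := 0) _ fun j _ => HasBoostOrderAlong.formActOnSlot (m := 0) H hK hA j
  have hzero {T : TensorField n 3} (hT : HasBoostOrder (ι := Fin 3) g ℓ (-2) T) :
      eval (T x) (fr.e ∘ c) = 0 :=
    (fr.hasBoostOrderAt_iff hfr H.isPseudoRiemannian).1 (hT.boostOrderAt x) c hc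
  rw [H.isPseudoRiemannian.covDAlong_covD H.contDiff hA.contDiff]
  simp only [Pi.add_apply, Pi.sub_apply, map_add, map_sub, add_apply,
    sub_apply, hzero hfirst, hzero hsecond, sub_zero, add_zero]

lemma IsVSI.weight_of_eval_covD_covD_covD_lowerField_ne_zero {x : Pt n} (fr : NullFrameAt g x)
    (hfr : fr.e 0 = ℓ x) {c : Fin 4 → Fin n}
    (hc : eval (covD g (covD g (covD g (lowerField g ℓ))) x) (fr.e ∘ c) ≠ 0) :
    weight (c 1) + weight (c 2) + weight (c 3) + min (weight (c 0)) 0 ≤ -1 ∧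
      (weight (c 0) = 1 → -2 < weight (c 1) + weight (c 2) + weight (c 3) →
        weight (c 2) + weight (c 3) + min (weight (c 1)) 0 ≤ -2) := by
  have hA := hV.hasBoostOrder_covD_lowerField H
  have h := fr.sum_weight_le_of_eval_covD_ne_zero hfr H hA
    (hV.hasBoostOrder_covD_covD_lowerField H) hc
  rw [Fin.sum_univ_three] at h
  refine ⟨h, fun h0 hsum => ?_⟩
  have htail : c = Fin.cons 0 (Fin.tail c) := by
    rw [← weight_eq_one_iff.1 h0, Fin.cons_self_tail]
  rw [htail, ← fr.eval_covDAlong hfr, hV.eval_covDAlong_covD_eq H fr hfr] at hc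
  · have h := fr.sum_weight_le_of_eval_covD_ne_zero hfr H hA
      (hV.hasBoostOrder_covDAlong_covD_lowerField H) hc
    rwa [Fin.sum_univ_two] at h
  · rwa [Fin.sum_univ_three]

lemma IsVSI.eval_covD_covD_covD_lowerField_eq_zero {x : Pt n} (fr : NullFrameAt g x)
    (hfr : fr.e 0 = ℓ x) :
    eval (covD g (covD g (covD g (lowerField g ℓ))) x) (fr.e ∘ ![0, 0, 1, 1]) = 0 := by
  have h01 := fr.zero_ne_one
  have hdual (c : Fin 4 → Fin n) (h0 : weight (c 0) = 1) (h1 : weight (c 1) = 1)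
      (h2 : weight (c 2) = -1) (h3 : weight (c 3) = -1) :
      dualIndex ∘ c ∘ ⇑(Equiv.swap 0 2 * Equiv.swap 1 3 : Equiv.Perm (Fin 4)) = c := by
    ext1 m
    fin_cases m
    exacts [dualIndex_eq_of_weight_add_eq_zero h01 (i := c 2) (j := c 0) (by omega) (by omega),
      dualIndex_eq_of_weight_add_eq_zero h01 (i := c 3) (j := c 1) (by omega) (by omega),
      dualIndex_eq_of_weight_add_eq_zero h01 (i := c 0) (j := c 2) (by omega) (by omega),
      dualIndex_eq_of_weight_add_eq_zero h01 (i := c 1) (j := c 3) (by omega) (by omega)]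
  have hweight_one := (weight_eq_neg_one_iff h01).2 rfl
  refine hV.eval_eq_zero_of_pairing fr H.isPseudoRiemannian (i := 3)
    (Equiv.swap 0 2 * Equiv.swap 1 3) (fun c hc hc' => ?_)
    (hdual ![0, 0, 1, 1] weight_zero weight_zero hweight_one hweight_one)
  have h := hV.weight_of_eval_covD_covD_covD_lowerField_ne_zero H fr hfr hc
  have h' := (hV.weight_of_eval_covD_covD_covD_lowerField_ne_zero H fr hfr hc').1
  change weight (dualIndex (c 3)) + weight (dualIndex (c 0)) + weight (dualIndex (c 1))
    + min (weight (dualIndex (c 2))) 0 ≤ -1 at h'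
  simp only [fr.weight_dualIndex] at h'
  have hle := weight_le_one (c 0)
  have hle' := weight_le_one (c 1)
  have hge := neg_one_le_weight (c 2)
  have hge' := neg_one_le_weight (c 3)
  have hge'' := neg_one_le_weight (c 1)
  exact hdual c (by omega) (by omega) (by omega) (by omega)

lemma IsVSI.covDAlong_covDAlong_covD_lowerField_eq_zero :
    covDAlong (ι := Fin 2) g ℓ (covDAlong (ι := Fin 2) g ℓ (covD g (lowerField g ℓ))) = 0 := by
  have hg := H.isPseudoRiemannian
  have horder := HasBoostOrder.covDAlong H (hV.hasBoostOrder_covD_lowerField H)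
    (hV.hasBoostOrder_covDAlong_covD_lowerField H)
  ext1 x
  obtain ⟨fr, hfr⟩ := H.exists_nullFrameAt x
  refine fr.eq_zero_of_eval_eq_zero hg fun a => ?_
  obtain hlt | hle := lt_or_ge (-2) (∑ m, weight (a m))
  · exact (fr.hasBoostOrderAt_iff hfr hg).1 (horder.boostOrderAt x) a hlt
  rw [Fin.sum_univ_two] at hle
  have hge := neg_one_le_weight (a 0)
  have hge' := neg_one_le_weight (a 1)
  have hweight_one := (weight_eq_neg_one_iff fr.zero_ne_one).2 rfl
  have heta : a = ![1, 1] := by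
    ext1 m
    fin_cases m
    exacts [(weight_eq_neg_one_iff fr.zero_ne_one).1 (show weight (a 0) = -1 by omega),
      (weight_eq_neg_one_iff fr.zero_ne_one).1 (show weight (a 1) = -1 by omega)]
  rw [heta, fr.eval_covDAlong hfr, ← hV.eval_covDAlong_covD_eq H fr hfr, fr.eval_covDAlong hfr]
  · exact hV.eval_covD_covD_covD_lowerField_eq_zero H fr hfr
  · simp [Fin.sum_univ_three, weight_zero, hweight_one]

lemma IsVSI.hasBoostOrderAlong_covD_lowerField (m : ℕ) :
    HasBoostOrderAlong (ι := Fin 2) g ℓ m (-1) (covD g (lowerField g ℓ)) := by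
  have hA := hV.hasBoostOrder_covD_lowerField H
  cases m with
  | zero => exact hA
  | succ m =>
    refine ⟨hA, ?_⟩
    cases m with
    | zero => exact hV.hasBoostOrder_covDAlong_covD_lowerField H
    | succ m =>
      refine ⟨hV.hasBoostOrder_covDAlong_covD_lowerField H, ?_⟩
      rw [hV.covDAlong_covDAlong_covD_lowerField_eq_zero H]
      exact HasBoostOrderAlong.zero m _

end HigherOrder

section Curvature

variable {n : ℕ} {g : MetricField n} {ℓ : VecField n}

lemma IsPseudoRiemannian.exists_eval_riemann_comp (hg : IsPseudoRiemannian g) (x : Pt n)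
    (j : Fin 4) : ∃ σ : Equiv.Perm (Fin 4), σ 0 = j ∧
      ∀ Y, eval (riemann g x) (Y ∘ σ) = 0 → eval (riemann g x) Y = 0 := by
  let π : Equiv.Perm (Fin 4) := Equiv.swap 0 2 * Equiv.swap 1 3
  have hswap (Y : Fin 4 → Fin n → ℝ) (hY : eval (riemann g x) (Y ∘ Equiv.swap 0 1) = 0) :
      eval (riemann g x) Y = 0 := by
    rw [← eval_relabel, hg.relabel_swap_riemann] at hY
    simpa using hY
  have hpair (Y : Fin 4 → Fin n → ℝ) (hY : eval (riemann g x) (Y ∘ π) = 0) :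
      eval (riemann g x) Y = 0 := by
    rwa [← eval_relabel, hg.relabel_pairSwap_riemann] at hY
  fin_cases j
  exacts [⟨1, rfl, fun Y hY => hY⟩, ⟨Equiv.swap 0 1, rfl, hswap⟩, ⟨π, rfl, hpair⟩,
    ⟨π * Equiv.swap 0 1, rfl, fun Y hY => hpair Y <| hswap (Y ∘ π) <| by
      rwa [Equiv.Perm.coe_mul, ← Function.comp_assoc] at hY⟩]

variable [NeZero n]

lemma NullBackground.hasBoostOrder_riemann (H : NullBackground g ℓ)
    (hK : HasBoostOrder (ι := Fin 3) g ℓ (-1) (curvatureAlong g ℓ)) :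
    HasBoostOrder (ι := Fin 4) g ℓ 0 (riemann g) := by
  have hg := H.isPseudoRiemannian
  refine ⟨hg.contDiff_riemann, fun x => ?_⟩
  obtain ⟨fr, hfr⟩ := H.exists_nullFrameAt x
  have hfirst (c : Fin 4 → Fin n) (h0 : c 0 = 0) (hc : 0 < ∑ m, weight (c m)) :
      eval (riemann g x) (fr.e ∘ c) = 0 := by
    have hcons : fr.e ∘ c = (Fin.cons (ℓ x) (fr.e ∘ Fin.tail c) : Fin 4 → Fin n → ℝ) := by
      rw [← hfr, ← h0]
      exact (Fin.cons_self_tail _).symm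
    rw [hcons]
    refine (eval_interiorProd (k := 3) ℓ (riemann g) x (fr.e ∘ Fin.tail c)).symm.trans
      ((fr.hasBoostOrderAt_iff hfr hg).1 (hK.boostOrderAt x) (Fin.tail c) ?_)
    rw [Fin.sum_univ_succ, h0, weight_zero] at hc
    change -1 < ∑ m : Fin 3, weight (c m.succ)
    omega
  refine (fr.hasBoostOrderAt_iff hfr hg).2 fun a ha => ?_
  obtain ⟨j, -, hj⟩ := Finset.exists_lt_of_sum_lt (s := Finset.univ) (f := fun _ => 0)
    (g := fun m => weight (a m)) (by simpa using ha)
  have hle := weight_le_one (a j)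
  obtain ⟨σ, rfl, hσ⟩ := hg.exists_eval_riemann_comp x j
  refine hσ _ (hfirst (a ∘ σ) (weight_eq_one_iff.1 ?_) ?_)
  · exact le_antisymm hle hj
  · rwa [← Equiv.sum_comp σ] at ha

lemma NullBackground.hasBoostOrderAlong_riemann (H : NullBackground g ℓ)
    (hA : ∀ m, HasBoostOrderAlong (ι := Fin 2) g ℓ m (-1) (covD g (lowerField g ℓ))) (m : ℕ) :
    HasBoostOrderAlong (ι := Fin 4) g ℓ m 0 (riemann g) := by
  have hK := HasBoostOrderAlong.curvatureAlong H hA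
  have hR := H.hasBoostOrder_riemann (hK 0)
  induction m with
  | zero => exact hR
  | succ m ih =>
    refine ⟨hR, ?_⟩
    rw [H.isPseudoRiemannian.covDAlong_riemann H.contDiff]
    have hDK := HasBoostOrderAlong.covD H hA (hK (m + 1))
    exact ((hDK.sub (hDK.relabel _)).sub ((hA m).actOnSlot H ih 0)).sub ((hA m).actOnSlot H ih 1)

end Curvature

section Kundt

variable {n : ℕ} {g : MetricField n} {ℓ : VecField n}

lemma covDAlong_lowerField_apply (g : MetricField n) (ℓ : VecField n) (x : Pt n)
    (idx : Fin 1 → Fin n) :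
    covDAlong (ι := Fin 1) g ℓ (lowerField g ℓ) x idx = ∑ b, ℓ x b * nablaLow g ℓ x b (idx 0) := by
  rw [covDAlong_eq_interiorProd]
  refine Finset.sum_congr rfl fun b _ => congrArg (_ * covD g (lowerField g ℓ) x ·) ?_
  ext m; fin_cases m <;> rfl

lemma isAffinelyParam_iff : IsAffinelyParam g ℓ ↔
    covDAlong (ι := Fin 1) g ℓ (lowerField g ℓ) = 0 := by
  refine ⟨fun h => ?_, fun h x a => ?_⟩
  · ext x idx
    rw [covDAlong_lowerField_apply, h]
    rfl
  · exact (covDAlong_lowerField_apply g ℓ x ![a]).symm.trans (by rw [h]; rfl)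

lemma eval_covD_lowerField_eq_sum (x : Pt n) (X Y : Fin n → ℝ) :
    eval (covD g (lowerField g ℓ) x) ![Y, X] = ∑ a, ∑ b, X a * Y b * nablaLow g ℓ x b a := by
  rw [eval_vecTwo, Finset.sum_comm]
  simp only [nablaLow, Finset.mul_sum, mul_assoc, mul_left_comm]

variable [NeZero n]

lemma bw_eq_sum_weight {k : ℕ} (a : Fin k → Fin n) : bw a = ∑ m, weight (a m) := by
  unfold bw weight
  rw [Finset.card_filter, Finset.card_filter]
  push_cast
  rw [← Finset.sum_sub_distrib]
  refine Finset.sum_congr rfl fun m _ => ?_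
  obtain hm | hm := eq_or_ne (a m) 0
  · simp [hm]
  · have hone : (a m : ℕ) = 1 ↔ a m = 1 := by
      have hlt : 1 < n := by
        have := Fin.val_ne_zero_iff.2 hm
        omega
      rw [Fin.ext_iff, Fin.val_one', Nat.mod_eq_of_lt hlt]
    simp only [Fin.val_eq_zero_iff, hm, hone, if_false, zero_sub]
    split_ifs <;> rfl

lemma NullBackground.boostOrderLE_iff (H : NullBackground g ℓ) {k : ℕ} {b : ℤ}
    {T : TensorField n k} (hT : ContDiff ℝ ∞ T) :
    BoostOrderLE g ℓ T b ↔ HasBoostOrder (ι := Fin k) g ℓ b T := by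
  have hg := H.isPseudoRiemannian
  have hcomp {x : Pt n} (fr : NullFrameAt g x) (a : Fin k → Fin n) :
      frameComp T fr.e x a = eval (T x) (fr.e ∘ a) := (eval_apply _ _).symm
  simp only [BoostOrderLE, bw_eq_sum_weight, hcomp]
  refine ⟨fun h => ⟨hT, fun x => ?_⟩, fun h x fr hfr =>
    (fr.hasBoostOrderAt_iff hfr hg).1 (h.boostOrderAt x)⟩
  obtain ⟨fr, hfr⟩ := H.exists_nullFrameAt x
  exact (fr.hasBoostOrderAt_iff hfr hg).2 (h x fr hfr)

lemma NullBackground.isKundt_and_isAffinelyParam_iff (H : NullBackground g ℓ) :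
    IsKundt g ℓ ∧ IsAffinelyParam g ℓ ↔ HasBoostOrder g ℓ (-1) (covD g (lowerField g ℓ)) := by
  have hg := H.isPseudoRiemannian
  refine ⟨fun ⟨hK, ha⟩ => H.hasBoostOrder_covD_lowerField (fun x fr hfr i => ?_)
    fun x fr hfr i j hi hj => ?_, fun hA => ?_⟩
  · rw [hfr]
    refine (eval_covDAlong ℓ (lowerField g ℓ) x ![fr.e i]).symm.trans ?_
    rw [isAffinelyParam_iff.1 ha, Pi.zero_apply, map_zero, zero_apply]
  · rw [eval_covD_lowerField_eq_sum]
    have horth {i : Fin n} (hi : weight i = 0) : gdot g x (fr.e i) (ℓ x) = 0 :=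
      (fr.hasBoostWeightGE hfr hg i).1 hi.ge
    exact hK.2.2 x _ _ (horth hj) (horth hi)
  · have ha : IsAffinelyParam g ℓ := isAffinelyParam_iff.2 (H.covDAlong_lowerField_eq_zero hA)
    have horth {x : Pt n} {X : Fin n → ℝ} (hX : gdot g x X (ℓ x) = 0) :
        HasBoostWeightGE g ℓ x 0 X := ⟨fun _ => hX, by norm_num, by norm_num⟩
    refine ⟨⟨H.null, fun x => ⟨0, fun a => by rw [ha, zero_mul]⟩, fun x X Y hX hY => ?_⟩, ha⟩
    rw [← eval_covD_lowerField_eq_sum]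
    exact hA.boostOrderAt x _ 0 (Fin.forall_fin_two.2 ⟨horth hY, horth hX⟩) (by simp)

end Kundt

/-- the `p = 1` case of the VSI theorem: a (nowhere vanishing,
smooth) vector field `ℓ` is VSI iff `ℓ` is a Kundt null vector field which is affinely
parameterized, and `g` is a degenerate Kundt metric with respect to `ℓ`. -/
theorem vsi_vector_field_iff {n : ℕ} [NeZero n]
    (g : MetricField n) (hg : IsLorentzMetric g)
    (ℓ : VecField n) (hsm : IsSmoothVec ℓ) (h0 : ∀ x, ℓ x ≠ 0) :
    IsVSI g (lowerField g ℓ) ↔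
      (IsKundt g ℓ ∧ IsAffinelyParam g ℓ ∧ IsDegenerateKundt g ℓ) := by
  have hpr := hg.isPseudoRiemannian
  have hsmooth (I : ℕ) := hpr.contDiff_covDIter hpr.contDiff_riemann I
  constructor
  · intro hV
    have H : NullBackground g ℓ := ⟨hg, hsm, h0, hV.gdot_self_eq_zero hpr⟩
    obtain ⟨hK, ha⟩ := H.isKundt_and_isAffinelyParam_iff.2 (hV.hasBoostOrder_covD_lowerField H)
    have hA := hV.hasBoostOrderAlong_covD_lowerField H
    refine ⟨hK, ha, hK, fun I => (H.boostOrderLE_iff (hsmooth I)).2 ?_⟩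
    exact HasBoostOrderAlong.covDIter H hA (H.hasBoostOrderAlong_riemann hA) I 0
  · rintro ⟨hK, ha, -, hR⟩
    have H : NullBackground g ℓ := ⟨hg, hK.1⟩
    have hA := H.isKundt_and_isAffinelyParam_iff.1 ⟨hK, ha⟩
    exact H.isVSI (H.hasBoostOrder_covDIter_lowerField hA fun I =>
      (H.boostOrderLE_iff (hsmooth I)).1 (hR I))

end VSI
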